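/- arXiv:2005.13627 — 4 statements merged into one kernel-verified Lean document; each statement's English description precedes it below -/
import Mathlib

section
/- Let n≥1, m≥1 be integers, 0<γ<1, and 1 < p < 1/γ. Let v : ℝ × ℝ^n → ℝ be a bounded classical solution of v_t + (-Δ)^m v = ∫_{-∞}^t (t-s)^{-γ} |v(s,·)|^p ds on ℝ × ℝ^n. Then v ≡ 0. -/
/-!
Test the equation against a fixed cut-off `φ ≥ 0` supported in a small ball, a high power of a bump
function, so that `|Δ^m φ| ≤ C φ^{1/p}`. With `V(t) = ∫ v φ` and `f(t) = ∫ |v|^p φ`, Young's inequality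
gives `V' ≥ ∫_{-∞}^t (t - s)^{-γ} f(s) ds - l f - C l^{-1/(p-1)}` for every `l > 0`, and `V` is bounded.
The kernel dominates `ε^γ e^{-ε(t-s)}` (`exp_le_kernel`). For `H(t) = ∫_{T₀}^t e^{-ε(t-s)} f(s) ds` one
has `f = H' + ε H`, so with `l = ε^{γ-1} / 2` the function `V + l H` satisfies
`(V + l H)' ≥ ε l H - C l^{-1/(p-1)}`. Being bounded, it cannot grow exponentially, hence
`H ≤ C (ε^{1-γ} + ε^{(1-γ)/(p-1) - γ})`. Since `γ p < 1`, letting `ε → 0` gives `f = 0`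
(`scalar_liouville`).

The delicate point is that `V` is differentiable with the expected derivative. The solution is only
`C¹` in `t` for fixed `x` and `C^{2m}` in `x` for fixed `t`; neither `v_t` nor `(-Δ)^m v` is assumed to
be locally bounded, or jointly continuous, in `(t, x)`. Three ingredients settle this.

* The memory term is lower semicontinuous in `x`, so by Baire's theorem every open set contains a ball
  on which it is bounded, locally uniformly in time (`GlobSol.exists_locSol`). As `v(t, ·)` is
  continuous, it suffices to show that `v` vanishes at the centres of such balls.
* If the weak equation holds on a time interval `(a, b)`, then `v(b) - v(a)` is `O(b - a)` in `L¹_loc`,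
  with a constant depending only on bounds for `v`, for the source, and for `(-Δ)^m v` at the single
  time `a` (`gap_estimate`, `LocSol.gap_bound`). This comes from Plancherel's theorem, Duhamel's
  formula for the Fourier transform of `χ (v - v(a))`, and the fact that the commutator of
  `(-Δ)^m` with a cut-off has order `2m - 1`, which improves the decay rate step by step.
* Let `E` be the closed set of times near which the weak equation fails. The function `(-Δ)^m v(t)` is
  bounded on the ball at each time `t`, so by Baire's theorem on `E` it is bounded uniformly for `t` in
  a nonempty relatively open part of `E`. There, Fubini's theorem applies on `E`, and the increments
  over the gaps of `E` are summable in `L¹` by the previous point; so the weak equation holds across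
  this part of `E`, and `E` is empty (`LocSol.increment`, `LocSol.hasDerivAt`).
-/

open MeasureTheory Real

/-- Partial derivative in the `i`-th coordinate direction on `ℝⁿ`. -/
noncomputable def pderivE (n : ℕ) (i : Fin n)
    (f : EuclideanSpace ℝ (Fin n) → ℝ) : EuclideanSpace ℝ (Fin n) → ℝ :=
  fun x => fderiv ℝ f x (EuclideanSpace.single i 1)

/-- The Laplacian `Δ f = Σᵢ ∂²f/∂xᵢ²` on `ℝⁿ`. -/
noncomputable def lapE (n : ℕ) (f : EuclideanSpace ℝ (Fin n) → ℝ) :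
    EuclideanSpace ℝ (Fin n) → ℝ :=
  fun x => ∑ i : Fin n, pderivE n i (pderivE n i f) x

/-- The operator `(-Δ)^m = (-1)^m Δ^m` on functions on `ℝⁿ`. -/
noncomputable def negLapPow (n m : ℕ) (f : EuclideanSpace ℝ (Fin n) → ℝ) :
    EuclideanSpace ℝ (Fin n) → ℝ :=
  fun x => (-1 : ℝ) ^ m * ((lapE n)^[m] f) x

section auxiliary
open Set
open scoped FourierTransform ENNReal SchwartzMap ContDiff Topology

/-! ### Plancherel's theorem -/

/-- The Fourier transform of Mathlib on `L²` agrees with the integral one on `L¹ ∩ L²`, because the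
two have the same pairing with every test function. -/
theorem fourierL2_ae_eq {n : ℕ} (g : EuclideanSpace ℝ (Fin n) → ℂ)
    (h1 : Integrable g) (h2 : MemLp g 2) :
    (𝓕 (h2.toLp g) : Lp (α := EuclideanSpace ℝ (Fin n)) ℂ 2) =ᵐ[volume] 𝓕 g := by
  have hcont : Continuous (𝓕 g) :=
    VectorFourier.fourierIntegral_continuous Real.continuous_fourierChar
      (innerSL ℝ).continuous₂ h1
  refine ae_eq_of_integral_contDiff_smul_eq
    ((Lp.memLp _).locallyIntegrable (by norm_num)) hcont.locallyIntegrable ?_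
  intro ψ hψ hψc
  have hψ' : ContDiff ℝ (⊤ : ℕ∞) (fun x => (ψ x : ℂ)) := Complex.ofRealCLM.contDiff.comp hψ
  have hψc' : HasCompactSupport (fun x => (ψ x : ℂ)) := hψc.comp_left (g := fun r : ℝ => (r : ℂ)) (by simp)
  set Ψ : 𝓢(EuclideanSpace ℝ (Fin n), ℂ) := hψc'.toSchwartzMap hψ' with hΨ
  have hΨx : ∀ x, Ψ x = (ψ x : ℂ) := fun x => rfl
  have key := congrArg (fun T => T Ψ) (Lp.fourier_toTemperedDistribution_eq (h2.toLp g))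
  simp only [TemperedDistribution.fourier_apply, Lp.toTemperedDistribution_apply] at key
  have e1 : ∀ x (c : ℂ), ψ x • c = Ψ x • c := fun x c => by rw [hΨx]; simp
  simp only [e1]
  rw [← key]
  have e2 : ∫ x, (𝓕 Ψ) x • (h2.toLp g : EuclideanSpace ℝ (Fin n) → ℂ) x = ∫ x, (𝓕 Ψ) x • g x := by
    apply integral_congr_ae
    filter_upwards [h2.coeFn_toLp] with x hx
    rw [hx]
  rw [e2]
  have := VectorFourier.integral_fourierIntegral_smul_eq_flip (L := innerₗ (EuclideanSpace ℝ (Fin n)))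
    (e := 𝐞) (μ := volume) (ν := volume) Real.continuous_fourierChar continuous_inner Ψ.integrable h1
  rw [SchwartzMap.fourier_coe]
  simpa using! this

/-- Plancherel's theorem for the integral Fourier transform on `L¹ ∩ L²`. -/
theorem plancherel_lintegral {n : ℕ} (g : EuclideanSpace ℝ (Fin n) → ℂ)
    (h1 : Integrable g) (h2 : MemLp g 2) :
    ∫⁻ ξ, ‖𝓕 g ξ‖ₑ ^ 2 = ∫⁻ x, ‖g x‖ₑ ^ 2 := by
  have hn : eLpNorm (𝓕 g) 2 volume = eLpNorm g 2 volume := by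
    have h := Lp.norm_fourier_eq (h2.toLp g)
    rw [Lp.norm_def, Lp.norm_def, ENNReal.toReal_eq_toReal_iff' (Lp.eLpNorm_ne_top _)
      (Lp.eLpNorm_ne_top _), eLpNorm_congr_ae (fourierL2_ae_eq g h1 h2),
      eLpNorm_congr_ae h2.coeFn_toLp] at h
    exact h
  have h3 := eLpNorm_nnreal_pow_eq_lintegral (f := 𝓕 g) (μ := volume) (p := 2) (by norm_num)
  have h4 := eLpNorm_nnreal_pow_eq_lintegral (f := g) (μ := volume) (p := 2) (by norm_num)
  simp only [NNReal.coe_ofNat, ENNReal.rpow_ofNat, ENNReal.coe_ofNat] at h3 h4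
  rw [← h3, ← h4, hn]

/-! ### Test functions and integration by parts -/

/-- Partial derivative in the `i`-th coordinate direction of a complex-valued function. -/
noncomputable def pdC {n : ℕ} (i : Fin n) (f : EuclideanSpace ℝ (Fin n) → ℂ) :
    EuclideanSpace ℝ (Fin n) → ℂ :=
  fun x => fderiv ℝ f x (EuclideanSpace.single i 1)

/-- The Laplacian of a complex-valued function. -/
noncomputable def lapC {n : ℕ} (f : EuclideanSpace ℝ (Fin n) → ℂ) :
    EuclideanSpace ℝ (Fin n) → ℂ :=
  fun x => ∑ i : Fin n, pdC i (pdC i f) x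

/-- Complex-valued test functions on the open set `U`: smooth, with compact support inside `U`. -/
structure IsTest {n : ℕ} (U : Set (EuclideanSpace ℝ (Fin n)))
    (φ : EuclideanSpace ℝ (Fin n) → ℂ) : Prop where
  smooth : ContDiff ℝ ∞ φ
  compact : HasCompactSupport φ
  sub : tsupport φ ⊆ U

section tests
variable {n : ℕ} {U : Set (EuclideanSpace ℝ (Fin n))} {φ ψ : EuclideanSpace ℝ (Fin n) → ℂ}

theorem contDiff_pdC (hφ : ContDiff ℝ ∞ φ) (i : Fin n) : ContDiff ℝ ∞ (pdC i φ) := by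
  unfold pdC
  exact (hφ.fderiv_right (m := ∞) (by simp)).clm_apply contDiff_const

theorem contDiff_lapC (hφ : ContDiff ℝ ∞ φ) : ContDiff ℝ ∞ (lapC φ) := by
  unfold lapC
  exact ContDiff.sum fun i _ => contDiff_pdC (contDiff_pdC hφ i) i

theorem IsTest.of_subset (hφ : IsTest U φ) (hψ : ContDiff ℝ ∞ ψ) (h : tsupport ψ ⊆ tsupport φ) :
    IsTest U ψ :=
  ⟨hψ, hφ.compact.of_isClosed_subset (isClosed_tsupport _) h, h.trans hφ.sub⟩

theorem tsupport_pdC_subset (i : Fin n) : tsupport (pdC i φ) ⊆ tsupport φ :=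
  (closure_mono (fun x hx => by
    intro h
    exact hx (by simp [pdC, h]))).trans (tsupport_fderiv_subset ℝ (f := φ))

theorem IsTest.pdC (hφ : IsTest U φ) (i : Fin n) : IsTest U (pdC i φ) :=
  hφ.of_subset (contDiff_pdC hφ.smooth i) (tsupport_pdC_subset i)

theorem IsTest.mul_right (hφ : IsTest U φ) (hψ : ContDiff ℝ ∞ ψ) :
    IsTest U (fun x => φ x * ψ x) :=
  hφ.of_subset (hφ.smooth.mul hψ) (tsupport_mul_subset_left)

theorem IsTest.const_mul (hφ : IsTest U φ) (c : ℂ) : IsTest U (fun x => c * φ x) :=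
  hφ.of_subset (contDiff_const.mul hφ.smooth) (tsupport_mul_subset_right)

theorem IsTest.zero : IsTest U (fun _ => (0 : ℂ)) :=
  ⟨contDiff_const, HasCompactSupport.zero, by simp [tsupport]⟩

theorem IsTest.add (hφ : IsTest U φ) (hψ : IsTest U ψ) : IsTest U (fun x => φ x + ψ x) := by
  refine ⟨hφ.smooth.add hψ.smooth, hφ.compact.add hψ.compact, ?_⟩
  exact (tsupport_add φ ψ).trans (Set.union_subset hφ.sub hψ.sub)

theorem IsTest.lapC (hφ : IsTest U φ) : IsTest U (lapC φ) := by
  unfold _root_.lapC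
  have : ∀ s : Finset (Fin n), IsTest U (fun x => ∑ i ∈ s, _root_.pdC i (_root_.pdC i φ) x) := by
    intro s
    induction s using Finset.induction_on with
    | empty => simpa using IsTest.zero
    | insert a s ha ih =>
      simp only [Finset.sum_insert ha]
      exact ((hφ.pdC a).pdC a).add ih
  exact this _

theorem IsTest.lapC_iter (hφ : IsTest U φ) (m : ℕ) : IsTest U (_root_.lapC^[m] φ) := by
  induction m with
  | zero => exact hφ
  | succ m ih => rw [Function.iterate_succ_apply']; exact ih.lapC

theorem pdC_add (hφ : ContDiff ℝ ∞ φ) (hψ : ContDiff ℝ ∞ ψ) (i : Fin n) :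
    pdC i (fun x => φ x + ψ x) = fun x => pdC i φ x + pdC i ψ x := by
  funext x
  simp [pdC, fderiv_fun_add (hφ.differentiable (by simp) x) (hψ.differentiable (by simp) x)]

theorem pdC_const_mul (hφ : ContDiff ℝ ∞ φ) (c : ℂ) (i : Fin n) :
    pdC i (fun x => c * φ x) = fun x => c * pdC i φ x := by
  funext x
  simp [pdC, fderiv_const_mul (hφ.differentiable (by simp) x)]

theorem pdC_mul (hφ : ContDiff ℝ ∞ φ) (hψ : ContDiff ℝ ∞ ψ) (i : Fin n) :
    pdC i (fun x => φ x * ψ x) = fun x => φ x * pdC i ψ x + pdC i φ x * ψ x := by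
  funext x
  simp [pdC, fderiv_fun_mul (hφ.differentiable (by simp) x) (hψ.differentiable (by simp) x)]
  ring

theorem lapC_add (hφ : ContDiff ℝ ∞ φ) (hψ : ContDiff ℝ ∞ ψ) :
    lapC (fun x => φ x + ψ x) = fun x => lapC φ x + lapC ψ x := by
  funext x
  simp only [lapC, pdC_add hφ hψ, pdC_add (contDiff_pdC hφ _) (contDiff_pdC hψ _),
    Finset.sum_add_distrib]

theorem lapC_const_mul (hφ : ContDiff ℝ ∞ φ) (c : ℂ) :
    lapC (fun x => c * φ x) = fun x => c * lapC φ x := by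
  funext x
  simp only [lapC, pdC_const_mul hφ, pdC_const_mul (contDiff_pdC hφ _), Finset.mul_sum]

theorem IsTest.integrable_mul (hφ : IsTest U φ) {f : EuclideanSpace ℝ (Fin n) → ℝ}
    (hf : Continuous f) : Integrable (fun x => (f x : ℂ) * φ x) :=
  (Continuous.mul (by fun_prop) hφ.smooth.continuous).integrable_of_hasCompactSupport
    hφ.compact.mul_left

/-- One integration by parts against a test function. -/
theorem integral_pderivE_mul (hφ : IsTest U φ) {f : EuclideanSpace ℝ (Fin n) → ℝ}
    (hf : ContDiff ℝ 1 f) (i : Fin n) :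
    ∫ x, (pderivE n i f x : ℂ) * φ x = -∫ x, (f x : ℂ) * pdC i φ x := by
  have hd : Continuous (pderivE n i f) := by
    unfold pderivE
    exact (hf.continuous_fderiv (by simp)).clm_apply continuous_const
  have h := integral_smul_fderiv_eq_neg_fderiv_smul_of_integrable (μ := volume) (f := f) (g := φ)
    (v := EuclideanSpace.single i (1 : ℝ))
    (by simpa [pderivE] using hφ.integrable_mul hd)
    (by simpa [pdC] using (hφ.pdC i).integrable_mul hf.continuous)
    (by simpa using hφ.integrable_mul hf.continuous)
    (fun x _ => hf.differentiable (by simp) x)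
    (fun x _ => hφ.smooth.differentiable (by simp) x)
  simp only [Complex.real_smul] at h
  simp only [pderivE, pdC]
  rw [h, neg_neg]

theorem contDiff_pderivE {k : ℕ} {f : EuclideanSpace ℝ (Fin n) → ℝ} (hf : ContDiff ℝ (k + 1 : ℕ) f)
    (i : Fin n) : ContDiff ℝ k (pderivE n i f) := by
  unfold pderivE
  exact (hf.fderiv_right (m := k) (by simp)).clm_apply contDiff_const

theorem contDiff_lapE {k : ℕ} {f : EuclideanSpace ℝ (Fin n) → ℝ} (hf : ContDiff ℝ (k + 2 : ℕ) f) :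
    ContDiff ℝ k (lapE n f) := by
  unfold lapE
  exact ContDiff.sum fun i _ => contDiff_pderivE (contDiff_pderivE (k := k + 1) hf i) i

theorem integral_lapE_mul (hφ : IsTest U φ) {f : EuclideanSpace ℝ (Fin n) → ℝ}
    (hf : ContDiff ℝ 2 f) :
    ∫ x, (lapE n f x : ℂ) * φ x = ∫ x, (f x : ℂ) * lapC φ x := by
  have hf1 : ContDiff ℝ 1 f := hf.of_le (by norm_num)
  have hp : ∀ i, ContDiff ℝ 1 (pderivE n i f) := fun i =>
    contDiff_pderivE (k := 1) (by exact_mod_cast hf) i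
  have hpp : ∀ i, Continuous (pderivE n i (pderivE n i f)) := fun i =>
    (contDiff_pderivE (k := 0) (by exact_mod_cast hp i) i).continuous
  simp only [lapE, lapC, Complex.ofReal_sum, Finset.sum_mul, Finset.mul_sum]
  rw [integral_finsetSum _ fun i _ => hφ.integrable_mul (hpp i),
    integral_finsetSum _ fun i _ => ((hφ.pdC i).pdC i).integrable_mul hf.continuous]
  refine Finset.sum_congr rfl fun i _ => ?_
  rw [integral_pderivE_mul hφ (hp i), integral_pderivE_mul (hφ.pdC i) hf1, neg_neg]

theorem integral_lapE_iter_mul (m : ℕ) (hφ : IsTest U φ) {f : EuclideanSpace ℝ (Fin n) → ℝ}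
    (hf : ContDiff ℝ (2 * m : ℕ) f) :
    ∫ x, ((lapE n)^[m] f x : ℂ) * φ x = ∫ x, (f x : ℂ) * lapC^[m] φ x := by
  induction m generalizing f with
  | zero => rfl
  | succ m ih =>
    rw [Function.iterate_succ_apply, ih (contDiff_lapE (by simpa [mul_add] using hf)),
      Function.iterate_succ_apply', integral_lapE_mul (hφ.lapC_iter m)]
    exact hf.of_le (by exact_mod_cast (by omega))

theorem continuous_lapE_iter (m : ℕ) {f : EuclideanSpace ℝ (Fin n) → ℝ}
    (hf : ContDiff ℝ (2 * m : ℕ) f) : Continuous ((lapE n)^[m] f) := by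
  induction m generalizing f with
  | zero => exact hf.continuous
  | succ m ih =>
    rw [Function.iterate_succ_apply]
    exact ih (contDiff_lapE (by simpa [mul_add] using hf))

end tests

/-! ### Symbols and the commutator with a cut-off -/

section expo
variable {n : ℕ} {U : Set (EuclideanSpace ℝ (Fin n))}

/-- The character `x ↦ exp (-2πi⟨x, ξ⟩)` of the Fourier transform. -/
noncomputable def fchar (ξ x : EuclideanSpace ℝ (Fin n)) : ℂ :=
  Complex.exp (((-(2 * π) * inner ℝ ξ x : ℝ) : ℂ) * Complex.I)

theorem fourier_eq_fchar (g : EuclideanSpace ℝ (Fin n) → ℂ) (ξ : EuclideanSpace ℝ (Fin n)) :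
    𝓕 g ξ = ∫ x, g x * fchar ξ x := by
  rw [Real.fourier_eq]
  refine integral_congr_ae (Filter.Eventually.of_forall fun x => ?_)
  simp only [Circle.smul_def, Real.fourierChar_apply, fchar, smul_eq_mul, real_inner_comm x ξ]
  rw [mul_comm]
  congr 3
  push_cast
  ring

theorem norm_fchar (ξ x : EuclideanSpace ℝ (Fin n)) : ‖fchar ξ x‖ = 1 := by
  rw [fchar, Complex.norm_exp_ofReal_mul_I]

theorem contDiff_fchar (ξ : EuclideanSpace ℝ (Fin n)) : ContDiff ℝ ∞ (fchar ξ) := by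
  unfold fchar
  apply ContDiff.cexp
  apply ContDiff.mul _ contDiff_const
  exact Complex.ofRealCLM.contDiff.comp (contDiff_const.mul (contDiff_const.inner ℝ contDiff_id))

/-- The symbol of `∂ᵢ` on `fchar ξ`. -/
noncomputable def symb (i : Fin n) (ξ : EuclideanSpace ℝ (Fin n)) : ℂ :=
  ((-(2 * π) * ξ i : ℝ) : ℂ) * Complex.I

theorem pdC_fchar (ξ : EuclideanSpace ℝ (Fin n)) (i : Fin n) :
    pdC i (fchar ξ) = fun x => symb i ξ * fchar ξ x := by
  funext x
  have h1 : HasFDerivAt (fun x : EuclideanSpace ℝ (Fin n) => -(2 * π) * inner ℝ ξ x)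
      ((-(2 * π)) • innerSL ℝ ξ) x := by
    exact ((innerSL ℝ ξ).hasFDerivAt (x := x)).const_mul (-(2 * π))
  have h2 := Complex.ofRealCLM.hasFDerivAt.comp x h1
  have h3 := (h2.mul_const Complex.I).cexp
  have h4 : fderiv ℝ (fchar ξ) x = _ := h3.fderiv
  simp only [pdC, h4]
  simp [symb, fchar, EuclideanSpace.inner_single_right]
  ring

theorem sum_symb_sq (ξ : EuclideanSpace ℝ (Fin n)) :
    ∑ i, symb i ξ ^ 2 = -(((2 * π * ‖ξ‖) ^ 2 : ℝ) : ℂ) := by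
  have : ∀ i, symb i ξ ^ 2 = -(((2 * π) ^ 2 * (ξ i) ^ 2 : ℝ) : ℂ) := by
    intro i
    simp only [symb, mul_pow, Complex.I_sq]
    push_cast
    ring
  simp only [this, Finset.sum_neg_distrib, ← Complex.ofReal_sum, ← Finset.mul_sum, mul_pow,
    EuclideanSpace.norm_sq_eq, Real.norm_eq_abs, sq_abs]

theorem norm_symb_le (i : Fin n) (ξ : EuclideanSpace ℝ (Fin n)) :
    ‖symb i ξ‖ ≤ 2 * π * (1 + ‖ξ‖) := by
  have h := PiLp.norm_apply_le ξ i
  rw [symb, norm_mul, Complex.norm_I, mul_one, Complex.norm_real, norm_mul, norm_neg]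
  have : ‖2 * π‖ = 2 * π := by rw [Real.norm_eq_abs, abs_of_pos (by positivity)]
  rw [this]
  gcongr
  linarith

theorem lapC_mul_fchar {χ : EuclideanSpace ℝ (Fin n) → ℂ} (hχ : ContDiff ℝ ∞ χ)
    (ξ : EuclideanSpace ℝ (Fin n)) :
    lapC (fun x => χ x * fchar ξ x) = fun x =>
      (lapC χ x * fchar ξ x + ∑ i, 2 * symb i ξ * pdC i χ x * fchar ξ x)
        + -(((2 * π * ‖ξ‖) ^ 2 : ℝ) : ℂ) * χ x * fchar ξ x := by
  funext x
  have h1 : ∀ i, pdC i (fun x => χ x * fchar ξ x) =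
      fun x => (symb i ξ * χ x + pdC i χ x) * fchar ξ x := by
    intro i
    rw [pdC_mul hχ (contDiff_fchar ξ), pdC_fchar]
    funext x
    ring
  have h2 : ∀ i, pdC i (pdC i (fun x => χ x * fchar ξ x)) x =
      pdC i (pdC i χ) x * fchar ξ x + 2 * symb i ξ * pdC i χ x * fchar ξ x +
        symb i ξ ^ 2 * χ x * fchar ξ x := by
    intro i
    have hs : ContDiff ℝ ∞ (fun x => symb i ξ * χ x) := contDiff_const.mul hχ
    rw [h1, pdC_mul (hs.add (contDiff_pdC hχ i)) (contDiff_fchar ξ), pdC_fchar,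
      pdC_add hs (contDiff_pdC hχ i), pdC_const_mul hχ]
    ring
  rw [← sum_symb_sq]
  simp only [lapC, h2, Finset.sum_add_distrib, Finset.sum_mul]

/-- Families `G ξ` of test functions which are finite sums of terms `P ξ * χ x * fchar ξ x` with
`χ` a test function on `U` and `P` of growth at most `(1 + ‖ξ‖) ^ d`. -/
inductive Symb (U : Set (EuclideanSpace ℝ (Fin n))) (d : ℕ) :
    (EuclideanSpace ℝ (Fin n) → EuclideanSpace ℝ (Fin n) → ℂ) → Prop
  | basis (P χ : EuclideanSpace ℝ (Fin n) → ℂ) (C : ℝ) (hP : ∀ ξ, ‖P ξ‖ ≤ C * (1 + ‖ξ‖) ^ d)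
      (hχ : IsTest U χ) : Symb U d (fun ξ x => P ξ * (χ x * fchar ξ x))
  | add (G H : EuclideanSpace ℝ (Fin n) → EuclideanSpace ℝ (Fin n) → ℂ) :
      Symb U d G → Symb U d H → Symb U d (fun ξ x => G ξ x + H ξ x)

theorem Symb.zero {d : ℕ} : Symb U d (fun _ _ => 0) := by
  simpa using Symb.basis (U := U) (d := d) (fun _ => 0) (fun _ => 0) 0 (by simp) IsTest.zero

theorem Symb.sum {d : ℕ} {ι : Type*} (s : Finset ι)
    {G : ι → EuclideanSpace ℝ (Fin n) → EuclideanSpace ℝ (Fin n) → ℂ}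
    (h : ∀ i, Symb U d (G i)) : Symb U d (fun ξ x => ∑ i ∈ s, G i ξ x) := by
  classical
  induction s using Finset.induction_on with
  | empty => simpa using Symb.zero
  | insert a s ha ih =>
    simp only [Finset.sum_insert ha]
    exact Symb.add _ _ (h a) ih

theorem Symb.smooth {d : ℕ} {G : EuclideanSpace ℝ (Fin n) → EuclideanSpace ℝ (Fin n) → ℂ}
    (h : Symb U d G) (ξ : EuclideanSpace ℝ (Fin n)) : IsTest U (G ξ) := by
  induction h with
  | basis P χ C hP hχ => exact (hχ.mul_right (contDiff_fchar ξ)).const_mul _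
  | add G H _ _ h1 h2 => exact h1.add h2

theorem Symb.mul {d e : ℕ} {G : EuclideanSpace ℝ (Fin n) → EuclideanSpace ℝ (Fin n) → ℂ}
    (h : Symb U d G) (Q : EuclideanSpace ℝ (Fin n) → ℂ) (D : ℝ)
    (hQ : ∀ ξ, ‖Q ξ‖ ≤ D * (1 + ‖ξ‖) ^ e) : Symb U (d + e) (fun ξ x => Q ξ * G ξ x) := by
  induction h with
  | basis P χ C hP hχ =>
    simp only [← mul_assoc (Q _)]
    refine Symb.basis (fun ξ => Q ξ * P ξ) χ (D * C) (fun ξ => ?_) hχ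
    rw [norm_mul]
    calc ‖Q ξ‖ * ‖P ξ‖ ≤ (D * (1 + ‖ξ‖) ^ e) * (C * (1 + ‖ξ‖) ^ d) :=
          mul_le_mul (hQ ξ) (hP ξ) (norm_nonneg _) ((norm_nonneg _).trans (hQ ξ))
      _ = _ := by ring
  | add G H _ _ h1 h2 =>
    simp only [mul_add]
    exact Symb.add _ _ h1 h2

theorem Symb.mono {d : ℕ} (e : ℕ) {G : EuclideanSpace ℝ (Fin n) → EuclideanSpace ℝ (Fin n) → ℂ}
    (h : Symb U d G) : Symb U (d + e) G := by
  have := h.mul (e := e) (fun _ => 1) 1 (fun ξ => by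
    simpa using one_le_pow₀ (by linarith [norm_nonneg ξ]))
  simpa using this

theorem norm_two_pi_sq_le (ξ : EuclideanSpace ℝ (Fin n)) (k : ℕ) :
    ‖(-(((2 * π * ‖ξ‖) ^ 2 : ℝ) : ℂ)) ^ k‖ ≤ (2 * π) ^ (2 * k) * (1 + ‖ξ‖) ^ (2 * k) := by
  rw [norm_pow, norm_neg, Complex.norm_real, Real.norm_eq_abs, abs_of_nonneg (by positivity),
    ← pow_mul, mul_pow]
  gcongr
  linarith

/-- `Δ + |2πξ|²` raises the order of a symbol by one only: the leading term cancels. -/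
theorem Symb.comm {d : ℕ} {G : EuclideanSpace ℝ (Fin n) → EuclideanSpace ℝ (Fin n) → ℂ}
    (h : Symb U d G) :
    Symb U (d + 1) (fun ξ x => lapC (G ξ) x - -(((2 * π * ‖ξ‖) ^ 2 : ℝ) : ℂ) * G ξ x) := by
  induction h with
  | basis P χ C hP hχ =>
    have e1 : ∀ ξ x, lapC (fun x => P ξ * (χ x * fchar ξ x)) x
        - -(((2 * π * ‖ξ‖) ^ 2 : ℝ) : ℂ) * (P ξ * (χ x * fchar ξ x))
        = P ξ * (lapC χ x * fchar ξ x) +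
          ∑ i, 2 * symb i ξ * (P ξ * (pdC i χ x * fchar ξ x)) := by
      intro ξ x
      have := lapC_const_mul (hχ.mul_right (contDiff_fchar ξ)).smooth (P ξ)
      rw [this, lapC_mul_fchar hχ.smooth]
      simp only [mul_add, Finset.mul_sum]
      rw [add_assoc, add_sub_assoc]
      congr 1
      rw [add_sub_assoc]
      have : ∀ a b : ℂ, b = 0 → a + b = a := fun a b h => by rw [h, add_zero]
      rw [this _ _ (by ring)]
      refine Finset.sum_congr rfl fun i _ => by ring
    simp only [e1]
    refine Symb.add _ _ ((Symb.basis P (lapC χ) C hP hχ.lapC).mono 1) (Symb.sum _ fun i => ?_)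
    refine (Symb.basis P (pdC i χ) C hP (hχ.pdC i)).mul (e := 1) (fun ξ => 2 * symb i ξ)
      (2 * (2 * π)) (fun ξ => ?_)
    rw [norm_mul, pow_one, mul_assoc 2 (2 * π)]
    have := norm_symb_le i ξ
    simpa using this
  | add G H hG hH h1 h2 =>
    have e1 : ∀ ξ x, lapC (fun x => G ξ x + H ξ x) x
        - -(((2 * π * ‖ξ‖) ^ 2 : ℝ) : ℂ) * (G ξ x + H ξ x)
        = (lapC (G ξ) x - -(((2 * π * ‖ξ‖) ^ 2 : ℝ) : ℂ) * G ξ x) +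
          (lapC (H ξ) x - -(((2 * π * ‖ξ‖) ^ 2 : ℝ) : ℂ) * H ξ x) := by
      intro ξ x
      rw [lapC_add (hG.smooth ξ).smooth (hH.smooth ξ).smooth]
      ring
    simp only [e1]
    exact Symb.add _ _ h1 h2

theorem Symb.lap {d : ℕ} {G : EuclideanSpace ℝ (Fin n) → EuclideanSpace ℝ (Fin n) → ℂ}
    (h : Symb U d G) : Symb U (d + 2) (fun ξ x => lapC (G ξ) x) := by
  have h1 := h.comm.mono 1
  have h2 := h.mul (e := 2) (fun ξ => -(((2 * π * ‖ξ‖) ^ 2 : ℝ) : ℂ)) ((2 * π) ^ 2)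
    (fun ξ => by simpa using norm_two_pi_sq_le ξ 1)
  have := Symb.add _ _ h1 h2
  simpa using this

/-- The commutator of `Δ^(m+1)` with multiplication by a test function has order `2m + 1`. -/
theorem Symb.commutator {χ : EuclideanSpace ℝ (Fin n) → ℂ} (hχ : IsTest U χ) (m : ℕ) :
    Symb U (2 * m + 1) (fun ξ x => lapC^[m + 1] (fun x => χ x * fchar ξ x) x
      - (-(((2 * π * ‖ξ‖) ^ 2 : ℝ) : ℂ)) ^ (m + 1) * (χ x * fchar ξ x)) := by
  have h0 : Symb U 0 (fun ξ x => χ x * fchar ξ x) := by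
    simpa using Symb.basis (U := U) (d := 0) (fun _ => 1) χ 1 (by simp) hχ
  induction m with
  | zero => simpa using h0.comm
  | succ m ih =>
    have h1 := ih.lap
    have h2 := h0.comm.mul (e := 2 * (m + 1))
      (fun ξ => (-(((2 * π * ‖ξ‖) ^ 2 : ℝ) : ℂ)) ^ (m + 1)) _ (fun ξ => norm_two_pi_sq_le ξ (m + 1))
    have h3 := Symb.add _ _ h1 (by
      rw [show 2 * m + 1 + 2 = 0 + 1 + 2 * (m + 1) by ring]; exact h2)
    rw [show 2 * (m + 1) + 1 = 2 * m + 1 + 2 by ring]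
    convert h3 using 3 with ξ x
    have ht := hχ.mul_right (contDiff_fchar ξ)
    have e : (fun x => lapC^[m + 1] (fun x => χ x * fchar ξ x) x
        - (-(((2 * π * ‖ξ‖) ^ 2 : ℝ) : ℂ)) ^ (m + 1) * (χ x * fchar ξ x)) =
        fun x => lapC^[m + 1] (fun x => χ x * fchar ξ x) x
        + (-(-(((2 * π * ‖ξ‖) ^ 2 : ℝ) : ℂ)) ^ (m + 1)) * (χ x * fchar ξ x) := by
      funext x; ring
    rw [e, lapC_add (ht.lapC_iter _).smooth (ht.const_mul _).smooth, lapC_const_mul ht.smooth,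
      Function.iterate_succ_apply' _ (m + 1)]
    ring
end expo

/-! ### Integral inequalities -/

theorem lintegral_add_sq_le {X : Type*} [MeasurableSpace X] {μ : Measure X} {Φ Ψ : X → ℝ≥0∞}
    (h1 : Measurable Φ) (h2 : Measurable Ψ) :
    ∫⁻ x, (Φ x + Ψ x) ^ 2 ∂μ ≤ (2 * ∫⁻ x, Φ x ^ 2 ∂μ) + 2 * ∫⁻ x, Ψ x ^ 2 ∂μ := by
  calc ∫⁻ ξ, (Φ ξ + Ψ ξ) ^ 2 ∂μ ≤ ∫⁻ ξ, (2 * Φ ξ ^ 2 + 2 * Ψ ξ ^ 2) ∂μ := by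
        refine lintegral_mono fun ξ => ?_
        have := ENNReal.rpow_add_le_mul_rpow_add_rpow (Φ ξ) (Ψ ξ) (p := 2) (by norm_num)
        norm_num at this
        rwa [mul_add] at this
    _ = (2 * ∫⁻ ξ, Φ ξ ^ 2 ∂μ) + 2 * ∫⁻ ξ, Ψ ξ ^ 2 ∂μ := by
        rw [lintegral_add_left (by fun_prop), lintegral_const_mul _ (by fun_prop),
          lintegral_const_mul _ (by fun_prop)]

/-- Weighted Minkowski-type inequality: the square integral of `∫ w(s) Y(s, ξ) ds` is at most
`(∫ w)²` times a uniform bound on the square integral of `Y(s, ·)`. -/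
theorem lintegral_sq_lintegral_le {X : Type*} [MeasurableSpace X] (ν : Measure X) [SFinite ν]
    (μ : Measure ℝ) [SFinite μ] (w : ℝ → ℝ≥0∞) (hw : Measurable w) (Y : ℝ → X → ℝ≥0∞)
    (hY : Measurable (Function.uncurry Y)) (B : ℝ≥0∞) (hB : ∀ᵐ s ∂μ, ∫⁻ ξ, Y s ξ ^ 2 ∂ν ≤ B) :
    ∫⁻ ξ, (∫⁻ s, w s * Y s ξ ∂μ) ^ 2 ∂ν ≤ (∫⁻ s, w s ∂μ) ^ 2 * B := by
  have hYs : ∀ ξ, Measurable (fun s => Y s ξ) := fun ξ =>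
    hY.comp (measurable_id.prodMk measurable_const)
  have cs : ∀ ξ, (∫⁻ s, w s * Y s ξ ∂μ) ^ 2 ≤
      (∫⁻ s, w s ∂μ) * ∫⁻ s, w s * Y s ξ ^ 2 ∂μ := by
    intro ξ
    have h := ENNReal.lintegral_mul_le_Lp_mul_Lq μ Real.HolderConjugate.two_two
      (f := fun s => w s ^ (1 / 2 : ℝ)) (g := fun s => w s ^ (1 / 2 : ℝ) * Y s ξ)
      (hw.pow_const _).aemeasurable ((hw.pow_const _).mul (hYs ξ)).aemeasurable
    have e1 : ∀ s, w s ^ (1 / 2 : ℝ) * (w s ^ (1 / 2 : ℝ) * Y s ξ) = w s * Y s ξ := by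
      intro s
      rw [← mul_assoc, ← ENNReal.rpow_add_of_nonneg _ _ (by norm_num) (by norm_num)]
      norm_num
    have e2 : ∀ s, (w s ^ (1 / 2 : ℝ)) ^ (2 : ℝ) = w s := by
      intro s
      rw [← ENNReal.rpow_mul]; norm_num
    have e3 : ∀ s, (w s ^ (1 / 2 : ℝ) * Y s ξ) ^ (2 : ℝ) = w s * Y s ξ ^ 2 := by
      intro s
      rw [ENNReal.mul_rpow_of_nonneg _ _ (by norm_num), e2]
      norm_num
    simp only [Pi.mul_apply, e1, e2, e3] at h
    calc (∫⁻ s, w s * Y s ξ ∂μ) ^ 2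
        ≤ ((∫⁻ s, w s ∂μ) ^ (1 / 2 : ℝ) * (∫⁻ s, w s * Y s ξ ^ 2 ∂μ) ^ (1 / 2 : ℝ)) ^ 2 := by
          gcongr
      _ = _ := by
          rw [mul_pow, ← ENNReal.rpow_natCast, ← ENNReal.rpow_natCast, ← ENNReal.rpow_mul,
            ← ENNReal.rpow_mul]
          norm_num
  have hm : Measurable (fun p : ℝ × X => w p.1 * Y p.1 p.2 ^ 2) :=
    (hw.comp measurable_fst).mul (hY.pow_const 2)
  calc ∫⁻ ξ, (∫⁻ s, w s * Y s ξ ∂μ) ^ 2 ∂ν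
      ≤ ∫⁻ ξ, (∫⁻ s, w s ∂μ) * ∫⁻ s, w s * Y s ξ ^ 2 ∂μ ∂ν := lintegral_mono cs
    _ = (∫⁻ s, w s ∂μ) * ∫⁻ ξ, ∫⁻ s, w s * Y s ξ ^ 2 ∂μ ∂ν :=
        lintegral_const_mul _ (Measurable.lintegral_prod_left' hm)
    _ = (∫⁻ s, w s ∂μ) * ∫⁻ s, ∫⁻ ξ, w s * Y s ξ ^ 2 ∂ν ∂μ := by
        congr 1
        exact (lintegral_lintegral_swap hm.aemeasurable).symm
    _ = (∫⁻ s, w s ∂μ) * ∫⁻ s, w s * ∫⁻ ξ, Y s ξ ^ 2 ∂ν ∂μ := by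
        congr 1
        refine lintegral_congr fun s => ?_
        rw [lintegral_const_mul]
        exact (hY.comp (measurable_const.prodMk measurable_id)).pow_const 2
    _ ≤ (∫⁻ s, w s ∂μ) * ∫⁻ s, w s * B ∂μ := by
        gcongr 1
        refine lintegral_mono_ae ?_
        filter_upwards [hB] with s hs
        gcongr
    _ = _ := by
        rw [lintegral_mul_const _ hw]; ring

/-- The smoothing estimate for the multiplier `exp (-σ|2πξ|^{2m+2})`. -/
theorem exp_mul_pow_le (m : ℕ) {r σ : ℝ} (hr : 0 ≤ r) (hσ : 0 < σ) (hσ1 : σ ≤ 1) :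
    rexp (-(((2 * π * r) ^ 2) ^ (m + 1) * σ)) * (1 + r) ^ (2 * m + 1) ≤
      2 ^ (2 * m + 1) * σ ^ (-((2 * m + 1 : ℝ) / (2 * m + 2))) := by
  set θ : ℝ := σ ^ (1 / (2 * m + 2 : ℝ)) with hθ
  have hθ0 : 0 < θ := Real.rpow_pos_of_pos hσ _
  have hθ1 : θ ≤ 1 := Real.rpow_le_one hσ.le hσ1 (by positivity)
  have hθm : θ ^ (2 * m + 2) = σ := by
    rw [hθ, ← Real.rpow_natCast, ← Real.rpow_mul hσ.le]
    push_cast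
    rw [one_div_mul_cancel (by positivity), Real.rpow_one]
  have hθd : σ ^ (-((2 * m + 1 : ℝ) / (2 * m + 2))) * θ ^ (2 * m + 1) = 1 := by
    rw [hθ, ← Real.rpow_natCast, ← Real.rpow_mul hσ.le, ← Real.rpow_add hσ]
    push_cast
    rw [show -((2 * m + 1 : ℝ) / (2 * m + 2)) + 1 / (2 * m + 2) * (2 * m + 1) = 0 by ring,
      Real.rpow_zero]
  have h1 : ((1 + r) * θ) ^ (2 * m + 1) ≤ 2 ^ (2 * m + 1) * (1 + σ * r ^ (2 * m + 2)) := by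
    have hy : 0 ≤ θ * r := by positivity
    have : (1 + r) * θ ≤ 1 + θ * r := by nlinarith
    rw [show σ * r ^ (2 * m + 2) = (θ * r) ^ (2 * m + 2) by rw [mul_pow, hθm]]
    generalize θ * r = y at *
    calc ((1 + r) * θ) ^ (2 * m + 1) ≤ (1 + y) ^ (2 * m + 1) := by gcongr
      _ ≤ 2 ^ (2 * m + 1) * (1 + y ^ (2 * m + 2)) := by
        rcases le_total y 1 with h | h
        · calc (1 + y) ^ (2 * m + 1) ≤ 2 ^ (2 * m + 1) := by gcongr; linarith
            _ ≤ _ := le_mul_of_one_le_right (by positivity) (by simp; positivity)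
        · calc (1 + y) ^ (2 * m + 1) ≤ (2 * y) ^ (2 * m + 1) := by gcongr; linarith
            _ = 2 ^ (2 * m + 1) * y ^ (2 * m + 1) := mul_pow _ _ _
            _ ≤ _ := by
              gcongr
              calc y ^ (2 * m + 1) ≤ y ^ (2 * m + 2) := pow_le_pow_right₀ h (by omega)
                _ ≤ _ := by linarith
  have h2 : 1 + σ * r ^ (2 * m + 2) ≤ rexp (((2 * π * r) ^ 2) ^ (m + 1) * σ) := by
    have h3 : r ^ (2 * m + 2) ≤ ((2 * π * r) ^ 2) ^ (m + 1) := by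
      rw [← pow_mul, show 2 * (m + 1) = 2 * m + 2 by ring]
      gcongr
      nlinarith [Real.pi_gt_three]
    have := Real.add_one_le_exp (((2 * π * r) ^ 2) ^ (m + 1) * σ)
    nlinarith
  rw [Real.exp_neg, inv_mul_le_iff₀ (Real.exp_pos _)]
  have hθd0 : 0 < θ ^ (2 * m + 1) := by positivity
  rw [← mul_le_mul_iff_left₀ hθd0, ← mul_pow]
  calc ((1 + r) * θ) ^ (2 * m + 1) ≤ 2 ^ (2 * m + 1) * (1 + σ * r ^ (2 * m + 2)) := h1
    _ ≤ 2 ^ (2 * m + 1) * rexp (((2 * π * r) ^ 2) ^ (m + 1) * σ) := by gcongr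
    _ = rexp (((2 * π * r) ^ 2) ^ (m + 1) * σ) * (2 ^ (2 * m + 1) *
        (σ ^ (-((2 * m + 1 : ℝ) / (2 * m + 2))) * θ ^ (2 * m + 1))) := by rw [hθd]; ring
    _ = _ := by ring

theorem lintegral_kernel (b t : ℝ) (hb : b < 1) (ht : 0 ≤ t) :
    ∫⁻ s in Ioc 0 t, ENNReal.ofReal ((t - s) ^ (-b)) = ENNReal.ofReal (t ^ (1 - b) / (1 - b)) := by
  have hi : IntervalIntegrable (fun s : ℝ => (t - s) ^ (-b)) volume 0 t := by
    have := (intervalIntegral.intervalIntegrable_rpow' (a := 0) (b := t) (r := -b)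
      (by linarith)).comp_sub_left t
    simpa using this.symm
  rw [← ofReal_integral_eq_lintegral_ofReal, ← intervalIntegral.integral_of_le ht]
  · rw [intervalIntegral.integral_comp_sub_left (fun s => s ^ (-b)), sub_self, sub_zero,
      integral_rpow (Or.inl (by linarith)), Real.zero_rpow (by linarith), sub_zero,
      neg_add_eq_sub]
  · exact (intervalIntegrable_iff_integrableOn_Ioc_of_le ht).1 hi
  · filter_upwards [ae_restrict_mem measurableSet_Ioc] with s hs
    exact Real.rpow_nonneg (by linarith [hs.2]) _

/-- Duhamel's formula as a norm bound, for `U' = H - lam U` with `U 0 = 0`. -/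
theorem duhamel_bound {Uf H : ℝ → ℂ} (hU : Continuous Uf) (hH : Continuous H) {lam h t : ℝ}
    (h0 : Uf 0 = 0) (hd : ∀ s ∈ Ioo 0 h, HasDerivAt Uf (H s - lam * Uf s) s)
    (ht : t ∈ Icc 0 h) :
    ‖Uf t‖ₑ ≤ ∫⁻ s in Ioc 0 t, ENNReal.ofReal (rexp (-(lam * (t - s)))) * ‖H s‖ₑ := by
  have key : Uf t = ∫ s in (0 : ℝ)..t, ((rexp (-(lam * (t - s))) : ℝ) : ℂ) * H s := by
    have hc : Continuous fun s => ((rexp (-(lam * (t - s))) : ℝ) : ℂ) := by fun_prop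
    have := intervalIntegral.integral_eq_sub_of_hasDerivAt_of_le ht.1
      (f := fun s => ((rexp (-(lam * (t - s))) : ℝ) : ℂ) * Uf s)
      (f' := fun s => ((rexp (-(lam * (t - s))) : ℝ) : ℂ) * H s)
      (hc.mul hU).continuousOn (fun s hs => ?_) ((hc.mul hH).intervalIntegrable _ _)
    · rw [this]; simp [h0]
    · have h1 : HasDerivAt (fun s => rexp (-(lam * (t - s)))) (rexp (-(lam * (t - s))) * lam) s := by
        have : HasDerivAt (fun s => -(lam * (t - s))) lam s := by
          have := (((hasDerivAt_id' s).const_sub t).const_mul lam).fun_neg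
          exact this.congr_deriv (by ring)
        exact this.exp
      have h2 := h1.ofReal_comp.fun_mul (hd s ⟨hs.1, hs.2.trans_le ht.2⟩)
      exact h2.congr_deriv (by push_cast; ring)
  rw [key, intervalIntegral.integral_of_le ht.1]
  refine (enorm_integral_le_lintegral_enorm _).trans (lintegral_mono fun s => ?_)
  rw [enorm_mul]
  gcongr
  rw [← ofReal_norm, Complex.norm_real, Real.norm_eq_abs, abs_of_pos (Real.exp_pos _)]

/-! ### Localized solutions with zero initial value -/

section slice
variable {n : ℕ} {U : Set (EuclideanSpace ℝ (Fin n))}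

/-- A function of time and space, continuous in time at every point, measurable in space at every
time, and bounded by `M` at the points of `U`. -/
structure Slice (U : Set (EuclideanSpace ℝ (Fin n))) (M : ℝ)
    (u : ℝ → EuclideanSpace ℝ (Fin n) → ℝ) : Prop where
  cont : ∀ x, Continuous fun t => u t x
  meas : ∀ t, Measurable (u t)
  bdd : ∀ t, ∀ x ∈ U, |u t x| ≤ M

variable {M : ℝ} {u : ℝ → EuclideanSpace ℝ (Fin n) → ℝ} {φ χ : EuclideanSpace ℝ (Fin n) → ℂ}

theorem IsTest.integrable (hφ : IsTest U φ) : Integrable φ :=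
  hφ.smooth.continuous.integrable_of_hasCompactSupport hφ.compact

theorem IsTest.norm_mul_le (hφ : IsTest U φ) {w : EuclideanSpace ℝ (Fin n) → ℝ}
    (hw : ∀ x ∈ U, |w x| ≤ M) (x : EuclideanSpace ℝ (Fin n)) :
    ‖(w x : ℂ) * φ x‖ ≤ M * ‖φ x‖ := by
  by_cases hx : x ∈ U
  · rw [norm_mul, Complex.norm_real, Real.norm_eq_abs]
    gcongr
    exact hw x hx
  · have : φ x = 0 := by
      by_contra h
      exact hx (hφ.sub (subset_tsupport _ h))
    simp [this]

theorem IsTest.integrable_mul_of_bdd (hφ : IsTest U φ) {w : EuclideanSpace ℝ (Fin n) → ℝ}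
    (hm : AEStronglyMeasurable w) (hw : ∀ x ∈ U, |w x| ≤ M) :
    Integrable fun x => (w x : ℂ) * φ x :=
  (hφ.integrable.norm.const_mul M).mono'
    ((Complex.continuous_ofReal.comp_aestronglyMeasurable hm).mul
      hφ.integrable.aestronglyMeasurable)
    (Filter.Eventually.of_forall (hφ.norm_mul_le hw))

theorem Slice.integrable (hu : Slice U M u) (hφ : IsTest U φ) (t : ℝ) :
    Integrable fun x => (u t x : ℂ) * φ x :=
  hφ.integrable_mul_of_bdd (hu.meas t).aestronglyMeasurable (hu.bdd t)

theorem Slice.continuous_integral (hu : Slice U M u) (hφ : IsTest U φ) :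
    Continuous fun t => ∫ x, (u t x : ℂ) * φ x := by
  refine continuous_of_dominated (bound := fun x => M * ‖φ x‖)
    (fun t => (hu.integrable hφ t).aestronglyMeasurable)
    (fun t => Filter.Eventually.of_forall (hφ.norm_mul_le (hu.bdd t)))
    (hφ.integrable.norm.const_mul M) (Filter.Eventually.of_forall fun x => ?_)
  exact (Complex.continuous_ofReal.comp (hu.cont x)).mul continuous_const

theorem IsTest.mul_fchar (hχ : IsTest U χ) (ξ : EuclideanSpace ℝ (Fin n)) :
    IsTest U fun x => χ x * fchar ξ x := hχ.mul_right (contDiff_fchar ξ)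

theorem Slice.integral_eq_fourier (ξ : EuclideanSpace ℝ (Fin n)) (t : ℝ) :
    ∫ x, (u t x : ℂ) * (χ x * fchar ξ x) = 𝓕 (fun x => (u t x : ℂ) * χ x) ξ := by
  rw [fourier_eq_fchar]
  simp only [mul_assoc]

theorem Slice.measurable_fourier (hu : Slice U M u) (hχ : IsTest U χ) :
    Measurable (Function.uncurry fun (s : ℝ) (ξ : EuclideanSpace ℝ (Fin n)) =>
      ‖∫ x, (u s x : ℂ) * (χ x * fchar ξ x)‖ₑ) := by
  have h := stronglyMeasurable_uncurry_of_continuous_of_stronglyMeasurable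
    (u := fun (s : ℝ) (ξ : EuclideanSpace ℝ (Fin n)) => ∫ x, (u s x : ℂ) * (χ x * fchar ξ x))
    (fun ξ => hu.continuous_integral (hχ.mul_fchar ξ)) (fun s => by
      simp only [Slice.integral_eq_fourier]
      exact (VectorFourier.fourierIntegral_continuous Real.continuous_fourierChar
        (by exact continuous_inner) (hu.integrable hχ s)).stronglyMeasurable)
  exact h.measurable.enorm

theorem Slice.plancherel (hu : Slice U M u) (hχ : IsTest U χ) (t : ℝ) :
    ∫⁻ ξ, ‖∫ x, (u t x : ℂ) * (χ x * fchar ξ x)‖ₑ ^ 2 = ∫⁻ x, ‖(u t x : ℂ) * χ x‖ₑ ^ 2 := by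
  simp only [Slice.integral_eq_fourier]
  refine plancherel_lintegral _ (hu.integrable hχ t) ?_
  have : MemLp (fun x => M * ‖χ x‖) 2 :=
    ((hχ.smooth.continuous.memLp_of_hasCompactSupport hχ.compact).norm).const_mul M
  exact this.mono' (hu.integrable hχ t).aestronglyMeasurable
    (Filter.Eventually.of_forall (hχ.norm_mul_le (hu.bdd t)))

theorem IsTest.lintegral_sq_lt_top (hχ : IsTest U χ) : ∫⁻ x, ‖χ x‖ₑ ^ 2 < ⊤ := by
  have : MemLp χ 2 := hχ.smooth.continuous.memLp_of_hasCompactSupport hχ.compact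
  have := lintegral_rpow_enorm_lt_top_of_eLpNorm_lt_top two_ne_zero ENNReal.ofNat_ne_top this.2
  simpa using this

theorem IsTest.lintegral_mul_sq_le (hχ : IsTest U χ) {w : EuclideanSpace ℝ (Fin n) → ℝ}
    (hw : ∀ x ∈ U, |w x| ≤ M) :
    ∫⁻ x, ‖(w x : ℂ) * χ x‖ₑ ^ 2 ≤ ENNReal.ofReal (M ^ 2 * (∫⁻ x, ‖χ x‖ₑ ^ 2).toReal) := by
  rw [ENNReal.ofReal_mul (sq_nonneg _), ENNReal.ofReal_toReal hχ.lintegral_sq_lt_top.ne,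
    ← lintegral_const_mul' _ _ ENNReal.ofReal_ne_top]
  refine lintegral_mono fun x => ?_
  rw [← ofReal_norm, ← ofReal_norm, ← ENNReal.ofReal_pow (norm_nonneg _),
    ← ENNReal.ofReal_pow (norm_nonneg _), ← ENNReal.ofReal_mul (sq_nonneg _), ← mul_pow]
  apply ENNReal.ofReal_le_ofReal
  gcongr
  exact hχ.norm_mul_le hw x

/-- Solutions on `[0, h]`, with zero initial value and source `f`, of `z_t + (-Δ)^m z = f` on `U`,
in the distributional sense in space. -/
structure GapSol (U : Set (EuclideanSpace ℝ (Fin n))) (m : ℕ) (K M h : ℝ)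
    (z f : ℝ → EuclideanSpace ℝ (Fin n) → ℝ) : Prop where
  h_le : h ≤ 1
  z_slice : Slice U M z
  f_slice : Slice U K f
  z_zero : ∀ x, z 0 x = 0
  deriv : ∀ φ, IsTest U φ → ∀ t ∈ Ioo 0 h, HasDerivAt (fun t => ∫ x, (z t x : ℂ) * φ x)
    ((∫ x, (f t x : ℂ) * φ x) - (-1) ^ m * ∫ x, (z t x : ℂ) * lapC^[m] φ x) t

/-- The commutator contribution in Duhamel's formula gains a factor `t ^ (1 / (m + 1))` in the
squared norm over a given decay `t ^ a` of localized solutions: the smoothing estimate leaves the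
kernel `(t - s) ^ (-(2m+1)/(2m+2))`, whose time integral is a multiple of `t ^ (1/(2m+2))`. -/
theorem gap_commutator {m : ℕ} {K M a : ℝ} (ha : 0 ≤ a)
    (hj : ∀ χ, IsTest U χ → ∃ C : ℝ, 0 ≤ C ∧ ∀ h z f, GapSol U (m + 1) K M h z f →
      ∀ t ∈ Icc 0 h, ∫⁻ x, ‖(z t x : ℂ) * χ x‖ₑ ^ 2 ≤ ENNReal.ofReal (C * t ^ a))
    {G : EuclideanSpace ℝ (Fin n) → EuclideanSpace ℝ (Fin n) → ℂ} (hG : Symb U (2 * m + 1) G) :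
    ∃ C : ℝ, 0 ≤ C ∧ ∀ h z f, GapSol U (m + 1) K M h z f → ∀ t ∈ Icc 0 h,
      ∃ Φ : EuclideanSpace ℝ (Fin n) → ℝ≥0∞, Measurable Φ ∧
        (∀ ξ, ∫⁻ s in Ioc 0 t, ENNReal.ofReal (rexp (-(((2 * π * ‖ξ‖) ^ 2) ^ (m + 1) * (t - s)))) *
          ‖∫ x, (z s x : ℂ) * G ξ x‖ₑ ≤ Φ ξ) ∧
        ∫⁻ ξ, Φ ξ ^ 2 ≤ ENNReal.ofReal (C * t ^ (a + 1 / (m + 1 : ℝ))) := by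
  induction hG with
  | basis P χ C hP hχ =>
    obtain ⟨D, hD0, hD⟩ := hj χ hχ
    have hC : 0 ≤ C := by
      have := (norm_nonneg _).trans (hP 0)
      simpa using this
    set b : ℝ := (2 * m + 1 : ℝ) / (2 * m + 2) with hb
    have hb1 : b < 1 := by rw [hb, div_lt_one (by positivity)]; linarith
    have hb2 : 1 - b = 1 / (2 * m + 2) := by rw [hb]; field_simp; ring
    set A : ℝ := C * 2 ^ (2 * m + 1) with hA
    have hA0 : 0 ≤ A := by positivity
    refine ⟨A ^ 2 * ((2 * m + 2) ^ 2 * D), by positivity, fun h z f hs t ht => ?_⟩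
    have hmeas := hs.z_slice.measurable_fourier hχ
    have hmw : Measurable fun s : ℝ => ENNReal.ofReal ((t - s) ^ (-b)) := by fun_prop
    refine ⟨fun ξ => ENNReal.ofReal A * ∫⁻ s in Ioc 0 t, ENNReal.ofReal ((t - s) ^ (-b)) *
      ‖∫ x, (z s x : ℂ) * (χ x * fchar ξ x)‖ₑ, ?_, fun ξ => ?_, ?_⟩
    · refine Measurable.const_mul ?_ _
      exact Measurable.lintegral_prod_left' (μ := volume.restrict (Ioc 0 t))
        (f := fun q : ℝ × EuclideanSpace ℝ (Fin n) => ENNReal.ofReal ((t - q.1) ^ (-b)) *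
        ‖∫ x, (z q.1 x : ℂ) * (χ x * fchar q.2 x)‖ₑ) ((hmw.comp measurable_fst).mul hmeas)
    · beta_reduce
      rw [← lintegral_const_mul' _ _ ENNReal.ofReal_ne_top]
      refine lintegral_mono_ae ?_
      have hne : ∀ᵐ s ∂(volume.restrict (Ioc 0 t)), s ≠ t :=
        ae_restrict_of_ae (by simp [ae_iff])
      filter_upwards [ae_restrict_mem measurableSet_Ioc, hne] with s hs1 hs2
      have e1 : ∫ x, (z s x : ℂ) * (P ξ * (χ x * fchar ξ x)) =
          P ξ * ∫ x, (z s x : ℂ) * (χ x * fchar ξ x) := by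
        rw [← integral_const_mul]
        congr 1; funext x; ring
      rw [e1, enorm_mul, ← mul_assoc, ← mul_assoc]
      gcongr ?_ * _
      rw [← ofReal_norm, ← ENNReal.ofReal_mul (Real.exp_pos _).le, ← ENNReal.ofReal_mul hA0]
      apply ENNReal.ofReal_le_ofReal
      have hts : 0 < t - s := sub_pos.2 (lt_of_le_of_ne hs1.2 hs2)
      have := exp_mul_pow_le m (norm_nonneg ξ) hts (by linarith [hs1.1, ht.2, hs.h_le])
      calc _ ≤ rexp (-(((2 * π * ‖ξ‖) ^ 2) ^ (m + 1) * (t - s))) *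
            (C * (1 + ‖ξ‖) ^ (2 * m + 1)) := by gcongr; exact hP ξ
        _ = C * (rexp (-(((2 * π * ‖ξ‖) ^ 2) ^ (m + 1) * (t - s))) *
            (1 + ‖ξ‖) ^ (2 * m + 1)) := by ring
        _ ≤ C * (2 ^ (2 * m + 1) * (t - s) ^ (-b)) := by gcongr
        _ = _ := by rw [hA]; ring
    · simp only [mul_pow]
      rw [lintegral_const_mul' _ _ (by finiteness)]
      have hmk := lintegral_sq_lintegral_le (volume : Measure (EuclideanSpace ℝ (Fin n)))
        (volume.restrict (Ioc 0 t)) _ hmw _ hmeas (ENNReal.ofReal (D * t ^ a)) (by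
          filter_upwards [ae_restrict_mem measurableSet_Ioc] with s hs1
          rw [hs.z_slice.plancherel hχ]
          refine (hD h z f hs s ⟨hs1.1.le, hs1.2.trans ht.2⟩).trans ?_
          apply ENNReal.ofReal_le_ofReal
          have := hs1.1.le
          have := hs1.2
          gcongr)
      refine (mul_le_mul_right hmk _).trans (le_of_eq ?_)
      have ht0 := ht.1
      have hp1 : (0 : ℝ) ≤ t ^ (1 - b) / (1 - b) :=
        div_nonneg (Real.rpow_nonneg ht0 _) (by linarith)
      rw [lintegral_kernel b t hb1 ht0, ← ENNReal.ofReal_pow hA0, ← ENNReal.ofReal_pow hp1,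
        ← ENNReal.ofReal_mul (by positivity), ← ENNReal.ofReal_mul (by positivity)]
      congr 1
      rw [Real.rpow_add_of_nonneg ht0 ha (by positivity), hb2, div_pow, ← Real.rpow_natCast
        (t ^ _), ← Real.rpow_mul ht0]
      have : (1 / (2 * m + 2 : ℝ)) * (2 : ℕ) = 1 / (m + 1 : ℝ) := by
        push_cast; field_simp
      rw [this]
      field_simp
  | add G H hG hH ihG ihH =>
    obtain ⟨C1, hC1, h1⟩ := ihG
    obtain ⟨C2, hC2, h2⟩ := ihH
    refine ⟨2 * C1 + 2 * C2, by positivity, fun h z f hs t ht => ?_⟩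
    obtain ⟨Φ1, hm1, hb1, hi1⟩ := h1 h z f hs t ht
    obtain ⟨Φ2, hm2, hb2, hi2⟩ := h2 h z f hs t ht
    refine ⟨fun ξ => Φ1 ξ + Φ2 ξ, hm1.add hm2, fun ξ => ?_, ?_⟩
    · refine le_trans ?_ (add_le_add (hb1 ξ) (hb2 ξ))
      rw [← lintegral_add_left]
      · refine lintegral_mono fun s => ?_
        rw [← mul_add]
        gcongr
        simp only [mul_add]
        rw [integral_add (hs.z_slice.integrable (hG.smooth ξ) s)
          (hs.z_slice.integrable (hH.smooth ξ) s)]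
        exact enorm_add_le _ _
      · refine Measurable.mul (f := fun s => ENNReal.ofReal _) (by fun_prop) ?_
        exact (hs.z_slice.continuous_integral (hG.smooth ξ)).measurable.enorm
    · have ht0 := ht.1
      calc ∫⁻ ξ, (Φ1 ξ + Φ2 ξ) ^ 2 ≤ (2 * ∫⁻ ξ, Φ1 ξ ^ 2) + 2 * ∫⁻ ξ, Φ2 ξ ^ 2 :=
            lintegral_add_sq_le hm1 hm2
        _ ≤ 2 * ENNReal.ofReal (C1 * t ^ (a + 1 / (m + 1 : ℝ))) +
            2 * ENNReal.ofReal (C2 * t ^ (a + 1 / (m + 1 : ℝ))) := by gcongr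
        _ = _ := by
            rw [show (2 : ℝ≥0∞) = ENNReal.ofReal 2 by simp, ← ENNReal.ofReal_mul (by norm_num),
              ← ENNReal.ofReal_mul (by norm_num), ← ENNReal.ofReal_add (by positivity)
                (by positivity)]
            congr 1; ring
end slice

section gap
variable {n : ℕ} {U : Set (EuclideanSpace ℝ (Fin n))}

/-- One step of the bootstrap: a decay rate `t ^ a` of the localized solutions improves by the factor
`t ^ (1 / (m + 1))`. The Fourier transform of `z χ` solves an ordinary differential equation whose
right-hand side consists of the source, which contributes `O(t²)`, and of the commutator of
`(-Δ)^(m+1)` with `χ`, estimated by `gap_commutator`. -/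
theorem gap_step {m : ℕ} {K M a : ℝ} (ha : 0 ≤ a) (ha2 : a + 1 / (m + 1 : ℝ) ≤ 2)
    (hj : ∀ χ, IsTest U χ → ∃ C : ℝ, 0 ≤ C ∧ ∀ h z f, GapSol U (m + 1) K M h z f →
      ∀ t ∈ Icc 0 h, ∫⁻ x, ‖(z t x : ℂ) * χ x‖ₑ ^ 2 ≤ ENNReal.ofReal (C * t ^ a))
    {χ : EuclideanSpace ℝ (Fin n) → ℂ} (hχ : IsTest U χ) :
    ∃ C : ℝ, 0 ≤ C ∧ ∀ h z f, GapSol U (m + 1) K M h z f → ∀ t ∈ Icc 0 h,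
      ∫⁻ x, ‖(z t x : ℂ) * χ x‖ₑ ^ 2 ≤ ENNReal.ofReal (C * t ^ (a + 1 / (m + 1 : ℝ))) := by
  obtain ⟨C, hC, h1⟩ := gap_commutator ha hj (Symb.commutator hχ m)
  have hGs := Symb.smooth (Symb.commutator hχ m)
  set D := K ^ 2 * (∫⁻ x, ‖χ x‖ₑ ^ 2).toReal with hD
  have hD0 : 0 ≤ D := by positivity
  refine ⟨2 * D + 2 * C, by positivity, fun h z f hs t ht => ?_⟩
  obtain ⟨Φ, hΦm, hΦ, hΦi⟩ := h1 h z f hs t ht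
  have ht0 := ht.1
  have hfm := hs.f_slice.measurable_fourier hχ
  set A : EuclideanSpace ℝ (Fin n) → ℝ≥0∞ := fun ξ => ∫⁻ s in Ioc 0 t,
    1 * ‖∫ x, (f s x : ℂ) * (χ x * fchar ξ x)‖ₑ with hA
  have hAm : Measurable A := by
    simp only [hA, one_mul]
    exact Measurable.lintegral_prod_left' (μ := volume.restrict (Ioc 0 t)) hfm
  have hAi : ∫⁻ ξ, A ξ ^ 2 ≤ ENNReal.ofReal (t ^ 2 * D) := by
    have := lintegral_sq_lintegral_le (volume : Measure (EuclideanSpace ℝ (Fin n)))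
        (volume.restrict (Ioc 0 t)) (fun _ => 1) measurable_const _ hfm (ENNReal.ofReal D) (by
          filter_upwards with s
          rw [hs.f_slice.plancherel hχ]
          exact hχ.lintegral_mul_sq_le (hs.f_slice.bdd s))
    refine this.trans (le_of_eq ?_)
    rw [lintegral_one, Measure.restrict_apply_univ, Real.volume_Ioc, sub_zero,
      ← ENNReal.ofReal_pow ht0, ← ENNReal.ofReal_mul (by positivity)]
  have hbound : ∀ ξ, ‖∫ x, (z t x : ℂ) * (χ x * fchar ξ x)‖ₑ ≤ A ξ + Φ ξ := by
    intro ξ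
    set lam : ℝ := ((2 * π * ‖ξ‖) ^ 2) ^ (m + 1) with hlam
    have hlam0 : 0 ≤ lam := by positivity
    set G := fun x => lapC^[m+1] (fun x => χ x * fchar ξ x) x -
      (-(((2*π*‖ξ‖)^2:ℝ):ℂ))^(m+1) * (χ x * fchar ξ x) with hG
    have hGt : IsTest U G := hGs ξ
    have hφ := hχ.mul_fchar ξ
    have hc1 := hs.f_slice.continuous_integral hφ
    have hc2 := hs.z_slice.continuous_integral hGt
    have hd := duhamel_bound (lam := lam) (h := h) (t := t)
      (hs.z_slice.continuous_integral hφ)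
      (H := fun s => (∫ x, (f s x : ℂ) * (χ x * fchar ξ x)) -
        (-1) ^ (m + 1) * ∫ x, (z s x : ℂ) * G x)
      (hc1.sub (continuous_const.mul hc2)) (by simp [hs.z_zero]) (fun s hs1 => by
        have := hs.deriv _ hφ s hs1
        refine this.congr_deriv ?_
        have e : ∫ x, (z s x : ℂ) * lapC^[m+1] (fun x => χ x * fchar ξ x) x =
            (∫ x, (z s x : ℂ) * G x) +
              (-1) ^ (m + 1) * lam * ∫ x, (z s x : ℂ) * (χ x * fchar ξ x) := by
          rw [← integral_const_mul, ← integral_add (hs.z_slice.integrable hGt s)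
            ((hs.z_slice.integrable hφ s).const_mul _)]
          congr 1; funext x
          simp only [hG, hlam]
          rw [neg_pow]
          push_cast
          ring
        rw [e, mul_add, ← mul_assoc, ← mul_assoc, ← pow_add, ← two_mul, pow_mul]
        norm_num
        ring) ht
    refine hd.trans ((?_ : _ ≤ _).trans (add_le_add_right (hΦ ξ) (A ξ)))
    rw [hA]
    beta_reduce
    rw [← lintegral_add_left (by
      simp only [one_mul]; exact hc1.measurable.enorm)]
    refine lintegral_mono_ae ?_
    filter_upwards [ae_restrict_mem measurableSet_Ioc] with s hs1
    have he : ENNReal.ofReal (rexp (-(lam * (t - s)))) ≤ 1 := by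
      rw [ENNReal.ofReal_le_one, Real.exp_le_one_iff]
      have := sub_nonneg.2 hs1.2
      simp only [Left.neg_nonpos_iff]
      positivity
    calc _ ≤ ENNReal.ofReal (rexp (-(lam * (t - s)))) *
          (‖∫ x, (f s x : ℂ) * (χ x * fchar ξ x)‖ₑ + ‖∫ x, (z s x : ℂ) * G x‖ₑ) := by
          gcongr
          refine enorm_sub_le.trans (le_of_eq ?_)
          rw [enorm_mul]
          simp
      _ ≤ _ := by
          rw [mul_add]
          gcongr
  rw [← hs.z_slice.plancherel hχ]
  calc ∫⁻ ξ, ‖∫ x, (z t x : ℂ) * (χ x * fchar ξ x)‖ₑ ^ 2 ≤ ∫⁻ ξ, (A ξ + Φ ξ) ^ 2 :=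
        lintegral_mono fun ξ => by gcongr; exact hbound ξ
    _ ≤ _ := lintegral_add_sq_le hAm hΦm
    _ ≤ 2 * ENNReal.ofReal (t ^ 2 * D) + 2 * ENNReal.ofReal (C * t ^ (a + 1 / (m + 1 : ℝ))) := by
        gcongr
    _ ≤ _ := by
        rw [show (2 : ℝ≥0∞) = ENNReal.ofReal 2 by simp, ← ENNReal.ofReal_mul (by norm_num),
              ← ENNReal.ofReal_mul (by norm_num), ← ENNReal.ofReal_add (by positivity)
                (by positivity)]
        apply ENNReal.ofReal_le_ofReal
        have : t ^ 2 ≤ t ^ (a + 1 / (m + 1 : ℝ)) := by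
          rcases ht0.eq_or_lt with h0 | h0
          · rw [← h0, zero_pow two_ne_zero]; positivity
          · rw [← Real.rpow_natCast]
            exact Real.rpow_le_rpow_of_exponent_ge h0 (ht.2.trans hs.h_le) (by exact_mod_cast ha2)
        nlinarith

/-- Localized solutions with zero initial value and bounded source are `O(t)` in `L²`, with a
constant depending only on the cut-off and on the bounds of the solution and of the source. -/
theorem gap_estimate {m : ℕ} {K M : ℝ} {χ : EuclideanSpace ℝ (Fin n) → ℂ} (hχ : IsTest U χ) :
    ∃ C : ℝ, 0 ≤ C ∧ ∀ h z f, GapSol U (m + 1) K M h z f → ∀ t ∈ Icc 0 h,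
      ∫⁻ x, ‖(z t x : ℂ) * χ x‖ₑ ^ 2 ≤ ENNReal.ofReal (C * t ^ 2) := by
  have main : ∀ j : ℕ, j ≤ 2 * (m + 1) → ∀ χ : EuclideanSpace ℝ (Fin n) → ℂ, IsTest U χ →
      ∃ C : ℝ, 0 ≤ C ∧ ∀ h z f, GapSol U (m + 1) K M h z f → ∀ t ∈ Icc 0 h,
      ∫⁻ x, ‖(z t x : ℂ) * χ x‖ₑ ^ 2 ≤ ENNReal.ofReal (C * t ^ ((j : ℝ) / (m + 1 : ℝ))) := by
    intro j
    induction j with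
    | zero =>
      intro _ χ hχ
      refine ⟨M ^ 2 * (∫⁻ x, ‖χ x‖ₑ ^ 2).toReal, by positivity, fun h z f hs t _ => ?_⟩
      simpa using hχ.lintegral_mul_sq_le (hs.z_slice.bdd t)
    | succ j ih =>
      intro hj χ hχ
      have e : ((j + 1 : ℕ) : ℝ) / (m + 1 : ℝ) = (j : ℝ) / (m + 1) + 1 / (m + 1 : ℝ) := by
        push_cast; ring
      rw [e]
      refine gap_step (by positivity) ?_ (ih (by omega)) hχ
      rw [← e, div_le_iff₀ (by positivity)]
      exact_mod_cast hj
  obtain ⟨C, hC, h⟩ := main (2 * (m + 1)) le_rfl χ hχ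
  refine ⟨C, hC, fun h' z f hs t ht => ?_⟩
  have := h h' z f hs t ht
  rwa [show ((2 * (m + 1) : ℕ) : ℝ) / (m + 1 : ℝ) = (2 : ℕ) by push_cast; field_simp,
    Real.rpow_natCast] at this
end gap

/-! ### Gaps of a closed set of times -/

section gaps

/-- The bounded components of the complement of `S`, as pairs of end points. -/
def gapSet (S : Set ℝ) : Set (ℝ × ℝ) :=
  {q | q.1 ∈ S ∧ q.2 ∈ S ∧ q.1 < q.2 ∧ Disjoint (Ioo q.1 q.2) S}

theorem gapSet_pairwise (S : Set ℝ) :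
    (gapSet S).PairwiseDisjoint (fun q => Ioo q.1 q.2) := by
  rintro ⟨a, b⟩ ⟨ha, hb, hab, hd⟩ ⟨a', b'⟩ ⟨ha', hb', hab', hd'⟩ hne
  simp only [Function.onFun] at *
  rw [Set.disjoint_left] at hd hd' ⊢
  rintro x ⟨h1, h2⟩ ⟨h3, h4⟩
  apply hne
  have e1 : a = a' := by
    by_contra h
    rcases lt_or_gt_of_ne h with h | h
    · exact hd ⟨h, h3.trans h2⟩ ha'
    · exact hd' ⟨h, h1.trans h4⟩ ha
  have e2 : b = b' := by
    by_contra h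
    rcases lt_or_gt_of_ne h with h | h
    · exact hd' ⟨h3.trans h2, h⟩ hb
    · exact hd ⟨h1.trans h4, h⟩ hb'
  rw [e1, e2]

theorem gapSet_countable (S : Set ℝ) : (gapSet S).Countable :=
  (gapSet_pairwise S).countable_of_isOpen (fun _ _ => isOpen_Ioo)
    (fun _ hq => nonempty_Ioo.2 hq.2.2.1)

theorem Ioo_eq_gaps {S : Set ℝ} (hS : IsClosed S) {e t : ℝ} (he : e ∈ S) (ht : t ∈ S)
    (hsub : S ⊆ Icc e t) :
    Ioo e t = (S ∩ Ioo e t) ∪ ⋃ q : gapSet S, Ioo q.1.1 q.1.2 := by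
  ext x
  constructor
  · intro hx
    by_cases hxS : x ∈ S
    · exact Or.inl ⟨hxS, hx⟩
    right
    have hA : IsClosed (S ∩ Iic x) := hS.inter isClosed_Iic
    have hB : IsClosed (S ∩ Ici x) := hS.inter isClosed_Ici
    have hAn : (S ∩ Iic x).Nonempty := ⟨e, he, hx.1.le⟩
    have hBn : (S ∩ Ici x).Nonempty := ⟨t, ht, hx.2.le⟩
    have hAb : BddAbove (S ∩ Iic x) := ⟨x, fun y hy => hy.2⟩
    have hBb : BddBelow (S ∩ Ici x) := ⟨x, fun y hy => hy.2⟩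
    have ha := hA.csSup_mem hAn hAb
    have hb := hB.csInf_mem hBn hBb
    set a := sSup (S ∩ Iic x)
    set b := sInf (S ∩ Ici x)
    have hax : a < x := lt_of_le_of_ne ha.2 (fun h => hxS (h ▸ ha.1))
    have hxb : x < b := lt_of_le_of_ne hb.2 (fun h => hxS (h ▸ hb.1))
    refine mem_iUnion.2 ⟨⟨(a, b), ha.1, hb.1, hax.trans hxb, ?_⟩, hax, hxb⟩
    rw [Set.disjoint_left]
    rintro y ⟨h1, h2⟩ hy
    rcases le_total y x with h | h
    · exact absurd (le_csSup hAb ⟨hy, h⟩) (not_le.2 h1)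
    · exact absurd (csInf_le hBb ⟨hy, h⟩) (not_le.2 h2)
  · rintro (h | h)
    · exact h.2
    · obtain ⟨⟨⟨a, b⟩, ha, hb, h3, h4⟩, h1, h2⟩ := mem_iUnion.1 h
      exact ⟨(hsub ha).1.trans_lt h1, h2.trans_le (hsub hb).2⟩

/-- The integral over `(e, t)` is the integral over a closed set plus the sum of the integrals over
its gaps. -/
theorem hasSum_gaps {X : Type*} [NormedAddCommGroup X] [NormedSpace ℝ X] [CompleteSpace X]
    {S : Set ℝ} (hS : IsClosed S) {e t : ℝ} (he : e ∈ S) (ht : t ∈ S)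
    (hsub : S ⊆ Icc e t) {f : ℝ → X} (hf : IntegrableOn f (Ioo e t)) :
    HasSum (fun q : gapSet S => ∫ s in q.1.1..q.1.2, f s)
      ((∫ s in e..t, f s) - ∫ s in S ∩ Ioo e t, f s) := by
  have hU := Ioo_eq_gaps hS he ht hsub
  have hsubU : (⋃ q : gapSet S, Ioo q.1.1 q.1.2) ⊆ Ioo e t := by
    rw [hU]; exact subset_union_right
  have hdis : Disjoint (S ∩ Ioo e t) (⋃ q : gapSet S, Ioo q.1.1 q.1.2) := by
    rw [Set.disjoint_iUnion_right]
    exact fun q => (q.2.2.2.2.mono_right inter_subset_left).symm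
  have := (gapSet_countable S).to_subtype
  have h1 := hasSum_integral_iUnion (μ := volume) (f := f) (s := fun q : gapSet S => Ioo q.1.1 q.1.2)
    (fun _ => measurableSet_Ioo)
    (fun q q' hne => gapSet_pairwise S q.2 q'.2 (fun h => hne (Subtype.ext h)))
    (hf.mono_set hsubU)
  have h2 : ∫ s in Ioo e t, f s = (∫ s in S ∩ Ioo e t, f s) +
      ∫ s in ⋃ q : gapSet S, Ioo q.1.1 q.1.2, f s := by
    conv_lhs => rw [hU]
    exact setIntegral_union hdis (MeasurableSet.iUnion fun _ => measurableSet_Ioo)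
      (hf.mono_set inter_subset_right) (hf.mono_set hsubU)
  have het : e ≤ t := (hsub he).2
  rw [intervalIntegral.integral_of_le het, integral_Ioc_eq_integral_Ioo, h2, add_sub_cancel_left]
  convert h1 using 2 with q
  rw [intervalIntegral.integral_of_le q.2.2.2.1.le, integral_Ioc_eq_integral_Ioo]
end gaps

/-! ### Local solutions and their increments -/

section locsol
variable {n : ℕ} {U : Set (EuclideanSpace ℝ (Fin n))}

/-- The local information on a solution of `v_t + w = F` used for its regularity in time: here
`w` stands for `(-Δ)^m v`, which is only known to be bounded on `U` at each fixed time. -/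
structure LocSol (U : Set (EuclideanSpace ℝ (Fin n))) (m : ℕ) (M : ℝ)
    (v F w : ℝ → EuclideanSpace ℝ (Fin n) → ℝ) : Prop where
  v_slice : Slice U M v
  F_cont : ∀ x, Continuous fun t => F t x
  F_meas : ∀ t, Measurable (F t)
  F_bdd : ∀ a b, ∃ K, ∀ t ∈ Icc a b, ∀ x ∈ U, |F t x| ≤ K
  w_cont : ∀ x, Continuous fun t => w t x
  w_meas : ∀ t, Measurable (w t)
  w_bdd : ∀ t, ∃ k, ∀ x ∈ U, |w t x| ≤ k
  deriv : ∀ t x, HasDerivAt (fun s => v s x) (F t x - w t x) t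
  ibp : ∀ φ, IsTest U φ → ∀ t,
    ∫ x, (w t x : ℂ) * φ x = (-1) ^ m * ∫ x, (v t x : ℂ) * lapC^[m] φ x

variable {m : ℕ} {M : ℝ} {v F w : ℝ → EuclideanSpace ℝ (Fin n) → ℝ}
  {φ : EuclideanSpace ℝ (Fin n) → ℂ}

/-- The time derivative that `∫ v φ` must have if the equation may be tested against `φ`. -/
noncomputable def wdot (m : ℕ) (v F : ℝ → EuclideanSpace ℝ (Fin n) → ℝ)
    (φ : EuclideanSpace ℝ (Fin n) → ℂ) (t : ℝ) : ℂ :=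
  (∫ x, (F t x : ℂ) * φ x) - (-1) ^ m * ∫ x, (v t x : ℂ) * lapC^[m] φ x

theorem LocSol.clip (hs : LocSol U m M v F w) {a b K : ℝ} (hab : a ≤ b)
    (hK : ∀ t ∈ Icc a b, ∀ x ∈ U, |F t x| ≤ K) :
    Slice U K (fun t => F (max a (min b t))) where
  cont x := (hs.F_cont x).comp (by fun_prop)
  meas t := hs.F_meas _
  bdd t x hx := hK _ ⟨le_max_left _ _, max_le hab (min_le_left _ _)⟩ x hx

theorem LocSol.integrable_F (hs : LocSol U m M v F w) (hφ : IsTest U φ) (t : ℝ) :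
    Integrable fun x => (F t x : ℂ) * φ x := by
  obtain ⟨K, hK⟩ := hs.F_bdd t t
  exact hφ.integrable_mul_of_bdd (hs.F_meas t).aestronglyMeasurable (hK t ⟨le_rfl, le_rfl⟩)

theorem LocSol.integrable_w (hs : LocSol U m M v F w) (hφ : IsTest U φ) (t : ℝ) :
    Integrable fun x => (w t x : ℂ) * φ x := by
  obtain ⟨K, hK⟩ := hs.w_bdd t
  exact hφ.integrable_mul_of_bdd (hs.w_meas t).aestronglyMeasurable hK

theorem LocSol.continuous_F (hs : LocSol U m M v F w) (hφ : IsTest U φ) :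
    Continuous fun t => ∫ x, (F t x : ℂ) * φ x := by
  rw [continuous_iff_continuousAt]
  intro t
  obtain ⟨K, hK⟩ := hs.F_bdd (t - 1) (t + 1)
  have := ((hs.clip (by linarith) hK).continuous_integral hφ).continuousAt (x := t)
  refine this.congr ?_
  filter_upwards [Ioo_mem_nhds (sub_one_lt t) (lt_add_one t)] with s hs1
  rw [min_eq_right hs1.2.le, max_eq_right hs1.1.le]

theorem LocSol.continuous_wdot (hs : LocSol U m M v F w) (hφ : IsTest U φ) :
    Continuous (wdot m v F φ) :=
  (hs.continuous_F hφ).sub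
    (continuous_const.mul (hs.v_slice.continuous_integral (hφ.lapC_iter m)))

theorem LocSol.wdot_eq (hs : LocSol U m M v F w) (hφ : IsTest U φ) (t : ℝ) :
    wdot m v F φ t = ∫ x, ((F t x - w t x : ℝ) : ℂ) * φ x := by
  rw [wdot, ← hs.ibp φ hφ, ← integral_sub (hs.integrable_F hφ t) (hs.integrable_w hφ t)]
  congr 1; funext x; push_cast; ring

/-- On a time interval where the equation holds against all test functions, the increment of the
solution is `O(b - a)` in `L¹`, with a constant depending only on bounds for the source and for
`(-Δ)^m v` at the initial time. -/
theorem LocSol.gap_bound (hs : LocSol U (m + 1) M v F w) (hφ : IsTest U φ) (K k : ℝ) :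
    ∃ C : ℝ, 0 ≤ C ∧ ∀ a b, a < b → b ≤ a + 1 → (∀ t ∈ Icc a b, ∀ x ∈ U, |F t x| ≤ K) →
      (∀ x ∈ U, |w a x| ≤ k) →
      (∀ ψ, IsTest U ψ → ∀ t ∈ Ioo a b,
        HasDerivAt (fun t => ∫ x, (v t x : ℂ) * ψ x) (wdot (m + 1) v F ψ t) t) →
      ∫ x, ‖((v b x - v a x : ℝ) : ℂ) * φ x‖ ≤ C * (b - a) := by
  obtain ⟨C, hC, hmain⟩ := gap_estimate (m := m) (K := K + k) (M := M + M) hφ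
  refine ⟨√C * √(volume.real (tsupport φ)), by positivity, fun a b hab hb1 hF hw hd => ?_⟩
  have hgap : GapSol U (m + 1) (K + k) (M + M) (b - a) (fun t x => v (a + t) x - v a x)
      (fun t x => F (max a (min b (a + t))) x - w a x) := by
    refine ⟨by linarith, ⟨fun x => ?_, fun t => (hs.v_slice.meas _).sub (hs.v_slice.meas _),
      fun t x hx => ?_⟩, ⟨fun x => ?_, fun t => (hs.F_meas _).sub (hs.w_meas _),
      fun t x hx => ?_⟩, fun x => by simp, fun ψ hψ t ht => ?_⟩
    · exact ((hs.v_slice.cont x).comp (by fun_prop)).sub continuous_const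
    · exact (abs_sub _ _).trans (add_le_add (hs.v_slice.bdd _ x hx) (hs.v_slice.bdd _ x hx))
    · exact ((hs.F_cont x).comp (by fun_prop)).sub continuous_const
    · refine (abs_sub _ _).trans (add_le_add (hF _ ⟨le_max_left _ _, ?_⟩ x hx) (hw x hx))
      exact max_le hab.le (min_le_left _ _)
    · have hat : a + t ∈ Ioo a b := ⟨by linarith [ht.1], by linarith [ht.2]⟩
      have h1 := ((hd ψ hψ (a + t) hat).comp_const_add a t).sub_const (∫ x, (v a x : ℂ) * ψ x)
      have e1 : ∀ ζ, IsTest U ζ → ∀ t, ∫ x, ((v (a + t) x - v a x : ℝ) : ℂ) * ζ x =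
          (∫ x, (v (a + t) x : ℂ) * ζ x) - ∫ x, (v a x : ℂ) * ζ x := by
        intro ζ hζ t
        rw [← integral_sub (hs.v_slice.integrable hζ _) (hs.v_slice.integrable hζ _)]
        congr 1; funext x; push_cast; ring
      have e2 : ∫ x, ((F (a + t) x - w a x : ℝ) : ℂ) * ψ x =
          (∫ x, (F (a + t) x : ℂ) * ψ x) - ∫ x, (w a x : ℂ) * ψ x := by
        rw [← integral_sub (hs.integrable_F hψ _) (hs.integrable_w hψ _)]
        congr 1; funext x; push_cast; ring
      simp only [e1 ψ hψ]
      rw [e1 _ (hψ.lapC_iter _), min_eq_right hat.2.le, max_eq_right hat.1.le, e2, hs.ibp ψ hψ]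
      refine h1.congr_deriv ?_
      rw [wdot]; ring
  have h2 := hmain _ _ _ hgap (b - a) ⟨by linarith, le_rfl⟩
  rw [add_sub_cancel] at h2
  have hba : 0 ≤ b - a := by linarith
  have hint : Integrable fun x => ((v b x - v a x : ℝ) : ℂ) * φ x :=
    hφ.integrable_mul_of_bdd (M := M + M)
      ((hs.v_slice.meas b).sub (hs.v_slice.meas a)).aestronglyMeasurable (fun x hx =>
        (abs_sub _ _).trans (add_le_add (hs.v_slice.bdd _ x hx) (hs.v_slice.bdd _ x hx)))
  rw [integral_norm_eq_lintegral_enorm hint.aestronglyMeasurable]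
  apply ENNReal.toReal_le_of_le_ofReal (by positivity)
  have hvol : volume (tsupport φ) ≠ ⊤ := hφ.compact.isCompact.measure_lt_top.ne
  have hcs := ENNReal.lintegral_mul_le_Lp_mul_Lq volume Real.HolderConjugate.two_two
      (f := fun x => ‖((v b x - v a x : ℝ) : ℂ) * φ x‖ₑ)
      (g := (tsupport φ).indicator (fun _ => 1)) hint.aestronglyMeasurable.enorm
      (measurable_const.indicator (isClosed_tsupport φ).measurableSet).aemeasurable
  have e3 : ∀ x, ‖((v b x - v a x : ℝ) : ℂ) * φ x‖ₑ *
      (tsupport φ).indicator (fun _ => (1 : ℝ≥0∞)) x = ‖((v b x - v a x : ℝ) : ℂ) * φ x‖ₑ := by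
    intro x
    by_cases hx : x ∈ tsupport φ
    · simp [hx]
    · simp [hx, image_eq_zero_of_notMem_tsupport hx]
  have e4 : ∀ x, ((tsupport φ).indicator (fun _ => (1 : ℝ≥0∞)) x) ^ (2 : ℝ) =
      (tsupport φ).indicator (fun _ => 1) x := by
    intro x
    by_cases hx : x ∈ tsupport φ <;> simp [hx]
  simp only [Pi.mul_apply, e3, e4, ENNReal.rpow_two] at hcs
  rw [lintegral_indicator_const (isClosed_tsupport φ).measurableSet, one_mul] at hcs
  refine hcs.trans ?_
  calc _ ≤ ENNReal.ofReal (C * (b - a) ^ 2) ^ (1 / 2 : ℝ) *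
        ENNReal.ofReal (volume.real (tsupport φ)) ^ (1 / 2 : ℝ) := by
        rw [Measure.real, ENNReal.ofReal_toReal hvol]
        gcongr
    _ = _ := by
        rw [ENNReal.ofReal_rpow_of_nonneg (by positivity) (by norm_num),
          ENNReal.ofReal_rpow_of_nonneg (by positivity) (by norm_num),
          ← ENNReal.ofReal_mul (by positivity), ← Real.sqrt_eq_rpow, ← Real.sqrt_eq_rpow,
          Real.sqrt_mul hC, Real.sqrt_sq hba]
        congr 1; ring
end locsol

/-! ### The weak form of the equation -/

section regularity
variable {n : ℕ} {U : Set (EuclideanSpace ℝ (Fin n))} {m : ℕ} {M : ℝ}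
  {v F w : ℝ → EuclideanSpace ℝ (Fin n) → ℝ} {φ : EuclideanSpace ℝ (Fin n) → ℂ}

/-- If the weak form of the equation holds off a closed set `E` of times and `w` is bounded on
`U` uniformly over the times in `E`, then it can be integrated in time across `E`, starting at a
point of `E`. -/
theorem LocSol.increment (hs : LocSol U (m + 1) M v F w) (hφ : IsTest U φ) {E : Set ℝ}
    (hE : IsClosed E) {e t K k : ℝ} (he : e ∈ E) (het : e < t) (ht1 : t ≤ e + 1)
    (hF : ∀ s ∈ Icc e t, ∀ x ∈ U, |F s x| ≤ K)
    (hw : ∀ s ∈ E, s ∈ Icc e t → ∀ x ∈ U, |w s x| ≤ k)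
    (hd : ∀ s ∈ Ioo e t, s ∉ E → ∀ ψ, IsTest U ψ →
      HasDerivAt (fun t => ∫ x, (v t x : ℂ) * ψ x) (wdot (m + 1) v F ψ s) s) :
    (∫ x, (v t x : ℂ) * φ x) - (∫ x, (v e x : ℂ) * φ x) =
      ∫ s in e..t, wdot (m + 1) v F φ s := by
  set S : Set ℝ := (E ∩ Icc e t) ∪ {t} with hS
  have hSc : IsClosed S := (hE.inter isClosed_Icc).union isClosed_singleton
  have heS : e ∈ S := Or.inl ⟨he, le_rfl, het.le⟩
  have htS : t ∈ S := Or.inr rfl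
  have hSsub : S ⊆ Icc e t := by
    rintro x (hx | hx)
    · exact hx.2
    · rw [mem_singleton_iff.1 hx]; exact ⟨het.le, le_rfl⟩
  have hSE : ∀ s ∈ S, s < t → s ∈ E := by
    rintro s (h | h) hlt
    · exact h.1
    · exact absurd h hlt.ne
  have := (gapSet_countable S).to_subtype
  have hgc := hs.continuous_wdot hφ
  have hVc := hs.v_slice.continuous_integral hφ
  have hgapd : ∀ q : gapSet S, ∀ ψ, IsTest U ψ → ∀ s ∈ Ioo q.1.1 q.1.2,
      HasDerivAt (fun t => ∫ x, (v t x : ℂ) * ψ x) (wdot (m + 1) v F ψ s) s := by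
    rintro ⟨⟨a, b⟩, ha, hb, hab, hdis⟩ ψ hψ s hs1
    have hs2 : s ∈ Ioo e t := ⟨(hSsub ha).1.trans_lt hs1.1, hs1.2.trans_le (hSsub hb).2⟩
    exact hd s hs2 (fun h => Set.disjoint_left.1 hdis hs1
      (Or.inl ⟨h, hs2.1.le, hs2.2.le⟩)) ψ hψ
  have h1 := hasSum_gaps hSc heS htS hSsub
    (hgc.integrableOn_Icc.mono_set (Ioo_subset_Icc_self (a := e) (b := t)))
  have h2 : ∀ q : gapSet S, ∫ s in q.1.1..q.1.2, wdot (m + 1) v F φ s =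
      ∫ x, ((v q.1.2 x - v q.1.1 x : ℝ) : ℂ) * φ x := by
    intro q
    rw [intervalIntegral.integral_eq_sub_of_hasDerivAt_of_le q.2.2.2.1.le hVc.continuousOn
      (fun s hs1 => hgapd q φ hφ s hs1) (hgc.intervalIntegrable _ _),
      ← integral_sub (hs.v_slice.integrable hφ _) (hs.v_slice.integrable hφ _)]
    congr 1; funext x; push_cast; ring
  simp only [h2] at h1
  -- At each point the fundamental theorem of calculus splits the increment of `v` over the gaps;
  -- `gap_bound` makes the resulting series summable in `L¹`, so that it can be integrated in `x`.
  have h3 : ∀ x, HasSum (fun q : gapSet S => v q.1.2 x - v q.1.1 x)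
      (v t x - v e x - ∫ s in S ∩ Ioo e t, (F s x - w s x)) := by
    intro x
    have hc : Continuous fun s => F s x - w s x := (hs.F_cont x).sub (hs.w_cont x)
    have := hasSum_gaps hSc heS htS hSsub
      (hc.integrableOn_Icc.mono_set (Ioo_subset_Icc_self (a := e) (b := t)))
    have ftc : ∀ a b, ∫ s in a..b, (F s x - w s x) = v b x - v a x := fun a b =>
      intervalIntegral.integral_eq_sub_of_hasDerivAt (fun s _ => hs.deriv s x)
        (hc.intervalIntegrable _ _)
    simpa only [ftc] using this
  have hint : ∀ a b, Integrable fun x => ((v b x - v a x : ℝ) : ℂ) * φ x := fun a b =>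
    hφ.integrable_mul_of_bdd (M := M + M)
      ((hs.v_slice.meas b).sub (hs.v_slice.meas a)).aestronglyMeasurable (fun x hx =>
        (abs_sub _ _).trans (add_le_add (hs.v_slice.bdd _ x hx) (hs.v_slice.bdd _ x hx)))
  have hsum : Summable fun q : gapSet S => ∫ x, ‖((v q.1.2 x - v q.1.1 x : ℝ) : ℂ) * φ x‖ := by
    obtain ⟨C, hC, hb⟩ := hs.gap_bound hφ K k
    have hlen : Summable fun q : gapSet S => C * (q.1.2 - q.1.1) := by
      have := (hasSum_gaps hSc heS htS hSsub (f := fun _ => (1 : ℝ))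
        (integrableOn_const (by simp))).summable
      simp only [intervalIntegral.integral_const, smul_eq_mul, mul_one] at this
      exact this.mul_left C
    refine hlen.of_nonneg_of_le (fun q => integral_nonneg fun x => norm_nonneg _) (fun q => ?_)
    have ha := hSsub q.2.1
    have hb' := hSsub q.2.2.1
    have hab := q.2.2.2.1
    refine hb _ _ hab (by linarith [ha.1, hb'.2]) (fun s hs1 => hF s ?_) ?_ (hgapd q)
    · exact ⟨ha.1.trans hs1.1, hs1.2.trans hb'.2⟩
    · exact hw _ (hSE _ q.2.1 (hab.trans_le hb'.2)) ha
  have h4 := hasSum_integral_of_summable_integral_norm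
    (fun q : gapSet S => hint q.1.1 q.1.2) hsum
  have h5 := h1.unique h4
  have h6 : ∀ x, ∑' q : gapSet S, ((v q.1.2 x - v q.1.1 x : ℝ) : ℂ) * φ x =
      ((v t x - v e x : ℝ) : ℂ) * φ x -
        ∫ s in S ∩ Ioo e t, ((F s x - w s x : ℝ) : ℂ) * φ x := by
    intro x
    have := ((Complex.hasSum_ofReal).2 (h3 x)).mul_right (φ x)
    rw [this.tsum_eq, Complex.ofReal_sub (v t x - v e x), sub_mul, integral_mul_const,
      integral_complex_ofReal]
  -- Fubini on the exceptional set, where `F - w` is bounded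
  have hSm : MeasurableSet (S ∩ Ioo e t) := hSc.measurableSet.inter measurableSet_Ioo
  have hjm : Measurable (Function.uncurry fun (s : ℝ) x => F s x - w s x) :=
    (stronglyMeasurable_uncurry_of_continuous_of_stronglyMeasurable
      (fun x => (hs.F_cont x).sub (hs.w_cont x))
      (fun s => ((hs.F_meas s).sub (hs.w_meas s)).stronglyMeasurable)).measurable
  have hprod : Integrable (Function.uncurry fun (s : ℝ) x => ((F s x - w s x : ℝ) : ℂ) * φ x)
      ((volume.restrict (S ∩ Ioo e t)).prod volume) := by
    have hfin : IsFiniteMeasure (volume.restrict (S ∩ Ioo e t)) := by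
      refine ⟨?_⟩
      rw [Measure.restrict_apply_univ]
      exact (measure_mono inter_subset_right).trans_lt (by simp)
    have hb : Integrable (fun q : ℝ × EuclideanSpace ℝ (Fin n) => (K + k) * ‖φ q.2‖)
        ((volume.restrict (S ∩ Ioo e t)).prod volume) :=
      (hφ.integrable.norm.comp_snd _).const_mul _
    refine hb.mono' ?_ ?_
    · exact ((Complex.measurable_ofReal.comp hjm).mul
        (hφ.smooth.continuous.measurable.comp measurable_snd)).aestronglyMeasurable
    · have : ∀ᵐ q ∂((volume.restrict (S ∩ Ioo e t)).prod
          (volume : Measure (EuclideanSpace ℝ (Fin n)))), q.1 ∈ S ∩ Ioo e t :=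
        Measure.quasiMeasurePreserving_fst.ae (ae_restrict_mem hSm)
      filter_upwards [this] with q hq
      refine hφ.norm_mul_le (w := fun x => F q.1 x - w q.1 x) (fun x hx => ?_) q.2
      have hq2 := Ioo_subset_Icc_self hq.2
      exact (abs_sub _ _).trans (add_le_add (hF _ hq2 x hx)
        (hw _ (hSE _ hq.1 hq.2.2) hq2 x hx))
  have hfub : ∫ x, ∫ s in S ∩ Ioo e t, ((F s x - w s x : ℝ) : ℂ) * φ x =
      ∫ s in S ∩ Ioo e t, wdot (m + 1) v F φ s := by
    rw [← integral_integral_swap hprod]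
    refine integral_congr_ae (Filter.Eventually.of_forall fun s => ?_)
    exact (hs.wdot_eq hφ s).symm
  simp only [h6] at h5
  have hpi : Integrable fun x => ∫ s in S ∩ Ioo e t, ((F s x - w s x : ℝ) : ℂ) * φ x :=
    hprod.integral_prod_right
  rw [integral_sub (hint e t) hpi, hfub, sub_left_inj] at h5
  rw [h5, ← integral_sub (hs.v_slice.integrable hφ _) (hs.v_slice.integrable hφ _)]
  congr 1; funext x; push_cast; ring

/-- The weak form of the equation: `∫ v φ` is differentiable in time for every test function. If the
closed set `E` of bad times were nonempty, Baire's theorem on `E` would give a time interval meeting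
`E` on which `w` is bounded uniformly over `E`, and `LocSol.increment` would remove it. -/
theorem LocSol.hasDerivAt (hs : LocSol U (m + 1) M v F w) :
    ∀ t, ∀ φ, IsTest U φ →
      HasDerivAt (fun t => ∫ x, (v t x : ℂ) * φ x) (wdot (m + 1) v F φ t) t := by
  set Q : ℝ → Prop := fun t => ∀ φ, IsTest U φ →
      HasDerivAt (fun t => ∫ x, (v t x : ℂ) * φ x) (wdot (m + 1) v F φ t) t with hQ
  change ∀ t, Q t
  set E : Set ℝ := {t | ∀ᶠ s in 𝓝 t, Q s}ᶜ with hEdef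
  have hE : IsClosed E := by
    rw [hEdef, isClosed_compl_iff]
    exact isOpen_setOfPred_eventually_nhds
  have hQE : ∀ t, t ∉ E → Q t := fun t ht => (not_not.1 ht).self_of_nhds
  suffices hemp : E = ∅ from fun t => hQE t (by simp [hemp])
  by_contra hne
  have hne := nonempty_iff_ne_empty.2 hne
  have : Nonempty E := hne.to_subtype
  have : CompleteSpace E := hE.completeSpace_coe
  obtain ⟨k, hk⟩ := nonempty_interior_of_iUnion_of_closed
    (f := fun k : ℕ => {t : E | ∀ x ∈ U, |w t x| ≤ k}) (fun k => by
      simp only [Set.ofPred_forall]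
      refine isClosed_iInter fun x => isClosed_iInter fun _ => ?_
      exact isClosed_le ((hs.w_cont x).comp continuous_subtype_val).abs continuous_const) (by
      refine eq_univ_of_forall fun t => mem_iUnion.2 ?_
      obtain ⟨K, hK⟩ := hs.w_bdd t
      obtain ⟨k, hk⟩ := exists_nat_ge K
      exact ⟨k, fun x hx => (hK x hx).trans hk⟩)
  obtain ⟨⟨t0, ht0⟩, htk⟩ := hk
  rw [mem_interior_iff_mem_nhds, Metric.mem_nhds_iff] at htk
  obtain ⟨δ0, hδ0, hball⟩ := htk
  set δ := min δ0 (1 / 2) with hδ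
  have hδpos : 0 < δ := by positivity
  have hδ2 : δ ≤ 1 / 2 := min_le_right _ _
  have hw : ∀ s ∈ E, s ∈ Ioo (t0 - δ) (t0 + δ) → ∀ x ∈ U, |w s x| ≤ k := by
    intro s hsE hs1
    have : (⟨s, hsE⟩ : E) ∈ Metric.ball (⟨t0, ht0⟩ : E) δ0 := by
      rw [Metric.mem_ball, Subtype.dist_eq, Real.dist_eq, abs_sub_lt_iff]
      have := min_le_left δ0 (1 / 2 : ℝ)
      constructor <;> linarith [hs1.1, hs1.2]
    exact hball this
  obtain ⟨K, hK⟩ := hs.F_bdd (t0 - δ) (t0 + δ)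
  have hinc : ∀ φ, IsTest U φ → ∀ s ∈ Ioo (t0 - δ) (t0 + δ), ∀ t ∈ Ioo (t0 - δ) (t0 + δ),
      s < t → (∫ x, (v t x : ℂ) * φ x) - (∫ x, (v s x : ℂ) * φ x) =
      ∫ r in s..t, wdot (m + 1) v F φ r := by
    intro φ hφ s hs1 t ht1 hst
    have hgc := hs.continuous_wdot hφ
    have hVc := hs.v_slice.continuous_integral hφ
    have hfree : ∀ a b, a ≤ b → Disjoint (Ioo a b) E →
        (∫ x, (v b x : ℂ) * φ x) - (∫ x, (v a x : ℂ) * φ x) =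
          ∫ r in a..b, wdot (m + 1) v F φ r := by
      intro a b hab hdis
      rw [intervalIntegral.integral_eq_sub_of_hasDerivAt_of_le hab hVc.continuousOn
        (fun r hr => hQE r (Set.disjoint_left.1 hdis hr) φ hφ) (hgc.intervalIntegrable _ _)]
    have hfromE : ∀ e ∈ E, e ∈ Icc s t → (∫ x, (v t x : ℂ) * φ x) - (∫ x, (v e x : ℂ) * φ x) =
          ∫ r in e..t, wdot (m + 1) v F φ r := by
      intro e he hest
      rcases hest.2.eq_or_lt with h | h
      · simp [h]
      · have hsub : Icc e t ⊆ Ioo (t0 - δ) (t0 + δ) := fun r hr =>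
          ⟨hs1.1.trans_le (hest.1.trans hr.1), hr.2.trans_lt ht1.2⟩
        refine hs.increment hφ hE he h (by linarith [ht1.2, hs1.1, hest.1])
          (fun r hr => hK r (Ioo_subset_Icc_self (hsub hr)))
          (fun r hrE hr => hw r hrE (hsub hr)) (fun r _ hrE => hQE r hrE)
    by_cases hemp : (E ∩ Icc s t).Nonempty
    · have hcl : IsClosed (E ∩ Icc s t) := hE.inter isClosed_Icc
      have hbb : BddBelow (E ∩ Icc s t) := ⟨s, fun y hy => hy.2.1⟩
      have hmem := hcl.csInf_mem hemp hbb
      set e := sInf (E ∩ Icc s t)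
      have h1 := hfromE e hmem.1 hmem.2
      have h2 := hfree s e hmem.2.1 (by
        rw [Set.disjoint_left]
        intro r hr hrE
        exact absurd (csInf_le hbb ⟨hrE, hr.1.le, hr.2.le.trans hmem.2.2⟩) (not_le.2 hr.2))
      rw [← intervalIntegral.integral_add_adjacent_intervals (hgc.intervalIntegrable s e)
        (hgc.intervalIntegrable e t), ← h1, ← h2]
      ring
    · refine hfree s t hst.le ?_
      rw [Set.disjoint_left]
      intro r hr hrE
      exact hemp ⟨r, hrE, hr.1.le, hr.2.le⟩
  refine ht0 ?_
  filter_upwards [Ioo_mem_nhds (sub_lt_self t0 hδpos) (lt_add_of_pos_right t0 hδpos)]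
    with t ht φ hφ
  have hgc := hs.continuous_wdot hφ
  obtain ⟨c, hc1, hc2⟩ := exists_between ht.1
  have hcI : c ∈ Ioo (t0 - δ) (t0 + δ) := ⟨hc1, hc2.trans ht.2⟩
  have hder := (intervalIntegral.integral_hasDerivAt_right (hgc.intervalIntegrable c t)
    (hgc.stronglyMeasurableAtFilter _ _) hgc.continuousAt).const_add (∫ x, (v c x : ℂ) * φ x)
  refine hder.congr_of_eventuallyEq ?_
  filter_upwards [Ioo_mem_nhds hc2 ht.2] with s hs1
  rw [← hinc φ hφ c hcI s ⟨hc1.trans hs1.1, hs1.2⟩ hs1.1]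
  ring
end regularity

/-! ### The memory integral -/

section memory
variable {γ B : ℝ} {g : ℝ → ℝ}

theorem kernel_intervalIntegrable (hγ1 : γ < 1) (hg : Continuous g) (a t : ℝ) :
    IntervalIntegrable (fun s => (t - s) ^ (-γ) * g s) volume a t := by
  have hi : IntervalIntegrable (fun s : ℝ => (t - s) ^ (-γ)) volume a t := by
    have := (intervalIntegral.intervalIntegrable_rpow' (a := 0) (b := t - a) (r := -γ)
      (by linarith)).comp_sub_left t
    simpa using this.symm
  exact hi.mul_continuousOn hg.continuousOn

theorem memory_split (hγ1 : γ < 1) (hg : Continuous g) {a t : ℝ} (hat : a ≤ t)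
    (hint : IntegrableOn (fun s => (t - s) ^ (-γ) * g s) (Iio t)) :
    ∫ s in Iio t, (t - s) ^ (-γ) * g s =
      (∫ s in Iic a, (t - s) ^ (-γ) * g s) + ∫ s in a..t, (t - s) ^ (-γ) * g s := by
  rw [← integral_Iic_eq_integral_Iio, ← Iic_union_Ioc_eq_Iic hat,
    setIntegral_union (Iic_disjoint_Ioc le_rfl) measurableSet_Ioc,
    intervalIntegral.integral_of_le hat]
  · exact ((integrableOn_Iic_iff_integrableOn_Iio (by finiteness)).2 hint).mono_set (Iic_subset_Iic.2 hat)
  · exact (intervalIntegrable_iff_integrableOn_Ioc_of_le hat).1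
      (kernel_intervalIntegrable hγ1 hg a t)

/-- The memory integral is continuous in time: the far part is dominated, and the near part
becomes so after rescaling the interval of integration to `[0, 1]`. -/
theorem continuous_memory (hγ0 : 0 < γ) (hγ1 : γ < 1) (hg : Continuous g) (hB : ∀ s, |g s| ≤ B)
    (hint : ∀ t, IntegrableOn (fun s => (t - s) ^ (-γ) * g s) (Iio t)) :
    Continuous fun t => ∫ s in Iio t, (t - s) ^ (-γ) * g s := by
  rw [continuous_iff_continuousAt]
  intro t0
  set a := t0 - 2 with ha
  have hev : ∀ᶠ t in 𝓝 t0, t0 - 1 < t := lt_mem_nhds (by linarith)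
  have hfar : ContinuousAt (fun t => ∫ s in Iic a, (t - s) ^ (-γ) * g s) t0 := by
    refine continuousAt_of_dominated
      (bound := fun s => 2 ^ γ * ‖(t0 - s) ^ (-γ) * g s‖) ?_ ?_ ?_ ?_
    · exact Filter.Eventually.of_forall fun t =>
        (Measurable.mul (by fun_prop) hg.measurable).aestronglyMeasurable
    · filter_upwards [hev] with t ht
      filter_upwards [ae_restrict_mem measurableSet_Iic] with s hs1
      have hs2 : s ≤ t0 - 2 := hs1
      rw [norm_mul, norm_mul, ← mul_assoc]
      gcongr
      rw [Real.norm_of_nonneg (Real.rpow_nonneg (by linarith) _),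
        Real.norm_of_nonneg (Real.rpow_nonneg (by linarith) _)]
      have h1 : (t0 - s) / 2 ≤ t - s := by linarith
      calc (t - s) ^ (-γ) ≤ ((t0 - s) / 2) ^ (-γ) :=
            Real.rpow_le_rpow_of_nonpos (by linarith) h1 (by linarith)
        _ = 2 ^ γ * (t0 - s) ^ (-γ) := by
            rw [Real.div_rpow (by linarith) (by norm_num), Real.rpow_neg (by norm_num : (0:ℝ) ≤ 2)]
            field_simp
    · refine (Integrable.norm ?_).const_mul _
      exact (hint t0).mono_set (Iic_subset_Iio.2 (by linarith))
    · filter_upwards [ae_restrict_mem measurableSet_Iic] with s hs1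
      have hs2 : s ≤ t0 - 2 := hs1
      refine ContinuousAt.mul ?_ continuousAt_const
      exact ContinuousAt.rpow_const (by fun_prop) (Or.inl (by linarith))
  have hnear : ContinuousAt (fun t => (t - a) * ((t - a) ^ (-γ) * ∫ ρ in (0 : ℝ)..1,
      ρ ^ (-γ) * g (t - (t - a) * ρ))) t0 := by
    have hc : Continuous fun t => ∫ ρ in (0 : ℝ)..1, ρ ^ (-γ) * g (t - (t - a) * ρ) := by
      refine intervalIntegral.continuous_of_dominated_interval
        (bound := fun ρ => ‖ρ ^ (-γ)‖ * B) (fun t => ?_) (fun t => ?_) ?_ ?_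
      · exact (Measurable.mul (by fun_prop)
          (hg.measurable.comp (by fun_prop))).aestronglyMeasurable
      · refine Filter.Eventually.of_forall fun ρ _ => ?_
        rw [norm_mul]
        gcongr
        exact hB _
      · exact (intervalIntegral.intervalIntegrable_rpow' (by linarith)).norm.mul_const B
      · exact Filter.Eventually.of_forall fun ρ _ =>
          continuous_const.mul (hg.comp (by fun_prop))
    refine ContinuousAt.mul (by fun_prop) (ContinuousAt.mul ?_ hc.continuousAt)
    exact ContinuousAt.rpow_const (by fun_prop) (Or.inl (by linarith))
  refine (hfar.add hnear).congr ?_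
  filter_upwards [hev] with t ht
  have hta : 0 < t - a := by linarith
  rw [memory_split hγ1 hg (by linarith : a ≤ t) (hint t)]
  rw [Pi.add_apply]
  congr 1
  have h1 := intervalIntegral.integral_comp_sub_mul (a := 0) (b := 1)
    (fun s => (t - s) ^ (-γ) * g s) hta.ne' t
  simp only [mul_one, mul_zero, sub_zero, sub_sub_cancel, smul_eq_mul] at h1
  rw [eq_inv_mul_iff_mul_eq₀ hta.ne'] at h1
  rw [← h1, ← intervalIntegral.integral_const_mul ((t - a) ^ (-γ))]
  congr 1
  refine intervalIntegral.integral_congr fun ρ hρ => ?_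
  rw [uIcc_of_le zero_le_one] at hρ
  rw [Real.mul_rpow hta.le hρ.1]
  ring

/-- The memory integrals at different times are comparable, up to a bounded term. -/
theorem memory_le (hγ0 : 0 < γ) (hγ1 : γ < 1) (hg : Continuous g) (hB : ∀ s, g s ≤ B)
    (hg0 : ∀ s, 0 ≤ g s)
    (hint : ∀ t, IntegrableOn (fun s => (t - s) ^ (-γ) * g s) (Iio t)) {T t : ℝ}
    (ht : |t| ≤ T) :
    ∫ s in Iio t, (t - s) ^ (-γ) * g s ≤
      (T + 1) ^ γ * (∫ s in Iio 0, (0 - s) ^ (-γ) * g s) +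
        B * ((2 * T + 1) ^ (1 - γ) / (1 - γ)) := by
  have hT : 0 ≤ T := (abs_nonneg _).trans ht
  obtain ⟨ht1, ht2⟩ := abs_le.1 ht
  rw [memory_split hγ1 hg (by linarith : -T - 1 ≤ t) (hint t)]
  have hB0 : 0 ≤ B := (hg0 0).trans (hB 0)
  refine add_le_add ?_ ?_
  · have hsub : Iic (-T - 1) ⊆ Iio 0 := Iic_subset_Iio.2 (by linarith)
    calc ∫ s in Iic (-T - 1), (t - s) ^ (-γ) * g s
        ≤ ∫ s in Iic (-T - 1), (T + 1) ^ γ * ((0 - s) ^ (-γ) * g s) := by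
          refine setIntegral_mono_on ((hint t).mono_set (Iic_subset_Iio.2 (by linarith)))
            (((hint 0).mono_set hsub).const_mul _) measurableSet_Iic (fun s hs => ?_)
          have hs1 : s ≤ -T - 1 := hs
          rw [← mul_assoc]
          refine mul_le_mul_of_nonneg_right ?_ (hg0 s)
          have h1 : (0 - s) / (T + 1) ≤ t - s := by
            rw [div_le_iff₀ (by linarith)]; nlinarith
          calc (t - s) ^ (-γ) ≤ ((0 - s) / (T + 1)) ^ (-γ) :=
                Real.rpow_le_rpow_of_nonpos (div_pos (by linarith) (by linarith)) h1 (by linarith)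
            _ = (T + 1) ^ γ * (0 - s) ^ (-γ) := by
                rw [Real.div_rpow (by linarith) (by linarith),
                  Real.rpow_neg (by linarith : (0:ℝ) ≤ T + 1)]
                field_simp
      _ ≤ _ := by
          rw [integral_const_mul]
          refine mul_le_mul_of_nonneg_left ?_ (by positivity)
          refine setIntegral_mono_set (hint 0) ?_ (Filter.Eventually.of_forall hsub)
          filter_upwards [ae_restrict_mem measurableSet_Iio] with s hs
          have hs1 : s < 0 := hs
          exact mul_nonneg (Real.rpow_nonneg (by linarith) _) (hg0 s)
  · calc ∫ s in (-T - 1)..t, (t - s) ^ (-γ) * g s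
        ≤ ∫ s in (-T - 1)..t, B * (t - s) ^ (-γ) := by
          refine intervalIntegral.integral_mono_on (by linarith)
            (kernel_intervalIntegrable hγ1 hg _ t) ?_ (fun s hs => ?_)
          · simpa using (kernel_intervalIntegrable hγ1 continuous_const (g := fun _ => (1:ℝ))
              (-T - 1) t).const_mul B
          · rw [mul_comm]
            exact mul_le_mul_of_nonneg_right (hB s) (Real.rpow_nonneg (by linarith [hs.2]) _)
      _ = B * ((t + T + 1) ^ (1 - γ) / (1 - γ)) := by
          rw [intervalIntegral.integral_const_mul,
            intervalIntegral.integral_comp_sub_left (fun s => s ^ (-γ)), sub_self,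
            integral_rpow (Or.inl (by linarith)), Real.zero_rpow (by linarith), sub_zero,
            neg_add_eq_sub, show t - (-T - 1) = t + T + 1 by ring]
      _ ≤ _ := by
          have : 0 < 1 - γ := by linarith
          have : t + T + 1 ≤ 2 * T + 1 := by linarith
          have : 0 ≤ t + T + 1 := by linarith
          gcongr
end memory

/-! ### Localization of the global solution -/

section solution
variable {n : ℕ}

/-- The memory term `∫_{-∞}^t (t - s)^{-γ} |v(s, x)|^p ds`. -/
noncomputable def memF (γ p : ℝ) (v : ℝ → EuclideanSpace ℝ (Fin n) → ℝ) (t : ℝ)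
    (x : EuclideanSpace ℝ (Fin n)) : ℝ :=
  ∫ s in Iio t, (t - s) ^ (-γ) * |v s x| ^ p

/-- The function `v` is a classical solution, bounded by `M`, of
`v_t + (-Δ)^m v = ∫_{-∞}^t (t - s)^{-γ} |v(s)|^p ds` on `ℝ × ℝⁿ`. -/
structure GlobSol (m : ℕ) (γ p M : ℝ) (v : ℝ → EuclideanSpace ℝ (Fin n) → ℝ) : Prop where
  γ_pos : 0 < γ
  γ_lt : γ < 1
  p_gt : 1 < p
  bdd : ∀ t x, |v t x| ≤ M
  c1 : ∀ x, ContDiff ℝ 1 (fun t => v t x)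
  c2m : ∀ t, ContDiff ℝ (2 * m : ℕ) (v t)
  int : ∀ t x, IntegrableOn (fun s => (t - s) ^ (-γ) * |v s x| ^ p) (Iio t)
  eq : ∀ t x, deriv (fun s => v s x) t + negLapPow n m (v t) x = memF γ p v t x

variable {m : ℕ} {γ p M : ℝ} {v : ℝ → EuclideanSpace ℝ (Fin n) → ℝ}

theorem GlobSol.M_nonneg (h : GlobSol m γ p M v) : 0 ≤ M := (abs_nonneg _).trans (h.bdd 0 0)

theorem GlobSol.cont_time (h : GlobSol m γ p M v) (x : EuclideanSpace ℝ (Fin n)) :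
    Continuous fun t => v t x := (h.c1 x).continuous

theorem GlobSol.cont_space (h : GlobSol m γ p M v) (t : ℝ) : Continuous (v t) :=
  (h.c2m t).continuous

theorem GlobSol.cont_pow (h : GlobSol m γ p M v) (x : EuclideanSpace ℝ (Fin n)) :
    Continuous fun t => |v t x| ^ p :=
  (h.cont_time x).abs.rpow_const fun _ => Or.inr (by linarith [h.p_gt])

theorem GlobSol.pow_le (h : GlobSol m γ p M v) (t : ℝ) (x : EuclideanSpace ℝ (Fin n)) :
    |v t x| ^ p ≤ M ^ p :=
  Real.rpow_le_rpow (abs_nonneg _) (h.bdd t x) (by linarith [h.p_gt])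

theorem GlobSol.memF_nonneg (_ : GlobSol m γ p M v) (t : ℝ) (x : EuclideanSpace ℝ (Fin n)) :
    0 ≤ memF γ p v t x := by
  refine setIntegral_nonneg measurableSet_Iio fun s hs => ?_
  have hs1 : s < t := hs
  exact mul_nonneg (Real.rpow_nonneg (by linarith) _) (by positivity)

theorem GlobSol.memF_cont (h : GlobSol m γ p M v) (x : EuclideanSpace ℝ (Fin n)) :
    Continuous fun t => memF γ p v t x := by
  refine continuous_memory h.γ_pos h.γ_lt (h.cont_pow x) (B := M ^ p) (fun s => ?_)
    (fun t => h.int t x)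
  rw [abs_of_nonneg (by positivity)]
  exact h.pow_le s x

theorem GlobSol.measurable_uncurry (h : GlobSol m γ p M v) : Measurable (Function.uncurry v) :=
  (stronglyMeasurable_uncurry_of_continuous_of_stronglyMeasurable h.cont_time
    (fun t => (h.cont_space t).stronglyMeasurable)).measurable

theorem GlobSol.memF_meas (h : GlobSol m γ p M v) (t : ℝ) : Measurable (memF γ p v t) := by
  have hm : Measurable (fun q : ℝ × EuclideanSpace ℝ (Fin n) =>
      (t - q.1) ^ (-γ) * |v q.1 q.2| ^ p) := by
    refine Measurable.mul (by fun_prop) ?_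
    have := h.measurable_uncurry
    exact (this.norm).pow_const p
  exact (hm.stronglyMeasurable.integral_prod_left' (μ := volume.restrict (Iio t))).measurable

/-- The memory term at time `0` is lower semicontinuous in space, by Fatou's lemma. -/
theorem GlobSol.isClosed_memF_le (h : GlobSol m γ p M v) (k : ℝ) :
    IsClosed {x | memF γ p v 0 x ≤ k} := by
  refine IsSeqClosed.isClosed fun xs x hxs hx => ?_
  have hlin : ∀ y, ENNReal.ofReal (memF γ p v 0 y) =
      ∫⁻ s in Iio 0, ENNReal.ofReal ((0 - s) ^ (-γ) * |v s y| ^ p) := fun y => by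
    refine ofReal_integral_eq_lintegral_ofReal (h.int 0 y) ?_
    filter_upwards [ae_restrict_mem measurableSet_Iio] with s hs
    have hs1 : s < 0 := hs
    exact mul_nonneg (Real.rpow_nonneg (by linarith) _) (by positivity)
  have hk : 0 ≤ k := (h.memF_nonneg 0 _).trans (hxs 0)
  change memF γ p v 0 x ≤ k
  rw [← ENNReal.ofReal_le_ofReal_iff hk, hlin]
  have hp := h.p_gt
  calc ∫⁻ s in Iio 0, ENNReal.ofReal ((0 - s) ^ (-γ) * |v s x| ^ p)
      = ∫⁻ s in Iio 0, Filter.liminf (fun j => ENNReal.ofReal ((0 - s) ^ (-γ) * |v s (xs j)| ^ p))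
          Filter.atTop := by
        refine lintegral_congr fun s => ?_
        have hc : Continuous fun y => ENNReal.ofReal ((0 - s) ^ (-γ) * |v s y| ^ p) :=
          ENNReal.continuous_ofReal.comp (continuous_const.mul
            ((h.cont_space s).abs.rpow_const fun _ => Or.inr (by linarith)))
        exact ((hc.tendsto x).comp hx).liminf_eq.symm
    _ ≤ Filter.liminf (fun j => ∫⁻ s in Iio 0, ENNReal.ofReal ((0 - s) ^ (-γ) * |v s (xs j)| ^ p))
          Filter.atTop := by
        refine lintegral_liminf_le fun j => ?_
        exact (Measurable.mul (by fun_prop) (h.cont_pow (xs j)).measurable).ennreal_ofReal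
    _ ≤ ENNReal.ofReal k := by
        refine (Filter.liminf_le_of_frequently_le' (Filter.Frequently.of_forall fun j => ?_))
        rw [← hlin]
        exact ENNReal.ofReal_le_ofReal (hxs j)

/-- Every nonempty open set contains a ball on which the memory term is bounded, locally uniformly in
time: by Baire's theorem it is bounded on some ball at time `0`, and `memory_le` transfers the bound
to other times. -/
theorem GlobSol.exists_locSol (h : GlobSol m γ p M v) {W : Set (EuclideanSpace ℝ (Fin n))}
    (hW : IsOpen W) (hne : W.Nonempty) :
    ∃ x0, ∃ r > 0, Metric.ball x0 r ⊆ W ∧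
      LocSol (Metric.ball x0 r) m M v (memF γ p v) (fun t => negLapPow n m (v t)) := by
  have hden := dense_iUnion_interior_of_closed (f := fun k : ℕ => {x | memF γ p v 0 x ≤ k})
    (fun k => h.isClosed_memF_le k) (by
      refine eq_univ_of_forall fun x => mem_iUnion.2 ?_
      exact exists_nat_ge (memF γ p v 0 x))
  obtain ⟨x0, hx0W, hx0⟩ := hden.inter_open_nonempty W hW hne
  obtain ⟨k, hk⟩ := mem_iUnion.1 hx0
  have hnhds : W ∩ interior {x | memF γ p v 0 x ≤ k} ∈ 𝓝 x0 :=
    (hW.inter isOpen_interior).mem_nhds ⟨hx0W, hk⟩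
  obtain ⟨r, hr, hball⟩ := Metric.mem_nhds_iff.1 hnhds
  refine ⟨x0, r, hr, fun x hx => (hball hx).1, ?_⟩
  have hFk : ∀ x ∈ Metric.ball x0 r, memF γ p v 0 x ≤ k := fun x hx => by
    have h1 : x ∈ {x | memF γ p v 0 x ≤ k} := interior_subset (hball hx).2
    exact h1
  have hder : ∀ t x, memF γ p v t x - negLapPow n m (v t) x = deriv (fun s => v s x) t :=
    fun t x => by rw [← h.eq t x]; ring
  have hwc : ∀ t, Continuous (negLapPow n m (v t)) := fun t =>
    continuous_const.mul (continuous_lapE_iter m (h.c2m t))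
  refine ⟨⟨h.cont_time, fun t => (h.cont_space t).measurable, fun t x _ => h.bdd t x⟩,
    h.memF_cont, h.memF_meas, fun a b => ?_, fun x => ?_, fun t => (hwc t).measurable,
    fun t => ?_, fun t x => ?_, fun φ hφ t => ?_⟩
  · set T := max |a| |b|
    refine ⟨(T + 1) ^ γ * k + M ^ p * ((2 * T + 1) ^ (1 - γ) / (1 - γ)), fun t ht x hx => ?_⟩
    rw [abs_of_nonneg (h.memF_nonneg t x)]
    have hT : |t| ≤ T := abs_le_max_abs_abs ht.1 ht.2
    refine (memory_le h.γ_pos h.γ_lt (h.cont_pow x) (fun s => h.pow_le s x)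
      (fun s => by positivity) (fun t => h.int t x) hT).trans ?_
    have hT0 : 0 ≤ T := (abs_nonneg _).trans hT
    gcongr
    exact hFk x hx
  · have : (fun t => negLapPow n m (v t) x) =
        fun t => memF γ p v t x - deriv (fun s => v s x) t := by
      funext t; rw [← hder]; ring
    rw [this]
    exact (h.memF_cont x).sub ((h.c1 x).continuous_deriv le_rfl)
  · obtain ⟨C, hC⟩ := (isCompact_closedBall x0 r).exists_bound_of_continuousOn (hwc t).continuousOn
    exact ⟨C, fun x hx => hC x (Metric.ball_subset_closedBall hx)⟩
  · rw [hder]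
    exact (((h.c1 x).differentiable one_ne_zero) t).hasDerivAt
  · rw [← integral_lapE_iter_mul m hφ (h.c2m t), ← integral_const_mul]
    congr 1; funext x
    simp only [negLapPow]
    push_cast
    ring
end solution

/-! ### A scalar Liouville argument -/

section scalar
variable {γ p C₀ C K : ℝ} {V V' f : ℝ → ℝ}

/-- The exponential memory `H(t) = ∫_{T₀}^t e^{-ε(t-s)} f(s) ds` satisfies `H' = f - ε H`. If
`V' ≥ 2 l ε H - l f - D`, then `V + l H` satisfies a differential inequality which forces it to grow
exponentially as soon as it exceeds `C₀ + D / ε`; as `V` and `H` are bounded, this never happens. -/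
theorem exp_memory_le {ε l D T₀ : ℝ} (hε : 0 < ε) (hl : 0 < l)
    (hV : ∀ t, HasDerivAt V (V' t) t) (hV0 : ∀ t, |V t| ≤ C₀)
    (hf : Continuous f) (hfK : ∀ t, f t ≤ K)
    (hineq : ∀ t, T₀ ≤ t → 2 * l * ε * (exp (-ε * t) * ∫ s in T₀..t, exp (ε * s) * f s)
      - l * f t - D ≤ V' t) {t : ℝ} (ht : T₀ ≤ t) :
    l * (exp (-ε * t) * ∫ s in T₀..t, exp (ε * s) * f s) ≤ 2 * C₀ + D / ε := by
  set G : ℝ → ℝ := fun t => ∫ s in T₀..t, exp (ε * s) * f s with hG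
  have hcont : Continuous fun s => exp (ε * s) * f s := by fun_prop
  have hGd : ∀ t, HasDerivAt G (exp (ε * t) * f t) t := fun t =>
    (hcont.integral_hasStrictDerivAt T₀ t).hasDerivAt
  have hEd : ∀ t, HasDerivAt (fun t => exp (-ε * t)) (exp (-ε * t) * (-ε)) t := fun t => by
    simpa using ((hasDerivAt_id t).const_mul (-ε)).exp
  set A := C₀ + D / ε with hA
  set Y : ℝ → ℝ := fun t => exp (-ε * t) * (V t + l * (exp (-ε * t) * G t) - A) with hY
  have hYd : ∀ t, HasDerivAt Y (exp (-ε * t) *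
      (V' t + l * f t - 2 * l * ε * (exp (-ε * t) * G t) - ε * (V t - A))) t := fun t => by
    have h := (hEd t).mul (((hV t).add (((hEd t).mul (hGd t)).const_mul l)).sub_const A)
    refine h.congr_deriv ?_
    have he : exp (-ε * t) * exp (ε * t) = 1 := by rw [← Real.exp_add]; simp
    simp only [Pi.mul_apply, Pi.add_apply]
    linear_combination (exp (-ε * t) * l * f t) * he
  have hmono : MonotoneOn Y (Ici T₀) := by
    refine monotoneOn_of_deriv_nonneg (convex_Ici _)
      (fun t _ => (hYd t).continuousAt.continuousWithinAt)
      (fun t _ => (hYd t).differentiableAt.differentiableWithinAt) fun t ht => ?_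
    rw [interior_Ici] at ht
    rw [(hYd t).deriv]
    refine mul_nonneg (exp_pos _).le ?_
    have h1 := hineq t (le_of_lt ht)
    have h2 : V t ≤ C₀ := (le_abs_self _).trans (hV0 t)
    have h3 : ε * (V t - A) = ε * (V t - C₀) - D := by rw [hA]; field_simp; ring
    have h4 : ε * (V t - C₀) ≤ 0 := mul_nonpos_of_nonneg_of_nonpos hε.le (by linarith)
    simp only [hG] at *
    linarith
  -- Together with the bound on `V`, this dominates `Y` by a decaying exponential.
  have hH : ∀ t, T₀ ≤ t → exp (-ε * t) * G t ≤ |K| / ε := fun t ht => by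
    have h1 : G t ≤ ∫ s in T₀..t, exp (ε * s) * |K| :=
      intervalIntegral.integral_mono_on ht (hcont.intervalIntegrable _ _)
        ((by fun_prop : Continuous fun s => exp (ε * s) * |K|).intervalIntegrable _ _) fun s _ =>
          mul_le_mul_of_nonneg_left ((hfK s).trans (le_abs_self _)) (exp_pos _).le
    have h2 : ∫ s in T₀..t, exp (ε * s) * |K| = (exp (ε * t) - exp (ε * T₀)) / ε * |K| := by
      rw [intervalIntegral.integral_mul_const, intervalIntegral.integral_comp_mul_left _ hε.ne',
        integral_exp, smul_eq_mul]
      ring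
    have he : exp (-ε * t) * exp (ε * t) = 1 := by rw [← Real.exp_add]; simp
    calc exp (-ε * t) * G t ≤ exp (-ε * t) * ((exp (ε * t)) / ε * |K|) := by
          rw [h2] at h1
          refine mul_le_mul_of_nonneg_left (h1.trans ?_) (exp_pos _).le
          gcongr
          linarith [exp_pos (ε * T₀)]
      _ = |K| / ε := by linear_combination (|K| / ε) * he
  have hYle : Y t ≤ 0 := by
    have hlim : Filter.Tendsto (fun s => exp (-ε * s) * (C₀ + l * (|K| / ε) - A)) Filter.atTop
        (𝓝 (0 * (C₀ + l * (|K| / ε) - A))) := by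
      refine Filter.Tendsto.mul_const _ (Real.tendsto_exp_atBot.comp ?_)
      exact Filter.tendsto_id.const_mul_atTop_of_neg (by linarith)
    rw [zero_mul] at hlim
    refine ge_of_tendsto hlim ?_
    filter_upwards [Filter.eventually_ge_atTop t] with s hs
    refine (hmono ht (ht.trans hs : T₀ ≤ s) hs).trans ?_
    refine mul_le_mul_of_nonneg_left ?_ (exp_pos _).le
    have h1 := mul_le_mul_of_nonneg_left (hH s (ht.trans hs)) hl.le
    have h2 : V s ≤ C₀ := (le_abs_self _).trans (hV0 s)
    linarith
  have h5 : V t + l * (exp (-ε * t) * G t) - A ≤ 0 := by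
    by_contra hc
    exact absurd hYle (not_le.2 (mul_pos (exp_pos _) (not_le.1 hc)))
  have h6 := neg_le_of_abs_le (hV0 t)
  linarith

/-- A bounded function whose derivative dominates `ε^γ H - l f - C l^{-1/(p-1)}` for all `ε, l > 0`,
with `H` the exponential memory of `f`, forces `f = 0`. With `l = ε^{γ-1} / 2`, `exp_memory_le` bounds
`H` by a combination of `ε^{1-γ}` and `ε^{(1-γ)/(p-1) - γ}`; both exponents are positive, the second
one because `γ p < 1`, and `ε → 0` gives the claim. -/
theorem scalar_liouville (hγ0 : 0 < γ) (hγ1 : γ < 1) (hp : 1 < p) (hγp : γ * p < 1)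
    (hV : ∀ t, HasDerivAt V (V' t) t) (hV0 : ∀ t, |V t| ≤ C₀)
    (hf : Continuous f) (hf0 : ∀ t, 0 ≤ f t) (hfK : ∀ t, f t ≤ K)
    (hineq : ∀ T₀ ε l t, 0 < ε → 0 < l → T₀ ≤ t →
      ε ^ γ * (exp (-ε * t) * ∫ s in T₀..t, exp (ε * s) * f s) - l * f t
        - C * l ^ (-(1 / (p - 1))) ≤ V' t) (t : ℝ) : f t = 0 := by
  set q := 1 / (p - 1) with hq
  have hp1 : 0 < p - 1 := by linarith
  have hq1 : 0 < (1 - γ) * q - γ := by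
    have : (1 - γ) * q - γ = (1 - γ * p) / (p - 1) := by rw [hq]; field_simp; ring
    rw [this]; exact div_pos (by linarith) hp1
  have key : ∀ ε : ℝ, 0 < ε → exp (-ε * (t + 1)) * ∫ s in t..(t + 1), exp (ε * s) * f s ≤
      4 * C₀ * ε ^ (1 - γ) + 2 * C * (1 / 2) ^ (-q) * ε ^ ((1 - γ) * q - γ) := fun ε hε => by
    have hl : 0 < ε ^ (γ - 1) / 2 := by positivity
    have h := exp_memory_le (D := C * (ε ^ (γ - 1) / 2) ^ (-q)) (T₀ := t) (t := t + 1) hε hl hV hV0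
      hf hfK (fun t' ht' => by
        have := hineq t ε _ t' hε hl ht'
        have he : 2 * (ε ^ (γ - 1) / 2) * ε = ε ^ γ := by
          rw [Real.rpow_sub_one hε.ne']; field_simp
        rw [he]; exact this) (by linarith)
    have e1 : ε ^ (1 - γ) * ε ^ (γ - 1) = 1 := by
      rw [← Real.rpow_add hε]; simp
    have e2 : (ε ^ (γ - 1) / 2) ^ (-q) = (1 / 2) ^ (-q) * ε ^ ((1 - γ) * q) := by
      rw [show ε ^ (γ - 1) / 2 = (1 / 2) * ε ^ (γ - 1) by ring,
        Real.mul_rpow (by norm_num) (by positivity), ← Real.rpow_mul hε.le]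
      congr 2; ring
    have e3 : ε ^ ((1 - γ) * q - γ) = ε ^ ((1 - γ) * q) / ε * ε ^ (1 - γ) := by
      rw [div_mul_eq_mul_div, ← Real.rpow_add hε, ← Real.rpow_sub_one hε.ne']
      congr 1; ring
    have h' := mul_le_mul_of_nonneg_left h (by positivity : 0 ≤ 2 * ε ^ (1 - γ))
    rw [e2] at h'
    rw [e3]
    calc _ = 2 * ε ^ (1 - γ) * (ε ^ (γ - 1) / 2 *
          (exp (-ε * (t + 1)) * ∫ s in t..(t + 1), exp (ε * s) * f s)) := by
            linear_combination (-(exp (-ε * (t + 1)) * ∫ s in t..(t + 1), exp (ε * s) * f s)) * e1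
      _ ≤ _ := h'
      _ = _ := by ring
  have hlow : ∀ ε : ℝ, 0 < ε → exp (-ε) * ∫ s in t..(t + 1), f s ≤
      4 * C₀ * ε ^ (1 - γ) + 2 * C * (1 / 2) ^ (-q) * ε ^ ((1 - γ) * q - γ) := fun ε hε => by
    refine le_trans ?_ (key ε hε)
    rw [← intervalIntegral.integral_const_mul, ← intervalIntegral.integral_const_mul]
    refine intervalIntegral.integral_mono_on (by linarith)
      ((by fun_prop : Continuous _).intervalIntegrable _ _)
      ((by fun_prop : Continuous _).intervalIntegrable _ _) fun s hs => ?_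
    rw [← mul_assoc, ← Real.exp_add]
    refine mul_le_mul_of_nonneg_right (exp_le_exp.2 ?_) (hf0 s)
    nlinarith [hs.1]
  have hzero : ∫ s in t..(t + 1), f s ≤ 0 := by
    have hL : Filter.Tendsto (fun ε : ℝ => exp (-ε) * ∫ s in t..(t + 1), f s) (𝓝[>] 0)
        (𝓝 (∫ s in t..(t + 1), f s)) := by
      have : Continuous fun ε : ℝ => exp (-ε) * ∫ s in t..(t + 1), f s := by fun_prop
      simpa using (this.tendsto 0).mono_left nhdsWithin_le_nhds
    have hR : Filter.Tendsto (fun ε : ℝ => 4 * C₀ * ε ^ (1 - γ) +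
        2 * C * (1 / 2) ^ (-q) * ε ^ ((1 - γ) * q - γ)) (𝓝[>] 0) (𝓝 0) := by
      have hg1 : 0 < 1 - γ := by linarith
      have : Continuous fun ε : ℝ => 4 * C₀ * ε ^ (1 - γ) +
          2 * C * (1 / 2) ^ (-q) * ε ^ ((1 - γ) * q - γ) :=
        (continuous_const.mul (continuous_id.rpow_const fun _ => Or.inr hg1.le)).add
          (continuous_const.mul (continuous_id.rpow_const fun _ => Or.inr hq1.le))
      have h0 := (this.tendsto 0).mono_left (nhdsWithin_le_nhds (s := Ioi 0))
      simpa [Real.zero_rpow hg1.ne', Real.zero_rpow hq1.ne'] using h0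
    refine le_of_tendsto_of_tendsto hL hR ?_
    filter_upwards [self_mem_nhdsWithin] with ε hε
    exact hlow ε hε
  by_contra hne
  have hpos : 0 < f t := lt_of_le_of_ne (hf0 t) (Ne.symm hne)
  have := intervalIntegral.integral_pos (by linarith : t < t + 1) hf.continuousOn
    (fun s _ => hf0 s) ⟨t, ⟨le_rfl, by linarith⟩, hpos⟩
  linarith

end scalar

/-! ### The cut-off function and elementary inequalities -/

section cutoff
variable {n : ℕ} {e ζ : EuclideanSpace ℝ (Fin n) → ℂ}

theorem pdC_pow_mul (he : ContDiff ℝ ∞ e) (hζ : ContDiff ℝ ∞ ζ) (k : ℕ) (i : Fin n) :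
    ∃ ζ' : EuclideanSpace ℝ (Fin n) → ℂ, ContDiff ℝ ∞ ζ' ∧
      pdC i (fun x => e x ^ (k + 1) * ζ x) = fun x => e x ^ k * ζ' x := by
  refine ⟨fun x => e x * pdC i ζ x + (k + 1) * (pdC i e x * ζ x),
    (he.mul (contDiff_pdC hζ i)).add
      (contDiff_const.mul ((contDiff_pdC he i).mul hζ)), ?_⟩
  rw [pdC_mul (he.pow _) hζ]
  funext x
  have hd : pdC i (fun x => e x ^ (k + 1)) x = (k + 1) * e x ^ k * pdC i e x := by
    have h := ((he.differentiable (by simp) x).hasFDerivAt.pow (k + 1)).fderiv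
    simp only [pdC]
    rw [h]
    simp
  rw [hd]
  ring

theorem lapC_pow_mul (he : ContDiff ℝ ∞ e) (hζ : ContDiff ℝ ∞ ζ) (k : ℕ) :
    ∃ ζ' : EuclideanSpace ℝ (Fin n) → ℂ, ContDiff ℝ ∞ ζ' ∧
      lapC (fun x => e x ^ (k + 2) * ζ x) = fun x => e x ^ k * ζ' x := by
  have h : ∀ i : Fin n, ∃ ζ' : EuclideanSpace ℝ (Fin n) → ℂ, ContDiff ℝ ∞ ζ' ∧
      pdC i (pdC i (fun x => e x ^ (k + 2) * ζ x)) = fun x => e x ^ k * ζ' x := fun i => by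
    obtain ⟨ζ₁, h1, e1⟩ := pdC_pow_mul he hζ (k + 1) i
    obtain ⟨ζ₂, h2, e2⟩ := pdC_pow_mul he h1 k i
    exact ⟨ζ₂, h2, by rw [e1, e2]⟩
  choose z hz hze using h
  refine ⟨fun x => ∑ i, z i x, ContDiff.sum fun i _ => hz i, ?_⟩
  funext x
  simp only [lapC, hze, Finset.mul_sum]

/-- Each derivative of `e ^ k * ζ` costs at most one power of `e`. -/
theorem lapC_iter_pow_mul (he : ContDiff ℝ ∞ e) (hζ : ContDiff ℝ ∞ ζ) (k m : ℕ) :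
    ∃ ζ' : EuclideanSpace ℝ (Fin n) → ℂ, ContDiff ℝ ∞ ζ' ∧
      lapC^[m] (fun x => e x ^ (k + 2 * m) * ζ x) = fun x => e x ^ k * ζ' x := by
  induction m generalizing ζ with
  | zero => exact ⟨ζ, hζ, rfl⟩
  | succ m ih =>
    obtain ⟨ζ₁, h1, e1⟩ := lapC_pow_mul he hζ (k + 2 * m)
    obtain ⟨ζ₂, h2, e2⟩ := ih h1
    refine ⟨ζ₂, h2, ?_⟩
    rw [Function.iterate_succ_apply, show k + 2 * (m + 1) = k + 2 * m + 2 by ring, e1, e2]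

/-- A high power of a bump function is a cut-off whose iterated Laplacian is controlled by its own
`1 / p`-th power. -/
theorem exists_cutoff (m : ℕ) {p : ℝ} (hp : 1 < p) (x₀ : EuclideanSpace ℝ (Fin n)) {r : ℝ}
    (hr : 0 < r) :
    ∃ φ : EuclideanSpace ℝ (Fin n) → ℝ, (∀ x, 0 ≤ φ x) ∧ 0 < φ x₀ ∧
      IsTest (Metric.ball x₀ r) (fun x => (φ x : ℂ)) ∧
      ∃ C, 0 ≤ C ∧ ∀ x, ‖(lapC^[m] fun x => (φ x : ℂ)) x‖ ≤ C * φ x ^ (1 / p) := by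
  let η : ContDiffBump x₀ := ⟨r / 3, r / 2, by positivity, by linarith⟩
  have he : ContDiff ℝ ∞ (fun x => (η x : ℂ)) := Complex.ofRealCLM.contDiff.comp η.contDiff
  have hp1 : 0 < p - 1 := by linarith
  -- `k` is chosen so that `η^k ≤ (η^{k + 2m})^{1/p}`
  obtain ⟨k, hk⟩ := exists_nat_ge (2 * m / (p - 1) + 1)
  have hk1 : 1 ≤ k := by
    have : (1 : ℝ) ≤ k := by
      have : 0 ≤ 2 * m / (p - 1) := by positivity
      linarith
    exact_mod_cast this
  have hkp : ((k + 2 * m : ℕ) : ℝ) * (1 / p) ≤ k := by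
    have : 2 * (m : ℝ) ≤ k * (p - 1) := by
      rw [← div_le_iff₀ hp1]; linarith
    rw [mul_one_div, div_le_iff₀ (by linarith)]
    push_cast
    linarith
  obtain ⟨ζ, hζ, hL⟩ := lapC_iter_pow_mul he (contDiff_const (c := (1 : ℂ))) k m
  obtain ⟨C, hC⟩ := (isCompact_closedBall x₀ r).exists_bound_of_continuousOn
    hζ.continuous.continuousOn
  have hφe : (fun x => ((η x ^ (k + 2 * m) : ℝ) : ℂ)) = fun x => (η x : ℂ) ^ (k + 2 * m) * 1 := by
    funext x; push_cast; ring
  have hts : tsupport (fun x => ((η x ^ (k + 2 * m) : ℝ) : ℂ)) ⊆ Metric.closedBall x₀ (r / 2) := by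
    refine closure_minimal (fun x hx => ?_) Metric.isClosed_closedBall
    by_contra hc
    have h0 : η x = 0 := η.zero_of_le_dist (by
      rw [Metric.mem_closedBall, not_le] at hc; exact hc.le)
    exact hx (by simp [h0]; omega)
  have hsm : ContDiff ℝ ∞ (fun x => ((η x ^ (k + 2 * m) : ℝ) : ℂ)) := by
    rw [hφe]; exact (he.pow _).mul contDiff_const
  refine ⟨fun x => η x ^ (k + 2 * m), fun x => pow_nonneg η.nonneg _, ?_,
    ⟨hsm, (isCompact_closedBall x₀ (r / 2)).of_isClosed_subset (isClosed_tsupport _) hts,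
      hts.trans (Metric.closedBall_subset_ball (by linarith))⟩, |C|, abs_nonneg _, fun x => ?_⟩
  · exact pow_pos (η.pos_of_mem_ball (Metric.mem_ball_self η.rOut_pos)) _
  · rw [hφe, hL]
    simp only [norm_mul, norm_pow, Complex.norm_real, Real.norm_eq_abs, abs_of_nonneg η.nonneg]
    have h1 : η x ^ k ≤ (η x ^ (k + 2 * m)) ^ (1 / p) := by
      rw [← Real.rpow_natCast, ← Real.rpow_natCast, ← Real.rpow_mul η.nonneg]
      exact Real.rpow_le_rpow_of_exponent_ge' η.nonneg η.le_one (by positivity) hkp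
    by_cases hx : x ∈ Metric.closedBall x₀ r
    · rw [mul_comm]
      exact mul_le_mul ((hC x hx).trans (le_abs_self _)) h1 (pow_nonneg η.nonneg _) (abs_nonneg _)
    · have h0 : η x = 0 := η.zero_of_le_dist (by
        rw [Metric.mem_closedBall, not_le] at hx
        change r / 2 ≤ _
        linarith)
      rw [h0, zero_pow (by omega), zero_mul]
      positivity
end cutoff

/-- Young's inequality in the form that separates `|v|^p φ` from a power of the parameter `l`. -/
theorem young_cutoff {p a φ C l : ℝ} (hp : 1 < p) (ha : 0 ≤ a) (hφ : 0 ≤ φ) (hC : 0 ≤ C)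
    (hl : 0 < l) :
    a * (C * φ ^ (1 / p)) ≤ l * (a ^ p * φ) + C ^ (p / (p - 1)) * l ^ (-(1 / (p - 1))) := by
  have hp0 : 0 < p := by linarith
  have hp1 : 0 < p - 1 := by linarith
  have hpq : p.HolderConjugate (p / (p - 1)) := Real.HolderConjugate.conjExponent hp
  have h := Real.young_inequality_of_nonneg (a := l ^ (1 / p) * (a * φ ^ (1 / p)))
    (b := l ^ (-(1 / p)) * C) (by positivity) (by positivity) hpq
  have e0 : l ^ (1 / p) * l ^ (-(1 / p)) = 1 := by rw [← Real.rpow_add hl]; simp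
  have e1 : (l ^ (1 / p) * (a * φ ^ (1 / p))) ^ p = l * (a ^ p * φ) := by
    rw [Real.mul_rpow (by positivity) (by positivity), Real.mul_rpow ha (by positivity),
      ← Real.rpow_mul hl.le, ← Real.rpow_mul hφ]
    simp [hp0.ne']
  have e2 : (l ^ (-(1 / p)) * C) ^ (p / (p - 1)) =
      C ^ (p / (p - 1)) * l ^ (-(1 / (p - 1))) := by
    rw [Real.mul_rpow (by positivity) hC, ← Real.rpow_mul hl.le, mul_comm]
    congr 2
    field_simp
  rw [e1, e2] at h
  have h1 : l * (a ^ p * φ) / p ≤ l * (a ^ p * φ) := div_le_self (by positivity) hp.le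
  have h2 : C ^ (p / (p - 1)) * l ^ (-(1 / (p - 1))) / (p / (p - 1)) ≤
      C ^ (p / (p - 1)) * l ^ (-(1 / (p - 1))) :=
    div_le_self (by positivity) (by rw [le_div_iff₀ hp1]; linarith)
  calc a * (C * φ ^ (1 / p))
      = l ^ (1 / p) * (a * φ ^ (1 / p)) * (l ^ (-(1 / p)) * C) := by
        linear_combination (-(a * (C * φ ^ (1 / p)))) * e0
    _ ≤ _ := by linarith

/-- The singular kernel dominates an exponential one. -/
theorem exp_le_kernel {γ ε τ : ℝ} (hγ0 : 0 < γ) (hγ1 : γ < 1) (hε : 0 < ε) (hτ : 0 < τ) :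
    ε ^ γ * exp (-(ε * τ)) ≤ τ ^ (-γ) := by
  have h1 : (ε * τ) ^ γ ≤ exp (ε * τ) := by
    have hx : 0 < ε * τ := by positivity
    rcases le_total (ε * τ) 1 with h | h
    · exact (Real.rpow_le_one hx.le h hγ0.le).trans (Real.one_le_exp hx.le)
    · exact (Real.rpow_le_self_of_one_le h hγ1.le).trans (by linarith [Real.add_one_le_exp (ε * τ)])
  rw [Real.rpow_neg hτ.le, Real.exp_neg, ← div_eq_mul_inv, div_le_iff₀ (exp_pos _),
    inv_mul_eq_div, le_div_iff₀ (by positivity), ← Real.mul_rpow hε.le hτ.le]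
  exact h1

/-! ### Vanishing of the solution -/

section conclusion
variable {n m : ℕ} {γ p M : ℝ} {v : ℝ → EuclideanSpace ℝ (Fin n) → ℝ}
  {φ : EuclideanSpace ℝ (Fin n) → ℝ} {U : Set (EuclideanSpace ℝ (Fin n))}

theorem integral_ofReal_mul (w φ : EuclideanSpace ℝ (Fin n) → ℝ) :
    ∫ x, (w x : ℂ) * (φ x : ℂ) = ((∫ x, w x * φ x : ℝ) : ℂ) := by
  simp only [← Complex.ofReal_mul]
  exact integral_ofReal (𝕜 := ℂ)

theorem IsTest.integrable_real (hφ : IsTest U fun x => (φ x : ℂ)) : Integrable φ := by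
  simpa using hφ.integrable.re

theorem IsTest.continuous_real (hφ : IsTest U fun x => (φ x : ℂ)) : Continuous φ :=
  Complex.continuous_re.comp hφ.smooth.continuous

theorem IsTest.integrable_mul_real {B : ℝ} (hφ : IsTest U fun x => (φ x : ℂ))
    {w : EuclideanSpace ℝ (Fin n) → ℝ} (hw : Measurable w) (hB : ∀ x ∈ U, |w x| ≤ B) :
    Integrable fun x => w x * φ x := by
  simpa using (hφ.integrable_mul_of_bdd hw.aestronglyMeasurable hB).re

theorem GlobSol.slice_pow (h : GlobSol m γ p M v) :
    Slice U (M ^ p) (fun t x => |v t x| ^ p) where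
  cont := h.cont_pow
  meas t := ((h.cont_space t).measurable.norm).pow_const p
  bdd t x _ := by
    rw [abs_of_nonneg (by positivity)]
    exact h.pow_le t x

theorem GlobSol.integral_exp_swap (h : GlobSol m γ p M v)
    (hφ : IsTest U fun x => (φ x : ℂ)) (ε : ℝ) {T₀ t : ℝ} (ht : T₀ ≤ t) :
    ∫ x, (∫ s in T₀..t, exp (ε * s) * |v s x| ^ p) * φ x =
      ∫ s in T₀..t, exp (ε * s) * ∫ x, |v s x| ^ p * φ x := by
  simp only [intervalIntegral.integral_of_le ht, ← integral_mul_const, ← integral_const_mul]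
  rw [integral_integral_swap]
  · simp only [mul_assoc]
  · have hexp : IntegrableOn (fun s => exp (ε * s)) (Ioc T₀ t) :=
      (by fun_prop : Continuous fun s => exp (ε * s)).integrableOn_Ioc
    have hdom := (hφ.integrable_real.norm.mul_prod (hexp.const_mul (M ^ p)))
    refine hdom.mono' ?_ (Filter.Eventually.of_forall fun q => ?_)
    · have hv : Measurable fun q : EuclideanSpace ℝ (Fin n) × ℝ => v q.2 q.1 :=
        h.measurable_uncurry.comp measurable_swap
      have hvp : Measurable fun q : EuclideanSpace ℝ (Fin n) × ℝ => |v q.2 q.1| ^ p :=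
        hv.norm.pow_const p
      exact (((by fun_prop : Measurable fun q : EuclideanSpace ℝ (Fin n) × ℝ =>
        exp (ε * q.2)).mul hvp).mul
        (hφ.continuous_real.measurable.comp measurable_fst)).aestronglyMeasurable
    · simp only [Function.uncurry, norm_mul, Real.norm_eq_abs, abs_exp]
      rw [abs_of_nonneg (by positivity : 0 ≤ |v q.2 q.1| ^ p)]
      have := h.pow_le q.2 q.1
      calc exp (ε * q.2) * |v q.2 q.1| ^ p * |φ q.1|
          ≤ exp (ε * q.2) * M ^ p * |φ q.1| := by gcongr
        _ = _ := by ring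

theorem GlobSol.exp_memory_le_memF (h : GlobSol m γ p M v) {ε T₀ t : ℝ} (hε : 0 < ε)
    (ht : T₀ ≤ t) (x : EuclideanSpace ℝ (Fin n)) :
    ε ^ γ * exp (-ε * t) * ∫ s in T₀..t, exp (ε * s) * |v s x| ^ p ≤ memF γ p v t x := by
  unfold memF
  rw [memory_split h.γ_lt (h.cont_pow x) ht (h.int t x), ← intervalIntegral.integral_const_mul]
  have h1 : 0 ≤ ∫ s in Iic T₀, (t - s) ^ (-γ) * |v s x| ^ p :=
    setIntegral_nonneg measurableSet_Iic fun s hs => by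
      have hs1 : s ≤ T₀ := hs
      exact mul_nonneg (Real.rpow_nonneg (by linarith) _) (by positivity)
  refine le_add_of_nonneg_of_le h1 ?_
  have hc := h.cont_pow x
  refine intervalIntegral.integral_mono_on_of_le_Ioo ht
    ((by fun_prop : Continuous _).intervalIntegrable _ _)
    (kernel_intervalIntegrable h.γ_lt hc T₀ t) fun s hs => ?_
  have hk := exp_le_kernel (ε := ε) (τ := t - s) h.γ_pos h.γ_lt hε (by linarith [hs.2])
  calc ε ^ γ * exp (-ε * t) * (exp (ε * s) * |v s x| ^ p)
      = ε ^ γ * exp (-(ε * (t - s))) * |v s x| ^ p := by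
        rw [show -(ε * (t - s)) = -ε * t + ε * s by ring, Real.exp_add]; ring
    _ ≤ _ := by gcongr

/-- A solution vanishes at the centre of every ball on which the memory term is locally bounded in
time: the moment against a suitable cut-off satisfies the hypotheses of `scalar_liouville`. -/
theorem GlobSol.eq_zero_center (h : GlobSol (m + 1) γ p M v) (hγp : γ * p < 1)
    {x₀ : EuclideanSpace ℝ (Fin n)} {r : ℝ} (hr : 0 < r)
    (hs : LocSol (Metric.ball x₀ r) (m + 1) M v (memF γ p v)
      (fun t => negLapPow n (m + 1) (v t))) (t : ℝ) : v t x₀ = 0 := by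
  obtain ⟨φ, hφ0, hφpos, hφ, C₁, hC1, hL⟩ := exists_cutoff (m + 1) h.p_gt x₀ hr
  have hp := h.p_gt
  set f : ℝ → ℝ := fun t => ∫ x, |v t x| ^ p * φ x with hf
  have hint : ∀ t, Integrable fun x => |v t x| ^ p * φ x := fun t =>
    hφ.integrable_mul_real ((h.slice_pow (U := Metric.ball x₀ r)).meas t)
      ((h.slice_pow (U := Metric.ball x₀ r)).bdd t)
  have hfc : Continuous f := by
    have := Complex.continuous_re.comp (h.slice_pow.continuous_integral hφ)
    simpa only [Function.comp_def, integral_ofReal_mul, Complex.ofReal_re] using this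
  have hf0 : ∀ t, 0 ≤ f t := fun t =>
    integral_nonneg fun x => mul_nonneg (by positivity) (hφ0 x)
  have hfK : ∀ t, f t ≤ M ^ p * ∫ x, φ x := fun t => by
    rw [← integral_const_mul]
    exact integral_mono (hint t) (hφ.integrable_real.const_mul _) fun x =>
      mul_le_mul_of_nonneg_right (h.pow_le t x) (hφ0 x)
  have hVd : ∀ t, HasDerivAt (fun t => (∫ x, (v t x : ℂ) * (φ x : ℂ)).re)
      (wdot (m + 1) v (memF γ p v) (fun x => (φ x : ℂ)) t).re t := fun t =>
    (Complex.reCLM.hasFDerivAt.comp_hasDerivAt t (hs.hasDerivAt t _ hφ))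
  have hVb : ∀ t, |(∫ x, (v t x : ℂ) * (φ x : ℂ)).re| ≤ ∫ x, M * ‖(φ x : ℂ)‖ := fun t =>
    (Complex.abs_re_le_norm _).trans
      (norm_integral_le_of_norm_le (hφ.integrable.norm.const_mul M)
        (Filter.Eventually.of_forall (hφ.norm_mul_le fun x _ => h.bdd t x)))
  set B := Metric.ball x₀ r with hB
  have hBfin : volume B ≠ ⊤ := measure_ball_lt_top.ne
  have hzero : f t = 0 := by
    refine scalar_liouville (C := volume.real B * C₁ ^ (p / (p - 1))) h.γ_pos h.γ_lt hp hγp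
      hVd hVb hfc hf0 hfK (fun T₀ ε l t hε hl ht => ?_) t
    have hmem : ε ^ γ * (exp (-ε * t) * ∫ s in T₀..t, exp (ε * s) * f s) ≤
        ∫ x, memF γ p v t x * φ x := by
      rw [← h.integral_exp_swap hφ ε ht, ← mul_assoc, ← integral_const_mul]
      obtain ⟨K, hK⟩ := hs.F_bdd t t
      refine integral_mono_of_nonneg (Filter.Eventually.of_forall fun x => ?_)
        (hφ.integrable_mul_real (h.memF_meas t) (hK t ⟨le_rfl, le_rfl⟩))
        (Filter.Eventually.of_forall fun x => ?_)
      · refine mul_nonneg (by positivity) (mul_nonneg ?_ (hφ0 x))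
        exact intervalIntegral.integral_nonneg ht fun s _ => by positivity
      · have := mul_le_mul_of_nonneg_right (h.exp_memory_le_memF hε ht x) (hφ0 x)
        simp only
        linarith
    have hell : ‖∫ x, (v t x : ℂ) * (lapC^[m + 1] fun x => (φ x : ℂ)) x‖ ≤
        l * f t + volume.real B * C₁ ^ (p / (p - 1)) * l ^ (-(1 / (p - 1))) := by
      set c := C₁ ^ (p / (p - 1)) * l ^ (-(1 / (p - 1))) with hc
      have hc0 : 0 ≤ c := by positivity
      have hind : Integrable (B.indicator fun _ => c) :=
        (integrable_indicator_iff Metric.isOpen_ball.measurableSet).2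
          (integrableOn_const hBfin)
      refine (norm_integral_le_of_norm_le (((hint t).const_mul l).add hind)
        (Filter.Eventually.of_forall fun x => ?_)).trans (le_of_eq ?_)
      · by_cases hx : x ∈ B
        · rw [Pi.add_apply, indicator_of_mem hx, norm_mul, Complex.norm_real, Real.norm_eq_abs]
          exact (mul_le_mul_of_nonneg_left (hL x) (abs_nonneg _)).trans
            (young_cutoff hp (abs_nonneg _) (hφ0 x) hC1 hl)
        · have h0 : (lapC^[m + 1] fun x => (φ x : ℂ)) x = 0 := by
            by_contra hne
            exact hx ((hφ.lapC_iter (m + 1)).sub (subset_tsupport _ hne))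
          rw [h0, mul_zero, norm_zero, Pi.add_apply, indicator_of_notMem hx, add_zero]
          exact mul_nonneg hl.le (mul_nonneg (by positivity) (hφ0 x))
      · simp only [Pi.add_apply]
        rw [integral_add ((hint t).const_mul l) hind, integral_const_mul,
          integral_indicator Metric.isOpen_ball.measurableSet, setIntegral_const, smul_eq_mul, hc]
        ring
    have hre : (wdot (m + 1) v (memF γ p v) (fun x => (φ x : ℂ)) t).re ≥
        (∫ x, memF γ p v t x * φ x) -
          ‖∫ x, (v t x : ℂ) * (lapC^[m + 1] fun x => (φ x : ℂ)) x‖ := by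
      simp only [wdot, integral_ofReal_mul, Complex.sub_re, Complex.ofReal_re]
      have h1 := Complex.re_le_norm ((-1) ^ (m + 1) *
        ∫ x, (v t x : ℂ) * (lapC^[m + 1] fun x => (φ x : ℂ)) x)
      rw [norm_mul, norm_pow, norm_neg, norm_one, one_pow, one_mul] at h1
      linarith
    linarith
  have hcont : Continuous fun x => |v t x| ^ p * φ x :=
    ((h.cont_space t).abs.rpow_const fun _ => Or.inr (by linarith)).mul hφ.continuous_real
  have hae := (integral_eq_zero_iff_of_nonneg
    (fun x => mul_nonneg (by positivity) (hφ0 x)) (hint t)).1 hzero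
  have hx0 := congrFun ((hcont.ae_eq_iff_eq volume continuous_const).1 hae) x₀
  have h2 : |v t x₀| ^ p = 0 := (mul_eq_zero.1 hx0).resolve_right hφpos.ne'
  exact abs_eq_zero.1 ((Real.rpow_eq_zero (abs_nonneg _) (by linarith)).1 h2)

theorem GlobSol.eq_zero (h : GlobSol (m + 1) γ p M v) (hγp : γ * p < 1) (t : ℝ)
    (x : EuclideanSpace ℝ (Fin n)) : v t x = 0 := by
  by_contra hne
  have hW : IsOpen {x | v t x ≠ 0} := isOpen_ne_fun (h.cont_space t) continuous_const
  obtain ⟨x₀, r, hr, hsub, hs⟩ := h.exists_locSol hW ⟨x, hne⟩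
  exact hsub (Metric.mem_ball_self hr) (h.eq_zero_center hγp hr hs t)
end conclusion

end auxiliary

/-- Liouville-type theorem, `p < 1/γ`: any bounded classical solution of
`v_t + (-Δ)^m v = ∫_{-∞}^t (t-s)^{-γ}|v(s)|^p ds` on `ℝ × ℝⁿ` vanishes identically when
`1 < p < 1/γ`. -/
theorem liouville_small_p (n m : ℕ) (hn : 1 ≤ n) (hm : 1 ≤ m)
    (γ p : ℝ) (hγ0 : 0 < γ) (hγ1 : γ < 1) (hp : 1 < p) (hpγ : p < 1 / γ)
    (v : ℝ → EuclideanSpace ℝ (Fin n) → ℝ)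
    (hbdd : ∃ M : ℝ, ∀ t x, |v t x| ≤ M)
    (hC1t : ∀ x, ContDiff ℝ 1 (fun t => v t x))
    (hC2mx : ∀ t, ContDiff ℝ (2 * m : ℕ) (v t))
    (hint : ∀ t x, MeasureTheory.IntegrableOn
      (fun s => (t - s) ^ (-γ) * |v s x| ^ p) (Set.Iio t))
    (heq : ∀ t x, deriv (fun s => v s x) t + negLapPow n m (v t) x =
      ∫ s in Set.Iio t, (t - s) ^ (-γ) * |v s x| ^ p) :
    ∀ t x, v t x = 0 := by
  obtain ⟨M, hM⟩ := hbdd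
  obtain ⟨k, rfl⟩ : ∃ k, m = k + 1 := ⟨m - 1, by omega⟩
  have h : GlobSol (k + 1) γ p M v := ⟨hγ0, hγ1, hp, hM, hC1t, hC2mx, hint, heq⟩
  refine h.eq_zero ?_
  rw [lt_div_iff₀ hγ0] at hpγ
  linarith
end

section
/- Let 0<α<1, p>1, and σ > (1+α)p/(p-1). There exists a constant C > 0, depending only on α, p, σ, such that for every T > 0, with w_1(t) := (1 - t/T)^σ on [0,T], one has ∫_0^T (w_1(t))^{-1/(p-1)} |D^α_{t|T} w_1(t)|^{p/(p-1)} dt = C T^{1 - αp/(p-1)}. -/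
/-!
For `τ < T` the substitution `s = τ + (T - τ) u` gives
`∫_τ^T (s - τ)^(-α) (1 - s/T)^σ ds = B T^(1-α) (1 - τ/T)^(1-α+σ)`, where
`B = ∫_0^1 u^(-α) (1 - u)^σ du > 0` (`fracInt_w1`, `betaConst_pos`).  Differentiating,
`D^α_{t|T} w₁(t) = K T^(-α) (1 - t/T)^(σ-α)` with `K = (1-α+σ) B / Γ(1-α) > 0`
(`fracDerivRight_w1`).
With `q = p/(p-1) = 1 + 1/(p-1)` the integrand is therefore `K^q T^(-αq) (1 - t/T)^(σ-αq)`,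
whose integral over `(0, T]` is `K^q / (σ-αq+1) * T^(1-αq)`.
-/

open MeasureTheory Real

/-- The right-sided Riemann–Liouville fractional derivative of order `α ∈ (0,1)` with right
endpoint `b`: `D^α_{t|b} f(t) = -(1/Γ(1-α)) (d/dt) ∫_t^b (s-t)^{-α} f(s) ds`. -/
noncomputable def fracDerivRight (α b : ℝ) (f : ℝ → ℝ) : ℝ → ℝ :=
  fun t => -(1 / Real.Gamma (1 - α)) *
    deriv (fun τ => ∫ s in Set.Ioc τ b, (s - τ) ^ (-α) * f s) t

/-- The right-sided Riemann–Liouville fractional derivative of order `1 + α`: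
`D^{1+α}_{t|b} f = -(d/dt) D^α_{t|b} f`. -/
noncomputable def fracDerivRight' (α b : ℝ) (f : ℝ → ℝ) : ℝ → ℝ :=
  fun t => -deriv (fracDerivRight α b f) t

/-- The Beta integral `∫_0^1 u^(-α) (1-u)^σ du`. -/
noncomputable def betaConst (α σ : ℝ) : ℝ := ∫ u in (0 : ℝ)..1, u ^ (-α) * (1 - u) ^ σ

lemma betaConst_pos {α σ : ℝ} (hα1 : α < 1) (hσ : 0 < σ) : 0 < betaConst α σ := by
  unfold betaConst
  apply intervalIntegral.intervalIntegral_pos_of_pos_on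
  · apply IntervalIntegrable.mul_continuousOn
    · exact intervalIntegral.intervalIntegrable_rpow' (by linarith)
    · exact ((continuous_const.sub continuous_id).rpow_const
        (fun _ => Or.inr hσ.le)).continuousOn
  · intro x hx
    have h1 : 0 < 1 - x := by linarith [hx.2]
    have h0 := hx.1
    positivity
  · norm_num

lemma fracInt_w1 {α σ T τ : ℝ} (hT : 0 < T) (hτ : τ < T) :
    (∫ s in Set.Ioc τ T, (s - τ) ^ (-α) * (1 - s / T) ^ σ) =
      betaConst α σ * T ^ (1 - α) * (1 - τ / T) ^ (1 - α + σ) := by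
  have hd : 0 < 1 - τ / T := by
    have := (div_lt_one hT).2 hτ
    linarith
  have hTd : T - τ = T * (1 - τ / T) := by field_simp
  have hc : 0 < T - τ := by linarith
  rw [← intervalIntegral.integral_of_le hτ.le]
  have key := intervalIntegral.smul_integral_comp_add_mul (a := 0) (b := 1)
    (fun s : ℝ => (s - τ) ^ (-α) * (1 - s / T) ^ σ) (T - τ) τ
  have e1 : τ + (T - τ) * 0 = τ := by ring
  have e2 : τ + (T - τ) * 1 = T := by ring
  rw [e1, e2] at key
  rw [← key]
  have hcongr : (∫ x in (0 : ℝ)..1,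
      (τ + (T - τ) * x - τ) ^ (-α) * (1 - (τ + (T - τ) * x) / T) ^ σ) =
      ∫ x in (0 : ℝ)..1, ((T - τ) ^ (-α) * (1 - τ / T) ^ σ) * (x ^ (-α) * (1 - x) ^ σ) := by
    apply intervalIntegral.integral_congr
    intro x hx
    rw [Set.uIcc_of_le zero_le_one] at hx
    have a1 : τ + (T - τ) * x - τ = (T - τ) * x := by ring
    have a2 : 1 - (τ + (T - τ) * x) / T = (1 - τ / T) * (1 - x) := by field_simp; ring
    simp only [a1, a2]
    rw [mul_rpow hc.le hx.1, mul_rpow hd.le (by linarith [hx.2])]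
    ring
  rw [hcongr, intervalIntegral.integral_const_mul, smul_eq_mul]
  change _ * (_ * betaConst α σ) = _
  have hs : (T - τ) * (T - τ) ^ (-α) = T ^ (1 - α) * (1 - τ / T) ^ (1 - α) := by
    rw [← mul_rpow hT.le hd.le, ← hTd, sub_eq_add_neg 1 α, rpow_add hc, rpow_one]
  rw [rpow_add hd]
  linear_combination (betaConst α σ * (1 - τ / T) ^ σ) * hs

lemma fracDerivRight_w1 {α σ T t : ℝ} (hT : 0 < T) (ht : t < T) :
    fracDerivRight α T (fun s => (1 - s / T) ^ σ) t =
      (1 - α + σ) * betaConst α σ / Real.Gamma (1 - α) * T ^ (-α) * (1 - t / T) ^ (σ - α) := by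
  unfold fracDerivRight
  have hd : 0 < 1 - t / T := by
    have := (div_lt_one hT).2 ht
    linarith
  have hev : (fun τ => ∫ s in Set.Ioc τ T, (s - τ) ^ (-α) * (1 - s / T) ^ σ) =ᶠ[nhds t]
      fun τ => betaConst α σ * T ^ (1 - α) * (1 - τ / T) ^ (1 - α + σ) := by
    filter_upwards [Iio_mem_nhds ht] with τ hτ
    exact fracInt_w1 hT hτ
  have hder : HasDerivAt (fun τ => betaConst α σ * T ^ (1 - α) * (1 - τ / T) ^ (1 - α + σ))
      (betaConst α σ * T ^ (1 - α) *
        (-(1 / T) * (1 - α + σ) * (1 - t / T) ^ (1 - α + σ - 1))) t :=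
    ((((hasDerivAt_id t).div_const T).const_sub 1).rpow_const (Or.inl hd.ne')).const_mul _
  rw [hev.deriv_eq, hder.deriv]
  have h1 : 1 - α + σ - 1 = σ - α := by ring
  have h2 : T ^ (1 - α) = T * T ^ (-α) := by
    rw [sub_eq_add_neg, rpow_add hT, rpow_one]
  rw [h1, h2]
  field_simp

/-- with `w₁(t) = (1 - t/T)^σ`, there is `C = C(α,p,σ) > 0` with
`∫_0^T w₁^{-1/(p-1)} |D^α_{t|T} w₁|^{p/(p-1)} dt = C T^{1 - αp/(p-1)}` for every `T > 0`. -/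
theorem integral_fracDeriv_w1 (α p σ : ℝ) (hα0 : 0 < α) (hα1 : α < 1) (hp : 1 < p)
    (hσ : (1 + α) * p / (p - 1) < σ) :
    ∃ C > (0 : ℝ), ∀ T > (0 : ℝ),
      (∫ t in Set.Ioc (0 : ℝ) T,
        ((1 - t / T) ^ σ) ^ (-(1 / (p - 1))) *
          |fracDerivRight α T (fun s => (1 - s / T) ^ σ) t| ^ (p / (p - 1))) =
        C * T ^ (1 - α * p / (p - 1)) := by
  have hp1 : 0 < p - 1 := by linarith
  have hq : 0 < p / (p - 1) := by positivity
  have hσ' : (1 + α) * (p / (p - 1)) < σ := by rwa [← mul_div_assoc]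
  have hσ0 : 0 < σ := lt_trans (by positivity) hσ'
  have hB := betaConst_pos hα1 hσ0
  have hΓ : 0 < Real.Gamma (1 - α) := Real.Gamma_pos_of_pos (by linarith)
  have h1 : 0 < 1 - α + σ := by linarith
  set q := p / (p - 1) with hqdef
  have he : 0 < σ - α * q := by nlinarith
  obtain ⟨K, hK⟩ : ∃ K, K = (1 - α + σ) * betaConst α σ / Real.Gamma (1 - α) := ⟨_, rfl⟩
  have hKpos : 0 < K := by rw [hK]; positivity
  refine ⟨K ^ q / (σ - α * q + 1), by positivity, fun T hT => ?_⟩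
  have hcongr : (∫ t in Set.Ioc (0 : ℝ) T, ((1 - t / T) ^ σ) ^ (-(1 / (p - 1))) *
        |fracDerivRight α T (fun s => (1 - s / T) ^ σ) t| ^ q) =
      ∫ t in Set.Ioc (0 : ℝ) T, K ^ q * T ^ (-(α * q)) * (1 - t / T) ^ (σ - α * q) := by
    -- The closed form of the fractional derivative holds only for `t < T`; drop the endpoint.
    rw [integral_Ioc_eq_integral_Ioo, integral_Ioc_eq_integral_Ioo]
    refine setIntegral_congr_fun measurableSet_Ioo fun t ht => ?_
    have hd : 0 < 1 - t / T := by
      have := (div_lt_one hT).2 ht.2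
      linarith
    rw [fracDerivRight_w1 hT ht.2, ← hK, abs_of_pos (by positivity),
      mul_rpow (by positivity) (by positivity), mul_rpow hKpos.le (by positivity),
      ← rpow_mul hT.le, ← rpow_mul hd.le, ← rpow_mul hd.le]
    have hexp : σ - α * q = σ * -(1 / (p - 1)) + (σ - α) * q := by
      rw [hqdef]
      field_simp
      ring
    rw [hexp, rpow_add hd, neg_mul]
    ring
  rw [hcongr, integral_const_mul, ← intervalIntegral.integral_of_le hT.le,
    intervalIntegral.integral_comp_sub_div (fun x : ℝ => x ^ (σ - α * q)) hT.ne' 1,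
    integral_rpow (Or.inl (by linarith))]
  have hTp : T ^ (1 - α * p / (p - 1)) = T * T ^ (-(α * q)) := by
    rw [mul_div_assoc, ← hqdef, sub_eq_add_neg, rpow_add hT, rpow_one]
  rw [hTp, div_self hT.ne', zero_div, sub_self, sub_zero, one_rpow,
    zero_rpow (by linarith), smul_eq_mul]
  ring
end

section
/- Let n≥1 and m≥1 be integers, let α be a multi-index on ℝ^n with 1 ≤ |α|, let ℓ > |α| be a real number (or one may take ℓ an integer with ℓ > |α|), and let φ ∈ C_c^∞(ℝ^n) with 0 ≤ φ ≤ 1. Then there exists a constant C = C(α, ℓ, φ) > 0 such that |∂^α(φ^ℓ)(x)| ≤ C (φ(x))^{ℓ - |α|} for all x ∈ ℝ^n. -/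
/-!
Every application of a coordinate derivative to a function of the form `φ ^ s * g`, with `s > 1` and
`g` smooth, gives `φ ^ (s - 1) * (s * ∂φ * g + φ * ∂g)`, which is of the same form with the exponent
lowered by one (`pderivE_rpow_mul`). Since `|β| < ℓ`, the exponent stays above one until the last
derivative has been taken, so `∂^β (φ ^ ℓ) = φ ^ (ℓ - |β|) * g` for some smooth `g`
(`foldr_pderivE_rpow`). The function `g` is bounded on the compact support of `φ`, and off it both
sides of the inequality vanish because `ℓ - |β| > 0`.
-/

open MeasureTheory Real

/-- The partial derivative `∂^β` associated with a multi-index `β : Fin n → ℕ`. -/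
noncomputable def partialMulti (n : ℕ) (β : Fin n → ℕ) :
    (EuclideanSpace ℝ (Fin n) → ℝ) → (EuclideanSpace ℝ (Fin n) → ℝ) :=
  (List.ofFn fun i : Fin n => (pderivE n i)^[β i]).foldr (· ∘ ·) id

/-- The induction step: one derivative lowers the exponent of `φ` by one, at the cost of replacing
the smooth factor. The hypothesis `1 < s` makes `t ↦ t ^ s` differentiable also at `t = 0`. -/
lemma pderivE_rpow_mul {n : ℕ} {φ : EuclideanSpace ℝ (Fin n) → ℝ}
    (hφ : ContDiff ℝ (⊤ : ℕ∞) φ) (h0 : ∀ x, 0 ≤ φ x) {s : ℝ} (hs : 1 < s) (i : Fin n)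
    {g : EuclideanSpace ℝ (Fin n) → ℝ} (hg : ContDiff ℝ (⊤ : ℕ∞) g) :
    ∃ h : EuclideanSpace ℝ (Fin n) → ℝ, ContDiff ℝ (⊤ : ℕ∞) h ∧
      pderivE n i (fun x => φ x ^ s * g x) = fun x => φ x ^ (s - 1) * h x := by
  have smooth_pderiv : ∀ f : EuclideanSpace ℝ (Fin n) → ℝ, ContDiff ℝ (⊤ : ℕ∞) f →
      ContDiff ℝ (⊤ : ℕ∞) (pderivE n i f) := fun f hf =>
    (hf.fderiv_right (m := (⊤ : ℕ∞)) (by simp)).clm_apply contDiff_const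
  refine ⟨fun x => s * pderivE n i φ x * g x + φ x * pderivE n i g x,
    ((contDiff_const.mul (smooth_pderiv φ hφ)).mul hg).add (hφ.mul (smooth_pderiv g hg)), ?_⟩
  funext x
  have dφ : HasFDerivAt φ (fderiv ℝ φ x) x := (hφ.differentiable (by simp) x).hasFDerivAt
  have dg : HasFDerivAt g (fderiv ℝ g x) x := (hg.differentiable (by simp) x).hasFDerivAt
  have d := ((dφ.rpow_const (p := s) (Or.inr hs.le)).fun_mul dg).fderiv
  have hpow : φ x ^ s = φ x ^ (s - 1) * φ x := by
    conv_lhs => rw [← sub_add_cancel s 1]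
    rw [Real.rpow_add_one' (h0 x) (by linarith)]
  simp only [pderivE, d, add_apply, smul_apply,
    smul_eq_mul]
  rw [hpow]
  ring

lemma iterate_pderivE_rpow_mul {n : ℕ} {φ : EuclideanSpace ℝ (Fin n) → ℝ}
    (hφ : ContDiff ℝ (⊤ : ℕ∞) φ) (h0 : ∀ x, 0 ≤ φ x) (i : Fin n) (k : ℕ) {s : ℝ}
    (hs : (k : ℝ) < s) {g : EuclideanSpace ℝ (Fin n) → ℝ} (hg : ContDiff ℝ (⊤ : ℕ∞) g) :
    ∃ h : EuclideanSpace ℝ (Fin n) → ℝ, ContDiff ℝ (⊤ : ℕ∞) h ∧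
      (pderivE n i)^[k] (fun x => φ x ^ s * g x) = fun x => φ x ^ (s - k) * h x := by
  induction k with
  | zero => exact ⟨g, hg, by simp⟩
  | succ k ih =>
    push_cast at hs
    obtain ⟨h, hh, e⟩ := ih (by linarith)
    obtain ⟨h', hh', e'⟩ := pderivE_rpow_mul hφ h0 (s := s - k) (by linarith) i hh
    refine ⟨h', hh', ?_⟩
    rw [Function.iterate_succ_apply', e, e']
    push_cast
    simp only [sub_sub]

/-- The factorization of `∂^β (φ ^ ℓ)`, for the part of `∂^β` that involves the coordinates listed
in `L`; the total order of differentiation is then `(L.map β).sum`. -/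
lemma foldr_pderivE_rpow {n : ℕ} {φ : EuclideanSpace ℝ (Fin n) → ℝ}
    (hφ : ContDiff ℝ (⊤ : ℕ∞) φ) (h0 : ∀ x, 0 ≤ φ x) (β : Fin n → ℕ) (ℓ : ℝ)
    (L : List (Fin n)) (hL : (((L.map β).sum : ℕ) : ℝ) < ℓ) :
    ∃ h : EuclideanSpace ℝ (Fin n) → ℝ, ContDiff ℝ (⊤ : ℕ∞) h ∧
      (L.map fun i => (pderivE n i)^[β i]).foldr (· ∘ ·) id (fun x => φ x ^ ℓ) =
        fun x => φ x ^ (ℓ - ((L.map β).sum : ℕ)) * h x := by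
  induction L with
  | nil => exact ⟨fun _ => 1, contDiff_const, by simp⟩
  | cons i L ih =>
    simp only [List.map_cons, List.sum_cons, Nat.cast_add] at hL
    have hi : (0 : ℝ) ≤ β i := Nat.cast_nonneg _
    obtain ⟨h, hh, e⟩ := ih (by linarith)
    obtain ⟨h', hh', e'⟩ := iterate_pderivE_rpow_mul hφ h0 i (β i)
      (s := ℓ - ((L.map β).sum : ℕ)) (by linarith) hh
    refine ⟨h', hh', ?_⟩
    simp only [List.map_cons, List.foldr_cons, Function.comp_apply, List.sum_cons, Nat.cast_add]
    rw [e, e']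
    simp only [sub_sub, add_comm]

/-- for `φ ∈ C_c^∞(ℝⁿ)` with `0 ≤ φ ≤ 1`, a multi-index `β` with
`|β| ≥ 1` and a real `ℓ > |β|`, one has `|∂^β(φ^ℓ)(x)| ≤ C φ(x)^{ℓ-|β|}` for all `x`. -/
theorem partialMulti_rpow_bound (n m : ℕ) (hn : 1 ≤ n) (hm : 1 ≤ m)
    (β : Fin n → ℕ) (hβ : 1 ≤ ∑ i, β i) (ℓ : ℝ) (hℓ : ((∑ i, β i : ℕ) : ℝ) < ℓ)
    (φ : EuclideanSpace ℝ (Fin n) → ℝ)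
    (hφsmooth : ContDiff ℝ (⊤ : ℕ∞) φ) (hφsupp : HasCompactSupport φ)
    (hφ01 : ∀ x, 0 ≤ φ x ∧ φ x ≤ 1) :
    ∃ C > (0 : ℝ), ∀ x,
      |partialMulti n β (fun y => φ y ^ ℓ) x| ≤ C * φ x ^ (ℓ - ((∑ i, β i : ℕ) : ℝ)) := by
  have hsum : ((List.finRange n).map β).sum = ∑ i, β i := by
    rw [← List.ofFn_eq_map, List.sum_ofFn]
  obtain ⟨g, hg, e⟩ := foldr_pderivE_rpow hφsmooth (fun x => (hφ01 x).1) β ℓ (List.finRange n)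
    (by rw [hsum]; exact hℓ)
  rw [hsum, ← List.ofFn_eq_map] at e
  obtain ⟨C, hC⟩ := hφsupp.isCompact.exists_bound_of_continuousOn hg.continuous.continuousOn
  refine ⟨max C 1, by positivity, fun x => ?_⟩
  have hx : partialMulti n β (fun y => φ y ^ ℓ) x
      = φ x ^ (ℓ - ((∑ i, β i : ℕ) : ℝ)) * g x := congrFun e x
  have hp : 0 ≤ φ x ^ (ℓ - ((∑ i, β i : ℕ) : ℝ)) := Real.rpow_nonneg (hφ01 x).1 _
  rw [hx, abs_mul, abs_of_nonneg hp, mul_comm]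
  by_cases hz : φ x = 0
  · rw [hz, Real.zero_rpow (by linarith)]
    simp
  · exact mul_le_mul_of_nonneg_right
      ((hC x (subset_tsupport φ hz)).trans (le_max_left _ _)) hp
end

section
/- Let n≥1 and m≥1 be integers, p>1, and ℓ > 2mp/(p-1). Let φ ∈ C_c^∞(ℝ^n) with 0 ≤ φ ≤ 1, φ = 1 on {|x| ≤ 1}, and supp φ ⊂ {|x| ≤ 2}, and for R > 0 set φ_R(x) := (φ(x/R))^ℓ. Then there exists a constant C > 0, independent of R, such that ∫_{ℝ^n} (φ_R(x))^{-1/(p-1)} |Δ^m φ_R(x)|^{p/(p-1)} dx ≤ C R^{n - 2mp/(p-1)} for all R > 0, where the integrand is understood to be 0 at points where φ_R(x) = 0 (there Δ^m φ_R also vanishes). -/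
/-!
Differentiating `φ ^ s * g` once on the open set `{φ > 0}`, with `g` smooth on the whole space, gives
`φ ^ (s - 1) * (s * ∂ᵢφ * g + φ * ∂ᵢg)`, which has the same shape with `s` lowered by one. Hence
`Δ^m (φ ^ ℓ) = φ ^ (ℓ - 2m) * g` on `{φ > 0}` for some globally smooth `g` (`lapE_iterate_shape`).
For `R = 1` the integrand therefore equals `φ ^ (ℓ - 2mp/(p-1)) * |g| ^ (p/(p-1))` where `φ > 0` and
vanishes elsewhere; as the exponent of `φ` is positive, it is bounded by a constant on the closed ball
of radius `2` and is zero outside (`integral_unit_scale_bound`). No information about `Δ^m (φ ^ ℓ)`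
at the zeros of `φ` is needed.

General `R` reduces to `R = 1` because `Δ^m (f (R⁻¹ • ·)) = R⁻¹ ^ (2m) * (Δ^m f) (R⁻¹ • ·)` for
every `f` (`lapE_iterate_comp_smul`), together with the change of variables `x = R y`.
-/

open MeasureTheory Real

/-- No differentiability of `f` is needed, since for scalars in a field `fderiv`
commutes with scaling even at points where it takes its default value `0`. -/
lemma pderivE_const_mul_comp_smul (n : ℕ) (i : Fin n) (f : EuclideanSpace ℝ (Fin n) → ℝ)
    (a c : ℝ) :
    pderivE n i (fun x => a * f (c • x)) = fun x => (a * c) * pderivE n i f (c • x) := by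
  funext x
  have h1 : fderiv ℝ (fun x => a * f (c • x)) x = a • fderiv ℝ (fun x => f (c • x)) x := by
    have := congrFun (fderiv_const_smul_field (𝕜 := ℝ) (f := fun x => f (c • x)) a) x
    simpa [Pi.smul_def, smul_eq_mul] using this
  have h2 : fderiv ℝ (fun x => f (c • x)) x = c • fderiv ℝ f (c • x) := by
    have := fderiv_comp_smul (𝕜 := ℝ) (f := f) (x := x) c
    simpa using this
  simp only [pderivE, h1, h2, smul_apply, smul_eq_mul]
  ring

lemma lapE_const_mul_comp_smul (n : ℕ) (f : EuclideanSpace ℝ (Fin n) → ℝ)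
    (a c : ℝ) :
    lapE n (fun x => a * f (c • x)) = fun x => (a * c ^ 2) * lapE n f (c • x) := by
  funext x
  simp only [lapE, Finset.mul_sum]
  refine Finset.sum_congr rfl fun i _ => ?_
  rw [pderivE_const_mul_comp_smul n i f a c,
    pderivE_const_mul_comp_smul n i _ (a * c) c]
  ring

lemma lapE_iterate_comp_smul (n m : ℕ) (f : EuclideanSpace ℝ (Fin n) → ℝ)
    (c : ℝ) :
    (lapE n)^[m] (fun x => f (c • x)) = fun x => c ^ (2 * m) * (lapE n)^[m] f (c • x) := by
  induction m with
  | zero => simp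
  | succ k ih =>
    rw [Function.iterate_succ_apply', ih,
      lapE_const_mul_comp_smul n _ _ c]
    funext x
    rw [Function.iterate_succ_apply']
    ring

/-- A partial derivative preserves the shape `φ ^ s * g` on `{φ > 0}`, lowering `s` by one. -/
lemma pderivE_shape (n : ℕ) (i : Fin n) (φ : EuclideanSpace ℝ (Fin n) → ℝ)
    (hφ : ContDiff ℝ (⊤ : ℕ∞) φ) (s : ℝ) (F g : EuclideanSpace ℝ (Fin n) → ℝ)
    (hg : ContDiff ℝ (⊤ : ℕ∞) g) (hF : ∀ x, 0 < φ x → F x = φ x ^ s * g x) :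
    ∃ g' : EuclideanSpace ℝ (Fin n) → ℝ, ContDiff ℝ (⊤ : ℕ∞) g' ∧
      ∀ x, 0 < φ x → pderivE n i F x = φ x ^ (s - 1) * g' x := by
  have hd : ∀ u : EuclideanSpace ℝ (Fin n) → ℝ, ContDiff ℝ (⊤ : ℕ∞) u →
      ContDiff ℝ (⊤ : ℕ∞) (pderivE n i u) := fun u hu =>
    (hu.fderiv_right (m := (⊤ : ℕ∞)) (by simp)).clm_apply contDiff_const
  refine ⟨fun x => s * pderivE n i φ x * g x + φ x * pderivE n i g x,
    ((contDiff_const.mul (hd φ hφ)).mul hg).add (hφ.mul (hd g hg)), fun x hx => ?_⟩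
  have hev : F =ᶠ[nhds x] fun y => φ y ^ s * g y :=
    Filter.mem_of_superset ((isOpen_lt continuous_const hφ.continuous).mem_nhds hx) hF
  have h1 : HasFDerivAt φ (fderiv ℝ φ x) x :=
    (hφ.differentiable (by simp) x).hasFDerivAt
  have h2 : HasFDerivAt g (fderiv ℝ g x) x :=
    (hg.differentiable (by simp) x).hasFDerivAt
  have h3 := (h1.rpow_const (p := s) (Or.inl hx.ne')).mul h2
  have h4 : φ x ^ s = φ x ^ (s - 1) * φ x := by
    rw [← Real.rpow_add_one hx.ne']; ring_nf
  have h5 : fderiv ℝ (fun y => φ y ^ s * g y) x = _ := h3.fderiv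
  simp only [pderivE, hev.fderiv_eq, h5, h4, add_apply, smul_apply, smul_eq_mul]
  ring

lemma lapE_shape (n : ℕ) (φ : EuclideanSpace ℝ (Fin n) → ℝ)
    (hφ : ContDiff ℝ (⊤ : ℕ∞) φ) (s : ℝ) (F g : EuclideanSpace ℝ (Fin n) → ℝ)
    (hg : ContDiff ℝ (⊤ : ℕ∞) g) (hF : ∀ x, 0 < φ x → F x = φ x ^ s * g x) :
    ∃ g' : EuclideanSpace ℝ (Fin n) → ℝ, ContDiff ℝ (⊤ : ℕ∞) g' ∧
      ∀ x, 0 < φ x → lapE n F x = φ x ^ (s - 2) * g' x := by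
  have h : ∀ i : Fin n, ∃ g' : EuclideanSpace ℝ (Fin n) → ℝ, ContDiff ℝ (⊤ : ℕ∞) g' ∧
      ∀ x, 0 < φ x → pderivE n i (pderivE n i F) x = φ x ^ (s - 2) * g' x := by
    intro i
    obtain ⟨g₁, hg₁, h₁⟩ := pderivE_shape n i φ hφ s F g hg hF
    obtain ⟨g₂, hg₂, h₂⟩ := pderivE_shape n i φ hφ (s - 1) _ g₁ hg₁ h₁
    refine ⟨g₂, hg₂, fun x hx => ?_⟩
    rw [h₂ x hx]
    ring_nf
  choose G hG hGx using h
  refine ⟨fun x => ∑ i, G i x, ContDiff.sum fun i _ => hG i, fun x hx => ?_⟩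
  simp only [lapE, Finset.mul_sum]
  exact Finset.sum_congr rfl fun i _ => hGx i x hx

/-- The key structure: the cofactor `g` is smooth on the whole space, hence bounded on balls, even
though `φ ^ (ℓ - 2m)` is only controlled on `{φ > 0}`. -/
lemma lapE_iterate_shape (n m : ℕ) (φ : EuclideanSpace ℝ (Fin n) → ℝ)
    (hφ : ContDiff ℝ (⊤ : ℕ∞) φ) (ℓ : ℝ) :
    ∃ g : EuclideanSpace ℝ (Fin n) → ℝ, ContDiff ℝ (⊤ : ℕ∞) g ∧
      ∀ x, 0 < φ x → (lapE n)^[m] (fun y => φ y ^ ℓ) x = φ x ^ (ℓ - 2 * (m : ℝ)) * g x := by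
  induction m with
  | zero => exact ⟨fun _ => 1, contDiff_const, fun x _ => by simp⟩
  | succ k ih =>
    obtain ⟨g, hg, h⟩ := ih
    obtain ⟨g', hg', h'⟩ := lapE_shape n φ hφ _ _ g hg h
    refine ⟨g', hg', fun x hx => ?_⟩
    rw [Function.iterate_succ_apply', h' x hx]
    push_cast
    ring_nf

/-- The case `R = 1`. -/
lemma integral_unit_scale_bound (n m : ℕ)
    (p ℓ : ℝ) (hp : 1 < p) (hℓ : 2 * (m : ℝ) * p / (p - 1) < ℓ)
    (φ : EuclideanSpace ℝ (Fin n) → ℝ)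
    (hφsmooth : ContDiff ℝ (⊤ : ℕ∞) φ)
    (hφ01 : ∀ x, 0 ≤ φ x ∧ φ x ≤ 1)
    (hφ2 : tsupport φ ⊆ Metric.closedBall 0 2) :
    ∃ C > (0 : ℝ), (∫ x : EuclideanSpace ℝ (Fin n),
        (φ x ^ ℓ) ^ (-(1 / (p - 1))) *
          |(lapE n)^[m] (fun y => φ y ^ ℓ) x| ^ (p / (p - 1))) ≤ C := by
  have hp1 : 0 < p - 1 := by linarith
  have hℓ0 : 0 < ℓ := lt_of_le_of_lt (by positivity) hℓ
  obtain ⟨g, hg, hgx⟩ := lapE_iterate_shape n m φ hφsmooth ℓ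
  have hcont : Continuous fun x => |g x| ^ (p / (p - 1)) :=
    hg.continuous.abs.rpow_const fun x => Or.inr (by positivity)
  obtain ⟨M, hM⟩ := (isCompact_closedBall (0 : EuclideanSpace ℝ (Fin n)) 2).exists_bound_of_continuousOn
    hcont.continuousOn
  have hM0 : 0 ≤ M := (norm_nonneg _).trans (hM 0 (by simp))
  set G : EuclideanSpace ℝ (Fin n) → ℝ :=
    (Metric.closedBall 0 2).indicator fun _ => M with hGdef
  have hGint : Integrable G :=
    (integrable_indicator_iff measurableSet_closedBall).2
      (integrableOn_const (measure_closedBall_lt_top.ne))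
  have hG0 : ∀ x, 0 ≤ G x := fun x => Set.indicator_nonneg (fun _ _ => hM0) x
  have hle : (∫ x : EuclideanSpace ℝ (Fin n),
        (φ x ^ ℓ) ^ (-(1 / (p - 1))) *
          |(lapE n)^[m] (fun y => φ y ^ ℓ) x| ^ (p / (p - 1))) ≤ ∫ x, G x := by
    refine integral_mono_of_nonneg (Filter.Eventually.of_forall fun x => ?_) hGint
      (Filter.Eventually.of_forall fun x => ?_)
    · have := (hφ01 x).1
      simp only [Pi.zero_apply]
      positivity
    · dsimp only
      rcases (hφ01 x).1.eq_or_lt with h0 | hpos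
      · have hne : -(1 / (p - 1)) ≠ 0 := by
          have : 0 < 1 / (p - 1) := by positivity
          linarith
        rw [← h0, Real.zero_rpow hℓ0.ne', Real.zero_rpow hne, zero_mul]
        exact hG0 x
      · have hxB : x ∈ Metric.closedBall (0 : EuclideanSpace ℝ (Fin n)) 2 :=
          hφ2 (subset_tsupport _ hpos.ne')
        have hexp : ℓ * (-(1 / (p - 1))) + (ℓ - 2 * (m : ℝ)) * (p / (p - 1))
            = ℓ - 2 * (m : ℝ) * p / (p - 1) := by
          field_simp
          ring
        have hkey : (φ x ^ ℓ) ^ (-(1 / (p - 1))) *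
            |(lapE n)^[m] (fun y => φ y ^ ℓ) x| ^ (p / (p - 1))
            = φ x ^ (ℓ - 2 * (m : ℝ) * p / (p - 1)) * |g x| ^ (p / (p - 1)) := by
          rw [hgx x hpos, abs_mul, abs_of_pos (Real.rpow_pos_of_pos hpos _),
            Real.mul_rpow (Real.rpow_nonneg hpos.le _) (abs_nonneg _),
            ← Real.rpow_mul hpos.le, ← Real.rpow_mul hpos.le, ← mul_assoc,
            ← Real.rpow_add hpos, hexp]
        rw [hkey, hGdef, Set.indicator_of_mem hxB]
        have h1 : φ x ^ (ℓ - 2 * (m : ℝ) * p / (p - 1)) ≤ 1 :=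
          Real.rpow_le_one hpos.le (hφ01 x).2 (by linarith)
        calc _ ≤ 1 * |g x| ^ (p / (p - 1)) := by gcongr
          _ ≤ M := by rw [one_mul]; exact (le_abs_self _).trans (hM x hxB)
  have : 0 ≤ ∫ x, G x := integral_nonneg hG0
  exact ⟨(∫ x, G x) + 1, by linarith, by linarith⟩

/-- for the rescaled cut-off `φ_R(x) = (φ(x/R))^ℓ` with `ℓ > 2mp/(p-1)`,
`∫_{ℝⁿ} φ_R^{-1/(p-1)} |Δ^m φ_R|^{p/(p-1)} dx ≤ C R^{n - 2mp/(p-1)}` uniformly in `R > 0`.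
(With `rpow`, the integrand automatically vanishes wherever `φ_R = 0`, since `0 ^ y = 0`
for `y ≠ 0`.) -/
theorem cutoff_integral_bound (n m : ℕ) (hn : 1 ≤ n) (hm : 1 ≤ m)
    (p ℓ : ℝ) (hp : 1 < p) (hℓ : 2 * (m : ℝ) * p / (p - 1) < ℓ)
    (φ : EuclideanSpace ℝ (Fin n) → ℝ)
    (hφsmooth : ContDiff ℝ (⊤ : ℕ∞) φ) (hφsupp : HasCompactSupport φ)
    (hφ01 : ∀ x, 0 ≤ φ x ∧ φ x ≤ 1)
    (hφ1 : ∀ x, ‖x‖ ≤ 1 → φ x = 1)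
    (hφ2 : tsupport φ ⊆ Metric.closedBall 0 2) :
    ∃ C > (0 : ℝ), ∀ R > (0 : ℝ),
      (∫ x : EuclideanSpace ℝ (Fin n),
        (φ (R⁻¹ • x) ^ ℓ) ^ (-(1 / (p - 1))) *
          |(lapE n)^[m] (fun y => φ (R⁻¹ • y) ^ ℓ) x| ^ (p / (p - 1))) ≤
        C * R ^ ((n : ℝ) - 2 * (m : ℝ) * p / (p - 1)) := by
  obtain ⟨C, hC, hle⟩ := integral_unit_scale_bound n m p ℓ hp hℓ φ hφsmooth hφ01 hφ2
  refine ⟨C, hC, fun R hR => ?_⟩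
  set H : EuclideanSpace ℝ (Fin n) → ℝ := fun x => (φ x ^ ℓ) ^ (-(1 / (p - 1))) *
    |(lapE n)^[m] (fun y => φ y ^ ℓ) x| ^ (p / (p - 1)) with hH
  have hscale : ∀ x, (φ (R⁻¹ • x) ^ ℓ) ^ (-(1 / (p - 1))) *
      |(lapE n)^[m] (fun y => φ (R⁻¹ • y) ^ ℓ) x| ^ (p / (p - 1))
      = R ^ (-(2 * (m : ℝ) * p / (p - 1))) * H (R⁻¹ • x) := by
    intro x
    have hpow : (R⁻¹ ^ (2 * m)) ^ (p / (p - 1)) = R ^ (-(2 * (m : ℝ) * p / (p - 1))) := by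
      rw [← Real.rpow_natCast, Real.inv_rpow hR.le, ← Real.rpow_neg hR.le,
        ← Real.rpow_mul hR.le]
      congr 1
      push_cast
      ring
    rw [lapE_iterate_comp_smul n m (fun y => φ y ^ ℓ) R⁻¹, abs_mul,
      abs_of_pos (pow_pos (inv_pos.2 hR) _), Real.mul_rpow (by positivity) (abs_nonneg _), hpow]
    simp only [hH]
    ring
  simp_rw [hscale]
  rw [integral_const_mul, Measure.integral_comp_inv_smul volume H R, finrank_euclideanSpace,
    Fintype.card_fin, abs_of_pos (pow_pos hR n), smul_eq_mul, sub_eq_add_neg (n : ℝ),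
    Real.rpow_add hR, Real.rpow_natCast]
  calc _ ≤ R ^ (-(2 * (m : ℝ) * p / (p - 1))) * (R ^ n * C) := by gcongr
    _ = _ := by ring
end
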